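/- arXiv:2305.07757 — 2 statements merged into one kernel-verified Lean document; each statement's English description precedes it below -/
import Mathlib

section
/- Let Q(z,z̄) be a real-valued polynomial function on ℂⁿ, homogeneous of total degree d ≥ 2 in (z,z̄), with no pluriharmonic terms, such that the model hypersurface M_Q = {(z,w) ∈ ℂⁿ×ℂ : Im w = Q(z,z̄)} is holomorphically nondegenerate. Suppose g₁ ≠ {0} and that M_Q admits no nonzero real diagonal rotation, i.e. no nonzero rotation X = Σ_{j,k} a_{jk} z_k ∂/∂z_j whose matrix (a_{jk}) is diagonalizable over ℂ with all eigenvalues real. Then g_c = {0}. -/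
open Complex

noncomputable section

/-- `QEval c z = Σ_{α,β} c_{αβ} z^α z̄^β`, the real-valued polynomial with
coefficient family `c`. -/
def QEval {n : ℕ} (c : ((Fin n →₀ ℕ) × (Fin n →₀ ℕ)) →₀ ℂ) (z : Fin n → ℂ) : ℂ :=
  c.sum fun p a => a * (∏ j, z j ^ p.1 j) * ∏ j, (starRingEnd ℂ) (z j) ^ p.2 j

/-- The holomorphic partial derivative `∂Q/∂z_k` of `QEval c`. -/
def QDeriv {n : ℕ} (c : ((Fin n →₀ ℕ) × (Fin n →₀ ℕ)) →₀ ℂ) (k : Fin n) (z : Fin n → ℂ) : ℂ :=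
  c.sum fun p a =>
    a * (p.1 k : ℂ) * (∏ j, z j ^ (((p.1 - Finsupp.single k 1) : Fin n →₀ ℕ) j)) *
      ∏ j, (starRingEnd ℂ) (z j) ^ p.2 j

/-- Holomorphic nondegeneracy of `M_Q = {Im w = Q(z,z̄)}`: the only polynomial
vector field `Σ F_j ∂/∂z_j + G ∂/∂w` tangent to `M_Q` in the strong (holomorphic)
sense is zero. -/
def HND {n : ℕ} (c : ((Fin n →₀ ℕ) × (Fin n →₀ ℕ)) →₀ ℂ) : Prop :=
  ∀ (F : Fin n → MvPolynomial (Fin (n + 1)) ℂ) (G : MvPolynomial (Fin (n + 1)) ℂ),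
    (∀ (z : Fin n → ℂ) (u : ℝ),
      MvPolynomial.eval (Fin.snoc z ((u : ℂ) + Complex.I * QEval c z)) G / (2 * Complex.I) -
        ∑ j, MvPolynomial.eval (Fin.snoc z ((u : ℂ) + Complex.I * QEval c z)) (F j) * QDeriv c j z
          = 0) →
    (∀ j, F j = 0) ∧ G = 0

/-- `Σ F_j ∂/∂z_j + G ∂/∂w` is an infinitesimal CR automorphism of `M_Q`. -/
def IsInfCRQ {n : ℕ} (c : ((Fin n →₀ ℕ) × (Fin n →₀ ℕ)) →₀ ℂ)
    (F : Fin n → MvPolynomial (Fin (n + 1)) ℂ) (G : MvPolynomial (Fin (n + 1)) ℂ) : Prop :=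
  ∀ (z : Fin n → ℂ) (u : ℝ),
    (MvPolynomial.eval (Fin.snoc z ((u : ℂ) + Complex.I * QEval c z)) G / (2 * Complex.I) -
      ∑ j, MvPolynomial.eval (Fin.snoc z ((u : ℂ) + Complex.I * QEval c z)) (F j) * QDeriv c j z).re
        = 0

/-- The linear field `Σ_{j,k} A_{jk} z_k ∂/∂z_j` is a rotation of `M_Q`. -/
def IsRotationQ {n : ℕ} (c : ((Fin n →₀ ℕ) × (Fin n →₀ ℕ)) →₀ ℂ)
    (A : Matrix (Fin n) (Fin n) ℂ) : Prop :=
  ∀ z : Fin n → ℂ, (∑ j, (∑ k, A j k * z k) * QDeriv c j z).re = 0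

/-- The weight of the monomial vector field `z^δ w^m ∂/∂z_j` (with `z_j` of
weight `1/d` and `w` of weight `1`), for an exponent `m : Fin (n+1) →₀ ℕ`. -/
def wZ (n d : ℕ) (m : Fin (n + 1) →₀ ℕ) : ℚ :=
  (∑ i : Fin n, (m i.castSucc : ℚ)) / (d : ℚ) + (m (Fin.last n) : ℚ) - 1 / (d : ℚ)

/-- The weight of the monomial vector field `z^δ w^m ∂/∂w`. -/
def wW (n d : ℕ) (m : Fin (n + 1) →₀ ℕ) : ℚ :=
  (∑ i : Fin n, (m i.castSucc : ℚ)) / (d : ℚ) + (m (Fin.last n) : ℚ) - 1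

/-- The graded component `g_μ`: infinitesimal CR automorphisms of `M_Q` all of
whose monomial terms have weight `μ`. -/
def gwQ (n d : ℕ) (c : ((Fin n →₀ ℕ) × (Fin n →₀ ℕ)) →₀ ℂ) (μ : ℚ) :
    Set ((Fin n → MvPolynomial (Fin (n + 1)) ℂ) × MvPolynomial (Fin (n + 1)) ℂ) :=
  {Xf | IsInfCRQ c Xf.1 Xf.2 ∧ (∀ j, ∀ m ∈ (Xf.1 j).support, wZ n d m = μ) ∧
    ∀ m ∈ Xf.2.support, wW n d m = μ}

/-- `A` is diagonalizable over `ℂ` with all eigenvalues real. -/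
def ReDiag {n : ℕ} (A : Matrix (Fin n) (Fin n) ℂ) : Prop :=
  ∃ (Pm : Matrix (Fin n) (Fin n) ℂ) (dv : Fin n → ℂ),
    IsUnit Pm ∧ A * Pm = Pm * Matrix.diagonal dv ∧ ∀ j, (dv j).im = 0

/-!
Differentiating `Q(z, z̄)` along the real part of a homogeneous holomorphic field of degree `≥ d`
gives two terms whose monomials have different degrees in `z`, so such a field vanishes as soon as
it annihilates `Q`. Now let `g` annihilate `Q`, and let `q` be a companion of `g`: the derivation
`D` along `q` maps `Q` to a multiple of the derivative of `Q²` along `g`. Then `[g, q]` is of high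
degree and annihilates `Q`, so `g` and `q` commute. From this, the derivative `g Q` is annihilated
by `g`: eigenvalue considerations (for linear `g`) or degrees (for higher ones) show that some
`g^k Q` is zero, and the first such `k` is at most `2`. Hence `R = g Q` satisfies the Riccati
equation `D R = 2 c R²`, and `D^m R` is a multiple of `R^(m + 1)`. For a suitable `m` the degrees in
`z` are incompatible unless `R = 0`, so that `g = 0`.

The tangency condition for a nonzero field `Σ (p_j + w l_j) ∂/∂z_j + a w² ∂/∂w` of weight one says
that `p` is a companion of `l` up to terms involving `a`. If `a = 0`, then `l = 0` and `p = 0`, so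
`a ≠ 0`. For a rigid field `f`, the bracket `[p, f]` is a companion of `[l, f]`, whatever `a` is, so
`[l, f] = 0`. Passing to the real part of the semisimple part of `l` preserves this equation and
`l Q = 2 a Q`. Without real diagonal rotations that real part is a nonzero multiple of the Euler
field, whose bracket with `f` of degree `s` is a multiple of `(s - 1) f`. Thus `f = 0` for `s ≥ 2`.
-/

namespace CRModel

open MvPolynomial Module.End
open scoped Matrix

/-! ### Generalized eigenspaces of derivations -/

section Derivations

variable {R A : Type*} [CommRing R] [CommRing A] [Algebra R A]

lemma sub_smul_one_mul (T : Derivation R A A) (a b : R) (x y : A) :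
    ((T : A →ₗ[R] A) - (a + b) • (1 : Module.End R A)) (x * y) =
      ((T : A →ₗ[R] A) - a • (1 : Module.End R A)) x * y +
        x * ((T : A →ₗ[R] A) - b • (1 : Module.End R A)) y := by
  simp only [LinearMap.sub_apply, LinearMap.smul_apply, Module.End.one_apply,
    Derivation.coeFn_coe, Derivation.leibniz, smul_eq_mul]
  simp only [Algebra.smul_def, map_add]
  ring

lemma pow_sub_smul_one_mul_eq_zero (T : Derivation R A A) (a b : R) :
    ∀ (k l : ℕ) (x y : A),
      (((T : A →ₗ[R] A) - a • (1 : Module.End R A)) ^ k) x = 0 →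
      (((T : A →ₗ[R] A) - b • (1 : Module.End R A)) ^ l) y = 0 →
      (((T : A →ₗ[R] A) - (a + b) • (1 : Module.End R A)) ^ (k + l)) (x * y) = 0
  | 0, l, x, y, hx, _ => by simp [show x = 0 from hx]
  | k + 1, 0, x, y, _, hy => by simp [show y = 0 from hy]
  | k + 1, l + 1, x, y, hx, hy => by
      have hleft := pow_sub_smul_one_mul_eq_zero T a b k (l + 1) _ y (by rwa [pow_succ] at hx) hy
      have hright := pow_sub_smul_one_mul_eq_zero T a b (k + 1) l x _ hx (by rwa [pow_succ] at hy)
      rw [← add_assoc, pow_succ, Module.End.mul_apply, sub_smul_one_mul, map_add, hright,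
        add_zero, add_assoc, add_comm 1 l, hleft]

lemma mul_mem_maxGenEigenspace (T : Derivation R A A) {a b : R} {x y : A}
    (hx : x ∈ maxGenEigenspace (T : A →ₗ[R] A) a) (hy : y ∈ maxGenEigenspace (T : A →ₗ[R] A) b) :
    x * y ∈ maxGenEigenspace (T : A →ₗ[R] A) (a + b) := by
  rw [mem_maxGenEigenspace] at *
  obtain ⟨k, hk⟩ := hx
  obtain ⟨l, hl⟩ := hy
  exact ⟨k + l, pow_sub_smul_one_mul_eq_zero T a b k l x y hk hl⟩

lemma mul_mem_eigenspace (T : Derivation R A A) {a b : R} {x y : A}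
    (hx : x ∈ eigenspace (T : A →ₗ[R] A) a) (hy : y ∈ eigenspace (T : A →ₗ[R] A) b) :
    x * y ∈ eigenspace (T : A →ₗ[R] A) (a + b) := by
  rw [mem_eigenspace_iff, Derivation.coeFn_coe] at *
  rw [Derivation.leibniz, hx, hy, smul_eq_mul, smul_eq_mul, add_smul, mul_smul_comm, mul_smul_comm,
    mul_comm y x, add_comm]

lemma one_mem_eigenspace (T : Derivation R A A) :
    (1 : A) ∈ eigenspace (T : A →ₗ[R] A) 0 := by
  simp

instance gradedMonoid_maxGenEigenspace (T : Derivation R A A) :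
    SetLike.GradedMonoid (maxGenEigenspace (T : A →ₗ[R] A)) where
  one_mem := eigenspace_le_maxGenEigenspace (one_mem_eigenspace T)
  mul_mem _ _ _ _ := mul_mem_maxGenEigenspace T

lemma iSup_eq_top_of_X_mem {ι σ : Type*} [AddMonoid ι]
    (W : ι → Submodule R (MvPolynomial σ R)) [SetLike.GradedMonoid W]
    (hX : ∀ i, X i ∈ ⨆ a, W a) : ⨆ a, W a = ⊤ := by
  classical
  rw [Submodule.iSup_eq_toSubmodule_range] at hX ⊢
  rw [Algebra.toSubmodule_eq_top, eq_top_iff, ← adjoin_range_X, Algebra.adjoin_le_iff]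
  rintro _ ⟨i, rfl⟩
  exact hX i

/-- The map is allowed to be semilinear so that complex conjugation is covered. -/
lemma map_mem_maxGenEigenspace {S V V' : Type*} [CommRing S] {τ : R →+* S} [AddCommGroup V]
    [Module R V] [AddCommGroup V'] [Module S V'] {B : Module.End R V} {T : Module.End S V'}
    (φ : V →ₛₗ[τ] V') (h : ∀ v, T (φ v) = φ (B v)) {a : R} {v : V}
    (hv : v ∈ maxGenEigenspace B a) : φ v ∈ maxGenEigenspace T (τ a) := by
  rw [mem_maxGenEigenspace] at *
  obtain ⟨k, hk⟩ := hv
  have hpow (k : ℕ) (v : V) : ((T - τ a • (1 : Module.End S V')) ^ k) (φ v) =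
      φ (((B - a • (1 : Module.End R V)) ^ k) v) := by
    induction k generalizing v with
    | zero => rfl
    | succ k ih =>
      rw [pow_succ, pow_succ, Module.End.mul_apply, Module.End.mul_apply, ← ih]
      simp [h]
  exact ⟨k, by rw [hpow, hk, map_zero]⟩

/-! ### Iterated derivations -/

lemma iterate_leibniz (D : Derivation R A A) (k : ℕ) (x y : A) :
    D^[k] (x * y) =
      ∑ ij ∈ Finset.HasAntidiagonal.antidiagonal k, k.choose ij.1 • (D^[ij.1] x * D^[ij.2] y) := by
  induction k with
  | zero => simp
  | succ k ih =>
    rw [Finset.sum_antidiagonal_choose_succ_nsmul fun i j => D^[i] x * D^[j] y,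
      Function.iterate_succ_apply', ih, map_sum, ← Finset.sum_add_distrib]
    refine Finset.sum_congr rfl fun ij hij => ?_
    rw [Nat.choose_symm_of_eq_add (Finset.HasAntidiagonal.mem_antidiagonal.1 hij).symm]
    simp only [map_nsmul, Derivation.leibniz, smul_eq_mul, Function.iterate_succ_apply', smul_add]
    rw [mul_comm (D _)]

lemma iterate_smul (D : Derivation R A A) (k : ℕ) (c : R) (x : A) :
    D^[k] (c • x) = c • D^[k] x :=
  Function.Commute.iterate_left (fun x => D.map_smul c x) k x

lemma iterate_eq_zero_of_le (D : Derivation R A A) {k l : ℕ} (hkl : k ≤ l) {x : A}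
    (hx : D^[k] x = 0) : D^[l] x = 0 := by
  rw [← Nat.sub_add_cancel hkl, Function.iterate_add_apply, hx, iterate_map_zero]

lemma iterate_mul_self (D : Derivation R A A) {k : ℕ} {x : A} (hx : D^[k + 1] x = 0) :
    D^[2 * k] (x * x) = (2 * k).choose k • (D^[k] x * D^[k] x) := by
  rw [iterate_leibniz, Finset.sum_eq_single (k, k)]
  · rintro ⟨i, j⟩ hij hne
    rw [Finset.HasAntidiagonal.mem_antidiagonal] at hij
    obtain hi | hj : k + 1 ≤ i ∨ k + 1 ≤ j := by
      by_contra! h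
      exact hne (Prod.ext (by omega) (by omega))
    · simp [iterate_eq_zero_of_le D hi hx]
    · simp [iterate_eq_zero_of_le D hj hx]
  · simp [two_mul]

lemma iterate_eq_of_apply_eq_smul_mul_self (D : Derivation R A A) {x : A} {c : R}
    (hx : D x = c • (x * x)) (k : ℕ) : D^[k] x = (k.factorial • c ^ k) • x ^ (k + 1) := by
  induction k with
  | zero => simp
  | succ k ih =>
    rw [Function.iterate_succ_apply', ih, Derivation.map_smul, Derivation.leibniz_pow, hx,
      Nat.factorial_succ]
    simp only [smul_eq_mul, nsmul_eq_mul, Nat.add_sub_cancel]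
    simp only [Algebra.smul_def, map_mul, map_pow, map_natCast, Nat.cast_mul]
    ring

end Derivations

section Commuting

variable {K A : Type*} [Field K] [CommRing A] [Algebra K A]

lemma apply_apply_eq_zero_of_iterate_eq_zero [CharZero A] [IsDomain A] {N D : Derivation K A A}
    (hcomm : ∀ x, N (D x) = D (N x)) {q : A} {c : K} (hc : c ≠ 0) (hq : D q = c • N (q * q))
    {k : ℕ} (hk : N^[k] q = 0) : N (N q) = 0 := by
  classical
  have hnil : ∃ k, N^[k] q = 0 := ⟨k, hk⟩
  by_contra hne
  obtain ⟨l, hl⟩ : ∃ l, Nat.find hnil = l + 3 :=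
    Nat.exists_eq_add_of_le' <| (Nat.le_find_iff hnil 3).2 fun j hj h0 =>
      hne (iterate_eq_zero_of_le N (show j ≤ 2 by omega) h0)
  have hlast : N^[l + 3] q = 0 := hl ▸ Nat.find_spec hnil
  have hprev : N^[l + 2] q ≠ 0 := Nat.find_min hnil (by omega)
  have hiter (j : ℕ) (x : A) : N^[j] (D x) = D (N^[j] x) :=
    ((show Function.Commute N D from hcomm).iterate_left j) x
  have hzero : N^[2 * (l + 2)] (q * q) = 0 := by
    have hNq : N (q * q) = c⁻¹ • D q := by rw [hq, smul_smul, inv_mul_cancel₀ hc, one_smul]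
    rw [show 2 * (l + 2) = 2 * l + 3 + 1 by ring, Function.iterate_succ_apply, hNq,
      ← Derivation.map_smul, hiter, iterate_smul, iterate_eq_zero_of_le N (by omega) hlast,
      smul_zero, map_zero]
  rw [iterate_mul_self N hlast, smul_eq_zero, mul_self_eq_zero] at hzero
  exact hzero.elim (Nat.choose_pos (by omega)).ne' hprev

end Commuting

section Extreme

lemma eq_zero_of_apply_mem_iSup_maxGenEigenspace {K V : Type*} [Field K] [AddCommGroup V]
    [Module K V] {N : Module.End K V} {a : K} (ha : a ≠ 0) {x : V} (hx : x ∈ maxGenEigenspace N a)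
    (hNx : N x ∈ ⨆ b, ⨆ (_ : b ≠ a), maxGenEigenspace N b) : x = 0 := by
  have hdisj := Submodule.disjoint_def.1 (independent_maxGenEigenspace N a)
  have hN0 : N x = 0 := hdisj _ (mapsTo_maxGenEigenspace_of_comm (Commute.refl N) a hx) hNx
  have hx0 : x ∈ maxGenEigenspace N 0 :=
    eigenspace_le_maxGenEigenspace (mem_eigenspace_iff.2 (by rw [hN0, zero_smul]))
  exact hdisj x hx (Submodule.mem_iSup_of_mem 0 (Submodule.mem_iSup_of_mem ha.symm hx0))

lemma eq_of_add_eq_add_self {E : Type*} [NormedAddCommGroup E] [NormedSpace ℝ E]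
    [StrictConvexSpace ℝ E] {x y b : E} (hx : ‖x‖ ≤ ‖b‖) (hy : ‖y‖ ≤ ‖b‖) (h : x + y = b + b) :
    x = b ∧ y = b := by
  have hb : ‖b + b‖ = ‖b‖ + ‖b‖ := by rw [← two_smul ℝ b, norm_smul, Real.norm_ofNat, two_mul]
  have hle := norm_add_le x y
  rw [h, hb] at hle
  obtain rfl : x = y := eq_of_norm_eq_of_norm_add_eq (by linarith) (by rw [h, hb]; linarith)
  have hxb : x = b := by
    rw [← two_smul ℝ x, ← two_smul ℝ b] at h
    exact smul_right_injective E two_ne_zero h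
  exact ⟨hxb, hxb⟩

variable {A : Type*} [CommRing A] [Algebra ℂ A]

lemma sum_mul_sum_sub_mul_self_mem (W : ℂ → Submodule ℂ A) [SetLike.GradedMonoid W] {f : ℂ →₀ A}
    (hf : ∀ a, f a ∈ W a) {b : ℂ} (hb : b ∈ f.support) (hmax : ∀ a ∈ f.support, ‖a‖ ≤ ‖b‖) :
    (f.sum fun _ x => x) * (f.sum fun _ x => x) - f b * f b ∈ ⨆ a, ⨆ (_ : a ≠ b + b), W a := by
  have hsplit : (f.sum fun _ x => x) * (f.sum fun _ x => x) - f b * f b =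
      ∑ p ∈ (f.support ×ˢ f.support).erase (b, b), f p.1 * f p.2 := by
    rw [Finsupp.sum, Finset.sum_mul_sum, ← Finset.sum_product',
      ← Finset.add_sum_erase _ _ (Finset.mk_mem_product hb hb), add_sub_cancel_left]
  rw [hsplit]
  refine sum_mem fun p hp => ?_
  obtain ⟨hne, hp⟩ := Finset.mem_erase.1 hp
  obtain ⟨h₁, h₂⟩ := Finset.mem_product.1 hp
  refine Submodule.mem_iSup_of_mem (p.1 + p.2) (Submodule.mem_iSup_of_mem (fun h => hne ?_)
    (SetLike.mul_mem_graded (hf p.1) (hf p.2)))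
  obtain ⟨e₁, e₂⟩ := eq_of_add_eq_add_self (hmax _ h₁) (hmax _ h₂) h
  exact Prod.ext e₁ e₂

/-- The product `f b * f b` would contribute the eigenvalue `2b` to `N (q * q)`, where `q = Σ f a`,
but `D q` only has eigenvalues occurring in `q`. -/
lemma mul_self_eq_zero_of_forall_norm_le {N D : Derivation ℂ A A}
    (hcomm : ∀ x, N (D x) = D (N x)) {f : ℂ →₀ A}
    (hf : ∀ a, f a ∈ maxGenEigenspace (N : A →ₗ[ℂ] A) a) {c : ℂ} (hc : c ≠ 0)
    (hD : D (f.sum fun _ x => x) = c • N ((f.sum fun _ x => x) * (f.sum fun _ x => x))) {b : ℂ}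
    (hb : b ∈ f.support) (hb0 : b ≠ 0) (hmax : ∀ a ∈ f.support, ‖a‖ ≤ ‖b‖) : f b * f b = 0 := by
  set U := maxGenEigenspace (N : A →ₗ[ℂ] A)
  set V : Submodule ℂ A := ⨆ a, ⨆ (_ : a ≠ b + b), U a
  have hmem {a : ℂ} {x : A} (hne : a ≠ b + b) (hx : x ∈ U a) : x ∈ V :=
    Submodule.mem_iSup_of_mem a (Submodule.mem_iSup_of_mem hne hx)
  have hNV : V ≤ V.comap (N : A →ₗ[ℂ] A) := iSup₂_le fun a hne x hx =>
    hmem hne (mapsTo_maxGenEigenspace_of_comm (Commute.refl (N : A →ₗ[ℂ] A)) a hx)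
  have hDV : D (f.sum fun _ x => x) ∈ V := by
    rw [Finsupp.sum, map_sum]
    refine sum_mem fun a ha => hmem ?_ <| mapsTo_maxGenEigenspace_of_comm
      (show Commute (N : A →ₗ[ℂ] A) (D : A →ₗ[ℂ] A) from LinearMap.ext hcomm) a (hf a)
    rintro rfl
    have hle := hmax _ ha
    rw [← two_mul, norm_mul, RCLike.norm_ofNat] at hle
    linarith [norm_pos_iff.2 hb0]
  have hNb : N (f b * f b) ∈ V := by
    rw [hD, Submodule.smul_mem_iff _ hc] at hDV
    simpa using sub_mem hDV (hNV (sum_mul_sum_sub_mul_self_mem U hf hb hmax))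
  exact eq_zero_of_apply_mem_iSup_maxGenEigenspace (by simpa [← two_mul] using hb0)
    (mul_mem_maxGenEigenspace N (hf b) (hf b)) hNb

lemma mem_maxGenEigenspace_zero [IsDomain A] {N D : Derivation ℂ A A}
    (hcomm : ∀ x, N (D x) = D (N x)) (htop : ⨆ a, maxGenEigenspace (N : A →ₗ[ℂ] A) a = ⊤)
    {q : A} {c : ℂ} (hc : c ≠ 0) (hq : D q = c • N (q * q)) :
    q ∈ maxGenEigenspace (N : A →ₗ[ℂ] A) 0 := by
  obtain ⟨f, hf, rfl⟩ := (Submodule.mem_iSup_iff_exists_finsupp _ q).1 (htop ▸ Submodule.mem_top)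
  by_contra hq0
  obtain ⟨a, ha, ha0⟩ : ∃ a ∈ f.support, a ≠ 0 := by
    by_contra! h
    exact hq0 (sum_mem fun a ha => h a ha ▸ hf a)
  obtain ⟨b, hb, hmax⟩ := f.support.exists_max_image (‖·‖) ⟨a, ha⟩
  have hb0 : b ≠ 0 := norm_pos_iff.1 ((norm_pos_iff.2 ha0).trans_le (hmax a ha))
  have hsq := mul_self_eq_zero_of_forall_norm_le hcomm hf hc hq hb hb0 hmax
  exact Finsupp.mem_support_iff.1 hb (mul_self_eq_zero.1 hsq)

end Extreme

/-! ### Real parts of endomorphisms -/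

section RealPart

variable {V V' : Type*} [AddCommGroup V] [Module ℂ V] [AddCommGroup V'] [Module ℂ V']

/-- `S` is the real part of the semisimple part of `B`: it acts on each generalized eigenspace of
`B` as the real part of the eigenvalue. -/
def IsRealPart (B S : Module.End ℂ V) : Prop :=
  ∀ a, maxGenEigenspace B a ≤ eigenspace S (a.re : ℂ)

lemma isRealPart_of_iSup_eq_top {B S : Module.End ℂ V}
    (h : ⨆ a, maxGenEigenspace B a ⊓ eigenspace S (a.re : ℂ) = ⊤) : IsRealPart B S := by
  have heq := ((independent_maxGenEigenspace B).le_iff_eq_of_iSup_eq_top h).1 fun _ => inf_le_left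
  exact fun a => inf_eq_left.1 (congrFun heq a)

lemma IsRealPart.apply_map {B S : Module.End ℂ V} {T U : Module.End ℂ V'} (hS : IsRealPart B S)
    (hU : IsRealPart T U) (htop : ⨆ a, maxGenEigenspace B a = ⊤) {φ : V →ₗ[ℂ] V'}
    (hφ : ∀ v, T (φ v) = φ (B v)) (v : V) : U (φ v) = φ (S v) := by
  suffices h : (⊤ : Submodule ℂ V) ≤ LinearMap.eqLocus (U ∘ₗ φ) (φ ∘ₗ S) from h Submodule.mem_top
  rw [← htop]
  refine iSup_le fun a v hv => ?_
  have hUv := mem_eigenspace_iff.1 (hU a (map_mem_maxGenEigenspace φ hφ hv))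
  have hSv := mem_eigenspace_iff.1 (hS a hv)
  rw [LinearMap.mem_eqLocus, LinearMap.comp_apply, LinearMap.comp_apply, hUv, hSv, map_smul]

lemma map_mem_iSup {K V V' : Type*} [Field K] [IsAlgClosed K] [AddCommGroup V] [Module K V]
    [FiniteDimensional K V] [AddCommGroup V'] [Module K V'] {B : Module.End K V} {φ : V →ₗ[K] V'}
    {W : K → Submodule K V'} (h : ∀ a, ∀ v ∈ maxGenEigenspace B a, φ v ∈ W a) (v : V) :
    φ v ∈ ⨆ a, W a := by
  suffices htop : (⊤ : Submodule K V) ≤ (⨆ a, W a).comap φ from htop Submodule.mem_top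
  rw [← iSup_maxGenEigenspace_eq_top B]
  exact iSup_le fun a v hv => Submodule.mem_iSup_of_mem a (h a v hv)

lemma exists_basis_mem_maxGenEigenspace {K ι : Type*} [Field K] [IsAlgClosed K] [Finite ι]
    (B : Module.End K (ι → K)) :
    ∃ (b : Module.Basis ι K (ι → K)) (μ : ι → K), ∀ i, b i ∈ maxGenEigenspace B (μ i) := by
  have hspan : ⊤ ≤ Submodule.span K (⋃ a, (maxGenEigenspace B a : Set (ι → K))) := by
    rw [← Submodule.iSup_eq_span, iSup_maxGenEigenspace_eq_top]
  let b₀ := Module.Basis.ofSpan hspan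
  let b := b₀.reindex (b₀.indexEquiv (Pi.basisFun K ι))
  have hb (i : ι) : ∃ a, b i ∈ maxGenEigenspace B a :=
    Set.mem_iUnion.1 (Module.Basis.ofSpan_subset hspan (by simp [b, b₀]))
  choose μ hμ using hb
  exact ⟨b, μ, hμ⟩

section Matrix

variable {ι κ : Type*} [Fintype ι] [Fintype κ]

lemma vecMul_map_conj (M : Matrix ι ι ℂ) (v : ι → ℂ) :
    star v ᵥ* M.map (starRingEnd ℂ) = star (v ᵥ* M) := by
  ext i
  simp [Matrix.vecMul, dotProduct]

lemma IsRealPart.map_conj {M R : Matrix ι ι ℂ}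
    (h : IsRealPart M.vecMulLinear R.vecMulLinear) :
    IsRealPart (M.map (starRingEnd ℂ)).vecMulLinear (R.map (starRingEnd ℂ)).vecMulLinear := by
  intro a v hv
  have hM (v : ι → ℂ) : M.vecMulLinear (star v) = star ((M.map (starRingEnd ℂ)).vecMulLinear v) :=
    star_injective <| by simpa using (vecMul_map_conj M (star v)).symm
  have hR := mem_eigenspace_iff.1
    (h _ (map_mem_maxGenEigenspace (starLinearEquiv ℂ (A := ι → ℂ)).toLinearMap hM hv))
  rw [mem_eigenspace_iff, Matrix.vecMulLinear_apply, ← star_star v, vecMul_map_conj]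
  simpa using congrArg star hR

lemma vecMul_fromBlocks_diagonal (M : Matrix ι ι ℂ) (N : Matrix κ κ ℂ) (v : ι ⊕ κ → ℂ) :
    v ᵥ* Matrix.fromBlocks M 0 0 N = Sum.elim ((v ∘ Sum.inl) ᵥ* M) ((v ∘ Sum.inr) ᵥ* N) := by
  rw [Matrix.vecMul_fromBlocks, Matrix.vecMul_zero, Matrix.vecMul_zero, add_zero, zero_add]

lemma IsRealPart.fromBlocks {M R : Matrix ι ι ℂ} {N S : Matrix κ κ ℂ}
    (h₁ : IsRealPart M.vecMulLinear R.vecMulLinear)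
    (h₂ : IsRealPart N.vecMulLinear S.vecMulLinear) :
    IsRealPart (Matrix.fromBlocks M 0 0 N).vecMulLinear
      (Matrix.fromBlocks R 0 0 S).vecMulLinear := by
  intro a v hv
  have hl := mem_eigenspace_iff.1 <| h₁ a <| map_mem_maxGenEigenspace
    (LinearMap.funLeft ℂ ℂ Sum.inl) (fun v => by ext i; simp [vecMul_fromBlocks_diagonal]; rfl) hv
  have hr := mem_eigenspace_iff.1 <| h₂ a <| map_mem_maxGenEigenspace
    (LinearMap.funLeft ℂ ℂ Sum.inr) (fun v => by ext i; simp [vecMul_fromBlocks_diagonal]; rfl) hv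
  rw [mem_eigenspace_iff, Matrix.vecMulLinear_apply, vecMul_fromBlocks_diagonal]
  ext (i | i)
  · exact congrFun hl i
  · exact congrFun hr i

end Matrix

lemma reDiag_sub_smul_one {n : ℕ} {A : Matrix (Fin n) (Fin n) ℂ} (hA : ReDiag A) (r : ℝ) :
    ReDiag (A - (r : ℂ) • 1) := by
  obtain ⟨P, μ, hP, hAP, hμ⟩ := hA
  refine ⟨P, fun i => μ i - r, hP, ?_, fun i => by simp [hμ i]⟩
  rw [← Matrix.diagonal_sub, sub_mul, mul_sub, hAP, ← Matrix.smul_one_eq_diagonal, smul_mul_assoc,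
    mul_smul_comm, one_mul, mul_one]

lemma exists_reDiag_isRealPart {n : ℕ} (A : Matrix (Fin n) (Fin n) ℂ) :
    ∃ R, ReDiag R ∧ IsRealPart A.vecMulLinear R.vecMulLinear := by
  obtain ⟨b, μ, hb⟩ := exists_basis_mem_maxGenEigenspace A.vecMulLinear
  let V : Matrix (Fin n) (Fin n) ℂ := Matrix.of b
  let D : Matrix (Fin n) (Fin n) ℂ := Matrix.diagonal fun i => ((μ i).re : ℂ)
  have hV : IsUnit V := Matrix.linearIndependent_rows_iff_isUnit.1 b.linearIndependent
  have hdet : IsUnit V.det := (Matrix.isUnit_iff_isUnit_det _).1 hV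
  have hVR : V * (V⁻¹ * D * V) = D * V := by
    rw [← mul_assoc, ← mul_assoc, Matrix.mul_nonsing_inv _ hdet, one_mul]
  refine ⟨V⁻¹ * D * V,
    ⟨V⁻¹, fun i => ((μ i).re : ℂ), Matrix.isUnit_nonsing_inv_iff.2 hV, ?_, fun i => ofReal_im _⟩,
    isRealPart_of_iSup_eq_top (eq_top_iff.2 (b.span_eq.ge.trans (Submodule.span_le.2 ?_)))⟩
  · rw [mul_assoc, Matrix.mul_nonsing_inv _ hdet, mul_one]
  · rintro _ ⟨i, rfl⟩
    refine Submodule.mem_iSup_of_mem (μ i) ⟨hb i, mem_eigenspace_iff.2 ?_⟩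
    have hrow := congrFun hVR i
    rw [Matrix.mul_apply_eq_vecMul] at hrow
    rw [Matrix.vecMulLinear_apply]
    refine hrow.trans ?_
    ext k
    simp [D, V]

end RealPart

/-! ### Linear vector fields -/

section LinearFields

variable {R σ : Type*} [CommRing R]

lemma mkDerivation_eq_sum [Fintype σ] (f : σ → MvPolynomial σ R) (p : MvPolynomial σ R) :
    mkDerivation R f p = ∑ i, f i * pderiv i p := by
  classical
  have h : mkDerivation R f = ∑ i, f i • pderiv (R := R) i := by
    refine derivation_ext fun i => ?_
    rw [← Derivation.coeFnAddMonoidHom_apply (∑ j, _), map_sum, Finset.sum_apply]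
    simp [mkDerivation_X, pderiv_X, Pi.single_apply]
  rw [h, ← Derivation.coeFnAddMonoidHom_apply (∑ j, _), map_sum, Finset.sum_apply]
  simp only [Derivation.coeFnAddMonoidHom_apply, Derivation.smul_apply, smul_eq_mul]

lemma mkDerivation_X_of_isHomogeneous [Finite σ] {p : MvPolynomial σ R} {k : ℕ}
    (hp : p.IsHomogeneous k) : mkDerivation R (X : σ → MvPolynomial σ R) p = k • p := by
  cases nonempty_fintype σ
  rw [mkDerivation_eq_sum, hp.sum_X_mul_pderiv]

lemma isHomogeneous_mkDerivation [Finite σ] {f : σ → MvPolynomial σ R} {s t r : ℕ}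
    (hf : ∀ j, (f j).IsHomogeneous s) {p : MvPolynomial σ R} (hp : p.IsHomogeneous t) (ht : 1 ≤ t)
    (hr : s + t = r + 1) : (mkDerivation R f p).IsHomogeneous r := by
  cases nonempty_fintype σ
  rw [mkDerivation_eq_sum]
  refine IsHomogeneous.sum _ _ _ fun j _ => ?_
  have h := (hf j).mul (hp.pderiv (i := j))
  rwa [show s + (t - 1) = r by omega] at h

variable [Fintype σ]

/-- The linear form `Σ v_i x_i`. -/
def linearForm : (σ → R) →ₗ[R] MvPolynomial σ R := Fintype.linearCombination R X

/-- The coefficients of the linear vector field `Σ M_{ij} x_j ∂/∂x_i`. -/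
def linearField (M : Matrix σ σ R) : σ → MvPolynomial σ R := fun i => linearForm (M i)

lemma linearForm_apply (v : σ → R) : linearForm v = ∑ i, v i • (X i : MvPolynomial σ R) :=
  Fintype.linearCombination_apply R X v

lemma linearForm_single [DecidableEq σ] (i : σ) (c : R) :
    linearForm (Pi.single i c) = c • (X i : MvPolynomial σ R) := by
  simp [linearForm]

lemma linearField_smul_one [DecidableEq σ] (c : R) (i : σ) :
    linearField (c • 1) i = c • (X i : MvPolynomial σ R) := by
  rw [← linearForm_single, linearField]
  congr 1
  ext j
  simp [Matrix.one_apply, Pi.single_apply, eq_comm]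

lemma linearField_sub (M N : Matrix σ σ R) : linearField (M - N) = linearField M - linearField N :=
  funext fun i => map_sub linearForm (M i) (N i)

lemma exists_eq_linearForm {p : MvPolynomial σ R} (hp : p.IsHomogeneous 1) :
    ∃ v, p = linearForm v := by
  rw [← mem_homogeneousSubmodule, homogeneousSubmodule_one_eq_span_X] at hp
  obtain ⟨v, hv⟩ := (Submodule.mem_span_range_iff_exists_fun R).1 hp
  exact ⟨v, by rw [linearForm_apply, hv]⟩

lemma exists_eq_linearField {f : σ → MvPolynomial σ R} (hf : ∀ i, (f i).IsHomogeneous 1) :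
    ∃ M, f = linearField M := by
  choose M hM using fun i => exists_eq_linearForm (hf i)
  exact ⟨M, funext hM⟩

lemma mkDerivation_linearForm (f : σ → MvPolynomial σ R) (v : σ → R) :
    mkDerivation R f (linearForm v) = Fintype.linearCombination R f v := by
  simp [linearForm_apply, Fintype.linearCombination_apply, mkDerivation_X]

lemma linearCombination_linearField (M : Matrix σ σ R) (v : σ → R) :
    Fintype.linearCombination R (linearField M) v = linearForm (v ᵥ* M) := by
  rw [Fintype.linearCombination_apply, Matrix.vecMul_eq_sum, map_sum]
  simp only [linearField, map_smul]

lemma mkDerivation_linearField_linearForm (M : Matrix σ σ R) (v : σ → R) :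
    mkDerivation R (linearField M) (linearForm v) = linearForm (v ᵥ* M) := by
  rw [mkDerivation_linearForm, linearCombination_linearField]

lemma linearForm_mem_maxGenEigenspace (M : Matrix σ σ R) {a : R} {v : σ → R}
    (hv : v ∈ maxGenEigenspace M.vecMulLinear a) : linearForm v ∈
      maxGenEigenspace
        (mkDerivation R (linearField M) : MvPolynomial σ R →ₗ[R] MvPolynomial σ R) a := by
  rw [← RingHom.id_apply a]
  exact map_mem_maxGenEigenspace linearForm (mkDerivation_linearField_linearForm M) hv

lemma linearForm_mem_eigenspace (M : Matrix σ σ R) {a : R} {v : σ → R}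
    (hv : v ∈ eigenspace M.vecMulLinear a) : linearForm v ∈
      eigenspace (mkDerivation R (linearField M) : MvPolynomial σ R →ₗ[R] _) a := by
  have hv' : v ᵥ* M = a • v := mem_eigenspace_iff.1 hv
  rw [mem_eigenspace_iff, Derivation.coeFn_coe, mkDerivation_linearField_linearForm, hv', map_smul]

lemma X_mem_iSup {K : Type*} [Field K] [IsAlgClosed K] {M : Matrix σ σ K}
    {W : K → Submodule K (MvPolynomial σ K)}
    (h : ∀ a, ∀ v ∈ maxGenEigenspace M.vecMulLinear a, linearForm v ∈ W a) (i : σ) :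
    X i ∈ ⨆ a, W a := by
  classical
  rw [← one_smul K (X i), ← linearForm_single]
  exact map_mem_iSup h _

lemma iSup_maxGenEigenspace_linearField {K : Type*} [Field K] [IsAlgClosed K] (M : Matrix σ σ K) :
    ⨆ a, maxGenEigenspace (mkDerivation K (linearField M) : MvPolynomial σ K →ₗ[K] _) a = ⊤ := by
  classical
  exact iSup_eq_top_of_X_mem _ (X_mem_iSup fun _ _ => linearForm_mem_maxGenEigenspace M)

lemma gradedMonoid_inf_eigenspace {A : Type*} [CommRing A] [Algebra ℂ A]
    (T S : Derivation ℂ A A) : SetLike.GradedMonoid fun a : ℂ =>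
      maxGenEigenspace (T : A →ₗ[ℂ] A) a ⊓ eigenspace (S : A →ₗ[ℂ] A) (a.re : ℂ) where
  one_mem := ⟨SetLike.one_mem_graded _, by simp⟩
  mul_mem a b x y hx hy := ⟨mul_mem_maxGenEigenspace T hx.1 hy.1, by
    simpa using mul_mem_eigenspace S hx.2 hy.2⟩

lemma isRealPart_linearField {M M' : Matrix σ σ ℂ}
    (h : IsRealPart M.vecMulLinear M'.vecMulLinear) :
    IsRealPart (mkDerivation ℂ (linearField M) : MvPolynomial σ ℂ →ₗ[ℂ] MvPolynomial σ ℂ)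
      (mkDerivation ℂ (linearField M') : MvPolynomial σ ℂ →ₗ[ℂ] MvPolynomial σ ℂ) := by
  have := gradedMonoid_inf_eigenspace (mkDerivation ℂ (linearField M))
    (mkDerivation ℂ (linearField M'))
  have hX := X_mem_iSup fun a _ hv => Submodule.mem_inf.2
    ⟨linearForm_mem_maxGenEigenspace M hv, linearForm_mem_eigenspace M' (h a hv)⟩
  exact isRealPart_of_iSup_eq_top (iSup_eq_top_of_X_mem _ hX)

end LinearFields

/-! ### Polarization -/

section Polarization

variable {σ : Type*}

/-- Polynomials in `z` and `z̄`, the latter treated as independent variables: `Sum.inl` indexes the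
`z_j` and `Sum.inr` the `z̄_j`. -/
abbrev Pol (σ : Type*) : Type _ := MvPolynomial (σ ⊕ σ) ℂ

/-- Holomorphic polynomials, which are the components of holomorphic vector fields. -/
abbrev Hol (σ : Type*) : Type _ := MvPolynomial σ ℂ

/-- The point `(z, z̄)` at which a polarized polynomial takes its values. -/
def diagPt (z : σ → ℂ) : σ ⊕ σ → ℂ := Sum.elim z (star z)

lemma eq_zero_of_eval_diagPt {P : Pol σ} (h : ∀ z, eval (diagPt z) P = 0) : P = 0 := by
  let g : σ ⊕ σ → Pol σ := Sum.elim (fun j => X (Sum.inl j) + C I * X (Sum.inr j))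
    fun j => X (Sum.inl j) - C I * X (Sum.inr j)
  have heval (x : σ ⊕ σ → ℂ) : eval x (bind₁ g P) = eval (fun i => eval x (g i)) P :=
    eval₂Hom_bind₁ _ _ _ _
  have hg : bind₁ g P = 0 := by
    refine funext_set (s := fun _ => Set.range ((↑) : ℝ → ℂ))
      (fun _ => Set.infinite_range_of_injective ofReal_injective) fun x hx => ?_
    have hconj (i : σ ⊕ σ) : (starRingEnd ℂ) (x i) = x i := by
      obtain ⟨r, hr⟩ := hx i trivial
      rw [← hr, conj_ofReal]
    rw [map_zero, heval, ← h fun j => x (Sum.inl j) + I * x (Sum.inr j)]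
    congr 2 with (j | j) <;> simp [diagPt, g, hconj, sub_eq_add_neg]
  refine MvPolynomial.funext fun x => ?_
  have hx := heval (Sum.elim (fun j => (x (Sum.inl j) + x (Sum.inr j)) / 2)
    fun j => (x (Sum.inl j) - x (Sum.inr j)) / (2 * I))
  rw [hg, map_zero] at hx
  rw [map_zero, hx]
  congr 2 with (j | j) <;> simp [g] <;> field_simp <;> ring

/-- The conjugation of `Pol σ`, which exchanges `z` and `z̄` and conjugates the coefficients. -/
def cj : Pol σ →+* Pol σ :=
  (rename Sum.swap : Pol σ →ₐ[ℂ] Pol σ).toRingHom.comp (map (starRingEnd ℂ))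

lemma cj_C (r : ℂ) : cj (C r : Pol σ) = C ((starRingEnd ℂ) r) := by simp [cj]

lemma cj_X (i : σ ⊕ σ) : cj (X i : Pol σ) = X i.swap := by simp [cj]

lemma cj_smul (r : ℂ) (P : Pol σ) : cj (r • P) = (starRingEnd ℂ) r • cj P := by
  rw [smul_eq_C_mul, map_mul, cj_C, smul_eq_C_mul]

lemma cj_cj (P : Pol σ) : cj (cj P) = P := by
  induction P using MvPolynomial.induction_on with
  | C r => simp [cj_C]
  | add p q hp hq => simp [hp, hq]
  | mul_X p i hp => simp [hp, cj_X]

lemma eval_cj (z : σ → ℂ) (P : Pol σ) :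
    eval (diagPt z) (cj P) = (starRingEnd ℂ) (eval (diagPt z) P) := by
  induction P using MvPolynomial.induction_on with
  | C r => simp [cj_C]
  | add p q hp hq => simp [hp, hq]
  | mul_X p i hp =>
    rw [map_mul, map_mul, map_mul, map_mul, hp]
    rcases i with j | j <;> simp [cj_X, diagPt]

lemma add_cj_eq_zero_of_re {P : Pol σ} (h : ∀ z, (eval (diagPt z) P).re = 0) : P + cj P = 0 := by
  refine eq_zero_of_eval_diagPt fun z => ?_
  rw [map_add, eval_cj, add_conj, h z]
  simp

lemma exists_mem_support_of_mem_support_cj {P : Pol σ} {m : σ ⊕ σ →₀ ℕ} (hm : m ∈ (cj P).support) :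
    ∃ m' ∈ P.support, m = m'.mapDomain Sum.swap := by
  classical
  have : (cj P).support = ((map (starRingEnd ℂ) P).support).image (Finsupp.mapDomain Sum.swap) :=
    support_rename_of_injective Sum.swap_leftInverse.injective
  rw [this, Finset.mem_image] at hm
  obtain ⟨m', hm', rfl⟩ := hm
  exact ⟨m', support_map_subset _ _ hm', rfl⟩

/-- The holomorphic vector field `Σ F_j ∂/∂z_j`, as a derivation of `Pol σ`. -/
def hField (F : σ → Hol σ) : Derivation ℂ (Pol σ) (Pol σ) :=
  mkDerivation ℂ (Sum.elim (fun j => rename Sum.inl (F j)) 0)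

/-- The conjugate vector field `Σ F̄_j ∂/∂z̄_j`, as a derivation of `Pol σ`. -/
def aField (F : σ → Hol σ) : Derivation ℂ (Pol σ) (Pol σ) :=
  mkDerivation ℂ (Sum.elim 0 fun j => cj (rename Sum.inl (F j)))

/-- Twice the real part of the holomorphic vector field `Σ F_j ∂/∂z_j`. -/
def reField (F : σ → Hol σ) : Derivation ℂ (Pol σ) (Pol σ) := hField F + aField F

/-- The Lie bracket of holomorphic vector fields. -/
def br (F G : σ → Hol σ) : σ → Hol σ := fun j => mkDerivation ℂ F (G j) - mkDerivation ℂ G (F j)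

lemma reField_apply (F : σ → Hol σ) (P : Pol σ) : reField F P = hField F P + aField F P := rfl

lemma hField_X_inl (F : σ → Hol σ) (j : σ) : hField F (X (Sum.inl j)) = rename Sum.inl (F j) := by
  simp [hField, mkDerivation_X]

lemma hField_X_inr (F : σ → Hol σ) (j : σ) : hField F (X (Sum.inr j)) = 0 := by
  simp [hField, mkDerivation_X]

lemma aField_X_inl (F : σ → Hol σ) (j : σ) : aField F (X (Sum.inl j)) = 0 := by
  simp [aField, mkDerivation_X]

lemma aField_X_inr (F : σ → Hol σ) (j : σ) :
    aField F (X (Sum.inr j)) = cj (rename Sum.inl (F j)) := by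
  simp [aField, mkDerivation_X]

lemma aField_cj (F : σ → Hol σ) (P : Pol σ) : aField F (cj P) = cj (hField F P) := by
  induction P using MvPolynomial.induction_on with
  | C r => simp [cj_C]
  | add p q hp hq => simp [hp, hq]
  | mul_X p i hp =>
    rcases i with j | j <;>
      simp [hp, cj_X, Derivation.leibniz, hField_X_inl, aField_X_inr, hField_X_inr, aField_X_inl]

lemma hField_cj (F : σ → Hol σ) (P : Pol σ) : hField F (cj P) = cj (aField F P) := by
  rw [← cj_cj (hField F (cj P)), ← aField_cj, cj_cj]

lemma hField_rename (F : σ → Hol σ) (p : Hol σ) :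
    hField F (rename Sum.inl p) = rename Sum.inl (mkDerivation ℂ F p) := by
  induction p using MvPolynomial.induction_on with
  | C r => simp
  | add p q hp hq => simp [hp, hq]
  | mul_X p i hp => simp [hp, Derivation.leibniz, hField_X_inl, mkDerivation_X]

lemma aField_rename (F : σ → Hol σ) (p : Hol σ) : aField F (rename Sum.inl p) = 0 := by
  induction p using MvPolynomial.induction_on with
  | C r => simp
  | add p q hp hq => simp [hp, hq]
  | mul_X p i hp => simp [hp, Derivation.leibniz, aField_X_inl]

lemma hField_zero : hField (0 : σ → Hol σ) = 0 :=
  derivation_ext (by rintro (j | j) <;> simp [hField_X_inl, hField_X_inr])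

lemma hField_br (F G : σ → Hol σ) (P : Pol σ) :
    hField (br F G) P = hField F (hField G P) - hField G (hField F P) := by
  rw [← Derivation.commutator_apply]
  congr 1
  refine derivation_ext fun i => ?_
  rcases i with j | j
  · simp [Derivation.commutator_apply, hField_X_inl, hField_rename, br]
  · simp [Derivation.commutator_apply, hField_X_inr]

lemma aField_br (F G : σ → Hol σ) (P : Pol σ) :
    aField (br F G) P = aField F (aField G P) - aField G (aField F P) := by
  rw [← cj_cj P]
  simp only [aField_cj, hField_br, map_sub]

lemma hField_aField (F G : σ → Hol σ) (P : Pol σ) :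
    hField F (aField G P) = aField G (hField F P) := by
  rw [← sub_eq_zero, ← Derivation.commutator_apply]
  have : ⁅hField F, aField G⁆ = 0 := by
    refine derivation_ext fun i => ?_
    rcases i with j | j
    · simp [Derivation.commutator_apply, hField_X_inl, aField_X_inl, aField_rename]
    · simp only [Derivation.commutator_apply, hField_X_inr, aField_X_inr, hField_cj, aField_rename,
        map_zero, sub_zero, Derivation.zero_apply]
  rw [this, Derivation.zero_apply]

lemma reField_br (F G : σ → Hol σ) (P : Pol σ) :
    reField (br F G) P = reField F (reField G P) - reField G (reField F P) := by
  simp only [reField_apply, hField_br, aField_br, map_add, hField_aField]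
  ring

lemma hField_br_eq_reField (F G : σ → Hol σ) (P : Pol σ) :
    hField (br F G) P = hField F (reField G P) - reField G (hField F P) := by
  simp only [reField_apply, hField_br, map_add, hField_aField]
  ring

lemma hField_eq_sum [Fintype σ] (F : σ → Hol σ) (P : Pol σ) :
    hField F P = ∑ j, rename Sum.inl (F j) * pderiv (Sum.inl j) P := by
  rw [hField, mkDerivation_eq_sum, Fintype.sum_sum_type]
  simp

lemma isHomogeneous_br [Finite σ] {F G : σ → Hol σ} {s t r : ℕ} (hF : ∀ j, (F j).IsHomogeneous s)
    (hG : ∀ j, (G j).IsHomogeneous t) (hs : 1 ≤ s) (ht : 1 ≤ t) (hr : s + t = r + 1) (j : σ) :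
    (br F G j).IsHomogeneous r :=
  (isHomogeneous_mkDerivation hF (hG j) ht hr).sub
    (isHomogeneous_mkDerivation hG (hF j) hs (by omega))

end Polarization

/-! ### Bidegrees -/

section Bidegree

variable {σ : Type*}

/-- The degree of a monomial of `Pol σ` in the variables `z`. -/
def zdeg : (σ ⊕ σ →₀ ℕ) →+ ℕ := Finsupp.weight (Sum.elim 1 0)

/-- The degree of a monomial of `Pol σ` in the variables `z̄`. -/
def adeg : (σ ⊕ σ →₀ ℕ) →+ ℕ := Finsupp.weight (Sum.elim 0 1)

lemma zdeg_swap (m : σ ⊕ σ →₀ ℕ) : zdeg (m.mapDomain Sum.swap) = adeg m := by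
  induction m using Finsupp.induction_linear with
  | zero => simp
  | add m m' hm hm' => simp [Finsupp.mapDomain_add, hm, hm']
  | single i k => cases i <;> simp [zdeg, adeg, Finsupp.weight_single]

lemma adeg_swap (m : σ ⊕ σ →₀ ℕ) : adeg (m.mapDomain Sum.swap) = zdeg m := by
  induction m using Finsupp.induction_linear with
  | zero => simp
  | add m m' hm hm' => simp [Finsupp.mapDomain_add, hm, hm']
  | single i k => cases i <;> simp [zdeg, adeg, Finsupp.weight_single]

lemma zdeg_add_adeg_eq_degree (m : σ ⊕ σ →₀ ℕ) : zdeg m + adeg m = m.degree := by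
  induction m using Finsupp.induction_linear with
  | zero => simp
  | add m m' hm hm' => rw [map_add, map_add, map_add, ← hm, ← hm', add_add_add_comm]
  | single i k => cases i <;> simp [zdeg, adeg, Finsupp.weight_single]

lemma zdeg_mapDomain_inl (e : σ →₀ ℕ) : zdeg (e.mapDomain Sum.inl) = e.degree := by
  induction e using Finsupp.induction_linear with
  | zero => simp
  | add m m' hm hm' => simp [Finsupp.mapDomain_add, hm, hm', Finsupp.degree]
  | single i k => simp [zdeg, Finsupp.weight_single]

lemma adeg_mapDomain_inl (e : σ →₀ ℕ) : adeg (e.mapDomain Sum.inl) = 0 := by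
  induction e using Finsupp.induction_linear with
  | zero => simp
  | add m m' hm hm' => simp [Finsupp.mapDomain_add, hm, hm']
  | single i k => simp [adeg, Finsupp.weight_single]

lemma exists_mem_support_of_mem_support_hField [Finite σ] {F : σ → Hol σ} {s : ℕ}
    (hF : ∀ j, (F j).IsHomogeneous s) {P : Pol σ} {m' : σ ⊕ σ →₀ ℕ}
    (hm' : m' ∈ (hField F P).support) :
    ∃ m ∈ P.support, 1 ≤ zdeg m ∧ zdeg m' + 1 = zdeg m + s ∧ adeg m' = adeg m := by
  classical
  cases nonempty_fintype σ
  rw [hField_eq_sum] at hm'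
  obtain ⟨j, -, hj⟩ := Finset.mem_biUnion.1 (support_sum hm')
  obtain ⟨m₁, h₁, m₂, h₂, rfl⟩ := Finset.mem_add.1 (support_mul _ _ hj)
  rw [support_rename_of_injective Sum.inl_injective, Finset.mem_image] at h₁
  obtain ⟨e, he, rfl⟩ := h₁
  have hs : e.degree = s := by
    rw [Finsupp.degree_eq_weight_one]
    exact hF j (mem_support_iff.1 he)
  rw [mem_support_iff, coeff_pderiv] at h₂
  refine ⟨m₂ + Finsupp.single (Sum.inl j) 1, mem_support_iff.2 (left_ne_zero_of_mul h₂), ?_⟩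
  have hz : zdeg (Finsupp.single (Sum.inl j : σ ⊕ σ) 1) = 1 := by simp [zdeg, Finsupp.weight_single]
  have ha : adeg (Finsupp.single (Sum.inl j : σ ⊕ σ) 1) = 0 := by simp [adeg, Finsupp.weight_single]
  simp only [map_add, zdeg_mapDomain_inl, adeg_mapDomain_inl, hz, ha]
  omega

lemma exists_mem_support_of_mem_support_aField [Finite σ] {F : σ → Hol σ} {s : ℕ}
    (hF : ∀ j, (F j).IsHomogeneous s) {P : Pol σ} {m' : σ ⊕ σ →₀ ℕ}
    (hm' : m' ∈ (aField F P).support) :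
    ∃ m ∈ P.support, 1 ≤ adeg m ∧ adeg m' + 1 = adeg m + s ∧ zdeg m' = zdeg m := by
  rw [← cj_cj P, aField_cj] at hm'
  obtain ⟨m₁, h₁, rfl⟩ := exists_mem_support_of_mem_support_cj hm'
  obtain ⟨m₂, h₂, h⟩ := exists_mem_support_of_mem_support_hField hF h₁
  obtain ⟨m, hm, rfl⟩ := exists_mem_support_of_mem_support_cj h₂
  refine ⟨m, hm, ?_⟩
  simpa only [zdeg_swap, adeg_swap] using h

lemma exists_forall_nsmul_mem_support {R τ : Type*} [CommRing R] [IsDomain R] [Finite τ]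
    {P : MvPolynomial τ R} (hP : P ≠ 0) : ∃ m ∈ P.support, ∀ k : ℕ, k • m ∈ (P ^ k).support := by
  let _ : LinearOrder τ := LinearOrder.lift' (Finite.equivFin τ) (Finite.equivFin τ).injective
  refine ⟨MonomialOrder.lex.degree P, MonomialOrder.degree_mem_support hP, fun k => ?_⟩
  rw [← MonomialOrder.degree_pow]
  exact MonomialOrder.degree_mem_support (pow_ne_zero _ hP)

end Bidegree

/-! ### Rigidity of models -/

section Rigidity

variable {σ : Type*}

/-- `Q` is homogeneous of degree `d` and has no pluriharmonic terms. -/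
structure IsModelPoly (d : ℕ) (Q : Pol σ) : Prop where
  one_le_zdeg : ∀ m ∈ Q.support, 1 ≤ zdeg m
  one_le_adeg : ∀ m ∈ Q.support, 1 ≤ adeg m
  zdeg_add_adeg : ∀ m ∈ Q.support, zdeg m + adeg m = d

/-- Holomorphic nondegeneracy of the model defined by `Q`, tested on fields that do not involve
`w`. -/
def HolNondeg (Q : Pol σ) : Prop := ∀ F, hField F Q = 0 → F = 0

/-- `q` is a companion of `g` with factor `c`: the derivative of `Q` along `q` is `c` times the
derivative of `Q ^ 2` along the holomorphic part of `g`. -/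
structure IsCompanion (Q : Pol σ) (c : ℂ) (g q : σ → Hol σ) : Prop where
  reField_eq : reField q Q = c • hField g (Q * Q)

lemma IsCompanion.reField_br_eq_zero {Q : Pol σ} {g q : σ → Hol σ} {c : ℂ}
    (h : IsCompanion Q c g q) (hgQ : reField g Q = 0) : reField (br g q) Q = 0 := by
  have hN : reField g (hField g Q) = 0 := by
    rw [reField_apply, ← hField_aField, ← map_add, ← reField_apply, hgQ, map_zero]
  simp [reField_br, hgQ, h.reField_eq, Derivation.leibniz, hN]

lemma hField_reField_comm {g q : σ → Hol σ} (h : br g q = 0) (P : Pol σ) :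
    hField g (reField q P) = reField q (hField g P) := by
  rw [← sub_eq_zero, ← hField_br_eq_reField, h, hField_zero, Derivation.zero_apply]

lemma IsCompanion.reField_hField {Q : Pol σ} {g q : σ → Hol σ} {c : ℂ}
    (h : IsCompanion Q c g q) (hbr : br g q = 0) (hgg : hField g (hField g Q) = 0) :
    reField q (hField g Q) = (2 * c) • (hField g Q * hField g Q) := by
  rw [← hField_reField_comm hbr, h.reField_eq, Derivation.leibniz, Derivation.map_smul, map_add,
    smul_eq_mul, Derivation.leibniz, hgg, mul_comm 2, mul_smul, two_smul]
  simp

section LinearField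

variable [Fintype σ]

lemma hField_linearField (A : Matrix σ σ ℂ) :
    hField (linearField A) = mkDerivation ℂ (linearField (Matrix.fromBlocks A 0 0 0)) := by
  rw [hField]
  congr 1 with (j | j) <;> simp [linearField, linearForm_apply]

lemma reField_linearField (A : Matrix σ σ ℂ) : reField (linearField A) =
    mkDerivation ℂ (linearField (Matrix.fromBlocks A 0 0 (A.map (starRingEnd ℂ)))) := by
  refine derivation_ext fun i => ?_
  rcases i with j | j <;>
    simp [reField_apply, hField_X_inl, hField_X_inr, aField_X_inl, aField_X_inr, mkDerivation_X,
      linearField, linearForm_apply, cj_smul, cj_X]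

lemma exists_iterate_hField_linearField_eq_zero {Q : Pol σ} {A : Matrix σ σ ℂ} {q : σ → Hol σ}
    {c : ℂ} (hc : c ≠ 0) (hbr : br (linearField A) q = 0)
    (hq : IsCompanion Q c (linearField A) q) :
    ∃ k, (hField (linearField A))^[k] Q = 0 := by
  have htop : ⨆ a, maxGenEigenspace (hField (linearField A) : Pol σ →ₗ[ℂ] Pol σ) a = ⊤ := by
    rw [hField_linearField]
    exact iSup_maxGenEigenspace_linearField _
  obtain ⟨k, hk⟩ := (mem_maxGenEigenspace _ _ _).1
    (mem_maxGenEigenspace_zero (hField_reField_comm hbr) htop hc hq.reField_eq)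
  rw [zero_smul, sub_zero, Module.End.pow_apply] at hk
  exact ⟨k, hk⟩

end LinearField

variable [Finite σ]

lemma IsModelPoly.eq_zero_of_le_degree {d r : ℕ} {Q : Pol σ} (hQ : IsModelPoly d Q)
    (hnd : HolNondeg Q) {h : σ → Hol σ} (hh : ∀ j, (h j).IsHomogeneous r) (hr : d ≤ r)
    (h0 : reField h Q = 0) : h = 0 := by
  refine hnd h ?_
  rw [← support_eq_empty, Finset.eq_empty_iff_forall_notMem]
  intro m hm
  obtain ⟨m₁, -, h₁, h₂, -⟩ := exists_mem_support_of_mem_support_hField hh hm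
  have hneg : hField h Q = -aField h Q := eq_neg_of_add_eq_zero_left h0
  rw [hneg, support_neg] at hm
  obtain ⟨m₂, hm₂, -, -, h₃⟩ := exists_mem_support_of_mem_support_aField hh hm
  have := hQ.zdeg_add_adeg m₂ hm₂
  have := hQ.one_le_adeg m₂ hm₂
  omega

lemma exists_mem_support_of_mem_support_iterate_hField {F : σ → Hol σ} {s : ℕ}
    (hF : ∀ j, (F j).IsHomogeneous s) {P : Pol σ} (k : ℕ) {m' : σ ⊕ σ →₀ ℕ}
    (hm' : m' ∈ ((hField F)^[k] P).support) : ∃ m ∈ P.support, zdeg m' + k = zdeg m + k * s := by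
  induction k generalizing m' with
  | zero => exact ⟨m', hm', by omega⟩
  | succ k ih =>
    rw [Function.iterate_succ_apply'] at hm'
    obtain ⟨m₁, hm₁, -, h₁, -⟩ := exists_mem_support_of_mem_support_hField hF hm'
    obtain ⟨m, hm, h⟩ := ih hm₁
    exact ⟨m, hm, by rw [Nat.succ_mul]; omega⟩

lemma exists_mem_support_of_mem_support_iterate_neg_aField {F : σ → Hol σ} {s : ℕ}
    (hF : ∀ j, (F j).IsHomogeneous s) {P : Pol σ} (k : ℕ) {m' : σ ⊕ σ →₀ ℕ}
    (hm' : m' ∈ ((fun P => -aField F P)^[k] P).support) : ∃ m ∈ P.support, zdeg m' = zdeg m := by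
  induction k generalizing m' with
  | zero => exact ⟨m', hm', rfl⟩
  | succ k ih =>
    rw [Function.iterate_succ_apply', support_neg] at hm'
    obtain ⟨m₁, hm₁, -, -, h₁⟩ := exists_mem_support_of_mem_support_aField hF hm'
    obtain ⟨m, hm, h⟩ := ih hm₁
    exact ⟨m, hm, h₁.trans h⟩

/-- Iterates of `hField g` raise the degree in `z`, whereas those of `aField g` preserve it. -/
lemma IsModelPoly.exists_iterate_hField_eq_zero {d s : ℕ} {Q : Pol σ} (hQ : IsModelPoly d Q)
    {g : σ → Hol σ} (hs : 2 ≤ s) (hg : ∀ j, (g j).IsHomogeneous s) (hgQ : reField g Q = 0) :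
    ∃ k, (hField g)^[k] Q = 0 := by
  have hcomm : Function.Commute (hField g) fun P => -aField g P := fun P => by
    simp only [map_neg, hField_aField]
  have hiter : (hField g)^[d + 1] Q = (fun P => -aField g P)^[d + 1] Q :=
    hcomm.iterate_eq_of_map_eq _ (eq_neg_of_add_eq_zero_left hgQ)
  refine ⟨d + 1, ?_⟩
  rw [← support_eq_empty, Finset.eq_empty_iff_forall_notMem]
  intro m hm
  obtain ⟨m₁, hm₁, h₁⟩ := exists_mem_support_of_mem_support_iterate_hField hg _ hm
  rw [hiter] at hm
  obtain ⟨m₂, hm₂, h₂⟩ := exists_mem_support_of_mem_support_iterate_neg_aField hg _ hm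
  have := hQ.zdeg_add_adeg m₂ hm₂
  have := Nat.mul_le_mul_left (d + 1) hs
  omega

lemma not_dvd_zdeg_of_mem_support_iterate_reField {k : ℕ} {q : σ → Hol σ}
    (hq : ∀ j, (q j).IsHomogeneous (k + 1)) {P : Pol σ} (hP : ∀ e ∈ P.support, ¬ k ∣ zdeg e)
    (m : ℕ) {e : σ ⊕ σ →₀ ℕ} (he : e ∈ ((reField q)^[m] P).support) : ¬ k ∣ zdeg e := by
  classical
  induction m generalizing e with
  | zero => exact hP e he
  | succ m ih =>
    rw [Function.iterate_succ_apply'] at he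
    rcases Finset.mem_union.1 (support_add he) with he | he
    · obtain ⟨e', he', -, h, -⟩ := exists_mem_support_of_mem_support_hField hq he
      have hz : zdeg e = zdeg e' + k := by omega
      rw [hz, Nat.dvd_add_self_right]
      exact ih he'
    · obtain ⟨e', he', -, -, h⟩ := exists_mem_support_of_mem_support_aField hq he
      exact h ▸ ih he'

/-- Writing `R = hField g Q` and `D = reField q`, the iterate `D^m R` is a nonzero multiple of
`R ^ (m + 1)`. For `m + 1 = d + s - 1`, no monomial of the former has degree in `z` divisible by
`m + 1`, but the latter contains an `(m + 1)`-th power of a monomial. -/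
lemma IsModelPoly.hField_eq_zero_of_hField_hField_eq_zero {d s : ℕ} {Q : Pol σ}
    (hQ : IsModelPoly d Q) {g q : σ → Hol σ} (hs : 1 ≤ s) (hg : ∀ j, (g j).IsHomogeneous s)
    (hq : ∀ j, (q j).IsHomogeneous (d + s)) {c : ℂ} (hc : c ≠ 0)
    (h : IsCompanion Q c g q) (hbr : br g q = 0)
    (hgg : hField g (hField g Q) = 0) : hField g Q = 0 := by
  by_contra hR0
  have hzdeg (e : σ ⊕ σ →₀ ℕ) (he : e ∈ (hField g Q).support) :
      1 ≤ zdeg e ∧ zdeg e < d + s - 1 := by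
    obtain ⟨e', he', h₁, h₂, -⟩ := exists_mem_support_of_mem_support_hField hg he
    have := hQ.one_le_adeg e' he'
    have := hQ.zdeg_add_adeg e' he'
    omega
  obtain ⟨e, he, hpow⟩ := exists_forall_nsmul_mem_support hR0
  obtain ⟨m, hm⟩ : ∃ m, d + s = m + 1 + 1 := ⟨d + s - 2, by have := hzdeg e he; omega⟩
  rw [hm] at hq hzdeg
  have hdvd (e : σ ⊕ σ →₀ ℕ) (he : e ∈ (hField g Q).support) : ¬ m + 1 ∣ zdeg e :=
    Nat.not_dvd_of_pos_of_lt (hzdeg e he).1 (hzdeg e he).2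
  refine not_dvd_zdeg_of_mem_support_iterate_reField hq hdvd m (e := (m + 1) • e) ?_ ?_
  · have hcoef : m.factorial • (2 * c) ^ m ≠ 0 :=
      smul_ne_zero m.factorial_ne_zero (pow_ne_zero m (mul_ne_zero two_ne_zero hc))
    rw [iterate_eq_of_apply_eq_smul_mul_self _ (h.reField_hField hbr hgg) m,
      support_smul_eq hcoef]
    exact hpow _
  · rw [map_nsmul]
    exact dvd_mul_right _ _

lemma IsModelPoly.eq_zero_of_isCompanion {d s : ℕ} {Q : Pol σ} (hQ : IsModelPoly d Q)
    (hnd : HolNondeg Q) {g q : σ → Hol σ} (hs : 1 ≤ s) (hg : ∀ j, (g j).IsHomogeneous s)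
    (hq : ∀ j, (q j).IsHomogeneous (d + s)) (hgQ : reField g Q = 0) {c : ℂ} (hc : c ≠ 0)
    (h : IsCompanion Q c g q) : g = 0 := by
  have hbr : br g q = 0 := hQ.eq_zero_of_le_degree hnd
    (isHomogeneous_br hg hq hs (by omega) (r := d + s + s - 1) (by omega)) (by omega)
    (h.reField_br_eq_zero hgQ)
  obtain ⟨k, hk⟩ : ∃ k, (hField g)^[k] Q = 0 := by
    rcases hs.eq_or_lt with rfl | hs
    · cases nonempty_fintype σ
      obtain ⟨A, rfl⟩ := exists_eq_linearField hg
      exact exists_iterate_hField_linearField_eq_zero hc hbr h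
    · exact hQ.exists_iterate_hField_eq_zero hs hg hgQ
  exact hnd g <| hQ.hField_eq_zero_of_hField_hField_eq_zero hs hg hq hc h hbr <|
    apply_apply_eq_zero_of_iterate_eq_zero (hField_reField_comm hbr) hc h.reField_eq hk

end Rigidity

/-! ### Real parts of linear fields -/

section RealPartLinear

variable {σ : Type*}

lemma reField_sub (F G : σ → Hol σ) : reField (F - G) = reField F - reField G := by
  refine derivation_ext fun i => ?_
  rcases i with j | j <;>
    simp [reField_apply, hField_X_inl, hField_X_inr, aField_X_inl, aField_X_inr]

variable [Fintype σ]

lemma isRealPart_reField_linearField {A R : Matrix σ σ ℂ}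
    (h : IsRealPart A.vecMulLinear R.vecMulLinear) :
    IsRealPart (reField (linearField A) : Pol σ →ₗ[ℂ] Pol σ)
      (reField (linearField R) : Pol σ →ₗ[ℂ] Pol σ) := by
  rw [reField_linearField, reField_linearField]
  exact isRealPart_linearField (h.fromBlocks h.map_conj)

lemma reField_linearField_eq_re_smul {A R : Matrix σ σ ℂ}
    (h : IsRealPart A.vecMulLinear R.vecMulLinear) {P : Pol σ} {a : ℂ}
    (hP : reField (linearField A) P = a • P) : reField (linearField R) P = (a.re : ℂ) • P :=
  mem_eigenspace_iff.1 (isRealPart_reField_linearField h a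
    (eigenspace_le_maxGenEigenspace (mem_eigenspace_iff.2 hP)))

lemma br_linearField_apply (A : Matrix σ σ ℂ) (f : σ → Hol σ) (j : σ) : br (linearField A) f j =
    mkDerivation ℂ (linearField A) (f j) - Fintype.linearCombination ℂ f (A j) := by
  rw [br, linearField, mkDerivation_linearForm]

lemma br_linearField_eq_zero_of_isRealPart {A R : Matrix σ σ ℂ}
    (h : IsRealPart A.vecMulLinear R.vecMulLinear) {f : σ → Hol σ}
    (hf : br (linearField A) f = 0) : br (linearField R) f = 0 := by
  classical
  have hcomm (v : σ → ℂ) : mkDerivation ℂ (linearField A) (Fintype.linearCombination ℂ f v) =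
      Fintype.linearCombination ℂ f (A.vecMulLinear v) := by
    have hA (j : σ) : mkDerivation ℂ (linearField A) (f j) = Fintype.linearCombination ℂ f (A j) :=
      sub_eq_zero.1 ((br_linearField_apply A f j).symm.trans (congrFun hf j))
    rw [Matrix.vecMulLinear_apply, Matrix.vecMul_eq_sum, map_sum, Fintype.linearCombination_apply,
      map_sum]
    simp only [Derivation.map_smul, hA, map_smul]
  have hR := h.apply_map (isRealPart_linearField h) (iSup_maxGenEigenspace_eq_top A.vecMulLinear)
    hcomm
  funext j
  have hj := hR (Pi.single j 1)
  rw [Derivation.coeFn_coe, Fintype.linearCombination_apply_single, one_smul,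
    Matrix.vecMulLinear_apply, Matrix.single_one_vecMul] at hj
  rw [br_linearField_apply, Pi.zero_apply, sub_eq_zero]
  exact hj

variable [DecidableEq σ]

lemma reField_linearField_smul_one (r : ℝ) {P : Pol σ} {k : ℕ} (hP : P.IsHomogeneous k) :
    reField (linearField ((r : ℂ) • 1)) P = (r * k : ℂ) • P := by
  have h : reField (linearField ((r : ℂ) • (1 : Matrix σ σ ℂ))) = (r : ℂ) • mkDerivation ℂ X := by
    refine derivation_ext fun i => ?_
    rw [reField_apply, Derivation.smul_apply, mkDerivation_X]
    rcases i with j | j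
    · rw [hField_X_inl, aField_X_inl, linearField_smul_one, map_smul, rename_X, add_zero]
    · rw [hField_X_inr, aField_X_inr, linearField_smul_one, map_smul, rename_X, cj_smul, cj_X,
        conj_ofReal, Sum.swap_inl, zero_add]
  rw [h, Derivation.smul_apply, mkDerivation_X_of_isHomogeneous hP, mul_smul,
    Nat.cast_smul_eq_nsmul]

lemma br_linearField_smul_one (r : ℂ) {f : σ → Hol σ} {s : ℕ} (hf : ∀ j, (f j).IsHomogeneous s) :
    br (linearField (r • 1)) f = (r * (s - 1)) • f := by
  funext j
  have h : mkDerivation ℂ (linearField (r • (1 : Matrix σ σ ℂ))) = r • mkDerivation ℂ X :=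
    derivation_ext fun i => by simp [mkDerivation_X, linearField_smul_one]
  have hrow : (r • (1 : Matrix σ σ ℂ)) j = Pi.single j r := by
    ext k
    simp [Matrix.one_apply, Pi.single_apply, eq_comm]
  rw [br_linearField_apply, h, hrow, Fintype.linearCombination_apply_single, Derivation.smul_apply,
    mkDerivation_X_of_isHomogeneous (hf j), mul_sub, mul_one, Pi.smul_apply, sub_smul, mul_smul,
    Nat.cast_smul_eq_nsmul]

end RealPartLinear

section Rotations

variable {n d : ℕ} {Q : Pol (Fin n)}

lemma eq_smul_one_of_reField_linearField_eq_smul (hd : d ≠ 0) (hQ : Q.IsHomogeneous d)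
    (hrot : ∀ A, reField (linearField A) Q = 0 → ReDiag A → A = 0) {R : Matrix (Fin n) (Fin n) ℂ}
    (hR : ReDiag R) {r : ℝ} (hRQ : reField (linearField R) Q = (r : ℂ) • Q) :
    R = ((r / d : ℝ) : ℂ) • 1 := by
  refine sub_eq_zero.1 (hrot _ ?_ (reDiag_sub_smul_one hR _))
  rw [linearField_sub, reField_sub, Derivation.sub_apply, hRQ, reField_linearField_smul_one _ hQ,
    ofReal_div, ofReal_natCast, div_mul_cancel₀ _ (Nat.cast_ne_zero.2 hd), sub_self]

/-- Without real diagonal rotations, the real part of `A` must be a multiple of the identity, and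
brackets with it multiply a field of degree `s` by a multiple of `s - 1`. -/
lemma eq_zero_of_br_linearField_eq_zero (hd : d ≠ 0) (hQ : Q.IsHomogeneous d)
    (hrot : ∀ A, reField (linearField A) Q = 0 → ReDiag A → A = 0) {A : Matrix (Fin n) (Fin n) ℂ}
    {r : ℝ} (hr : r ≠ 0) (hAQ : reField (linearField A) Q = (r : ℂ) • Q) {f : Fin n → Hol (Fin n)}
    {s : ℕ} (hs : s ≠ 1) (hf : ∀ j, (f j).IsHomogeneous s) (hbr : br (linearField A) f = 0) :
    f = 0 := by
  obtain ⟨R, hR, hAR⟩ := exists_reDiag_isRealPart A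
  have hRQ : reField (linearField R) Q = (r : ℂ) • Q := reField_linearField_eq_re_smul hAR hAQ
  have hbrR := br_linearField_eq_zero_of_isRealPart hAR hbr
  rw [eq_smul_one_of_reField_linearField_eq_smul hd hQ hrot hR hRQ,
    br_linearField_smul_one _ hf] at hbrR
  refine (smul_eq_zero.1 hbrR).resolve_left (mul_ne_zero ?_ (sub_ne_zero.2 (by exact_mod_cast hs)))
  exact ofReal_ne_zero.2 (div_ne_zero hr (Nat.cast_ne_zero.2 hd))

end Rotations

/-! ### Fields of weight one -/

section WeightOne

variable {σ : Type*} {d : ℕ} {Q : Pol σ}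

/-- The equations satisfied by the coefficients of an infinitesimal automorphism of weight one,
`Σ (p_j + w l_j) ∂/∂z_j + a w² ∂/∂w`, of the model `Im w = Q`. -/
structure IsWeightOneField (d : ℕ) (Q : Pol σ) (a : ℝ) (l p : σ → Hol σ) : Prop where
  isHomogeneous_l : ∀ j, (l j).IsHomogeneous 1
  isHomogeneous_p : ∀ j, (p j).IsHomogeneous (d + 1)
  reField_l : reField l Q = ((2 * a : ℝ) : ℂ) • Q
  reField_p : reField p Q = -I • (hField l (Q * Q) - ((2 * a : ℝ) : ℂ) • (Q * Q))

lemma IsModelPoly.isHomogeneous (hQ : IsModelPoly d Q) : Q.IsHomogeneous d := by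
  intro m hm
  rw [← hQ.zdeg_add_adeg m (mem_support_iff.2 hm), zdeg_add_adeg_eq_degree,
    Finsupp.degree_eq_weight_one]
  rfl

lemma IsWeightOneField.isCompanion {l p : σ → Hol σ} (h : IsWeightOneField d Q 0 l p) :
    IsCompanion Q (-I) l p :=
  ⟨by rw [h.reField_p, mul_zero, ofReal_zero, zero_smul, sub_zero]⟩

lemma IsWeightOneField.isCompanion_br {a : ℝ} {l p f : σ → Hol σ} (h : IsWeightOneField d Q a l p)
    (hfQ : reField f Q = 0) : IsCompanion Q (-I) (br l f) (br p f) := by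
  refine ⟨?_⟩
  have hfQQ : reField f (Q * Q) = 0 := by simp [Derivation.leibniz, hfQ]
  rw [reField_br, hField_br_eq_reField, hfQ, hfQQ, h.reField_p, Derivation.map_smul, map_sub,
    Derivation.map_smul, hfQQ]
  simp

variable [Finite σ]

lemma IsWeightOneField.eq_zero {l p : σ → Hol σ} (h : IsWeightOneField d Q 0 l p)
    (hQ : IsModelPoly d Q) (hnd : HolNondeg Q) : l = 0 ∧ p = 0 := by
  have hlQ : reField l Q = 0 := by rw [h.reField_l, mul_zero, ofReal_zero, zero_smul]
  have hl : l = 0 := hQ.eq_zero_of_isCompanion hnd le_rfl h.isHomogeneous_l h.isHomogeneous_p hlQ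
    (neg_ne_zero.2 I_ne_zero) h.isCompanion
  refine ⟨hl, hQ.eq_zero_of_le_degree hnd h.isHomogeneous_p (Nat.le_add_right d 1) ?_⟩
  rw [h.isCompanion.reField_eq, hl, hField_zero, Derivation.zero_apply, smul_zero]

lemma IsWeightOneField.br_eq_zero {a : ℝ} {l p f : σ → Hol σ} (h : IsWeightOneField d Q a l p)
    (hQ : IsModelPoly d Q) (hnd : HolNondeg Q) {s : ℕ} (hs : 1 ≤ s)
    (hf : ∀ j, (f j).IsHomogeneous s) (hfQ : reField f Q = 0) : br l f = 0 := by
  refine hQ.eq_zero_of_isCompanion hnd hs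
    (isHomogeneous_br h.isHomogeneous_l hf le_rfl hs (by omega))
    (isHomogeneous_br h.isHomogeneous_p hf (by omega) hs (by omega)) ?_ (neg_ne_zero.2 I_ne_zero)
    (h.isCompanion_br hfQ)
  rw [reField_br, hfQ, h.reField_l, Derivation.map_smul, hfQ, map_zero, smul_zero, sub_zero]

lemma IsWeightOneField.eq_zero_of_reField_eq_zero {n : ℕ} {Q : Pol (Fin n)} {a : ℝ}
    {l p f : Fin n → Hol (Fin n)} (h : IsWeightOneField d Q a l p) (hd : d ≠ 0)
    (hQ : IsModelPoly d Q) (hnd : HolNondeg Q)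
    (hrot : ∀ A, reField (linearField A) Q = 0 → ReDiag A → A = 0) (ha : a ≠ 0) {s : ℕ}
    (hs : 2 ≤ s) (hf : ∀ j, (f j).IsHomogeneous s) (hfQ : reField f Q = 0) : f = 0 := by
  have hbr := h.br_eq_zero hQ hnd (by omega) hf hfQ
  obtain ⟨A, rfl⟩ := exists_eq_linearField h.isHomogeneous_l
  exact eq_zero_of_br_linearField_eq_zero hd hQ.isHomogeneous hrot (mul_ne_zero two_ne_zero ha)
    h.reField_l (by omega) hf hbr

end WeightOne

section Tangency

variable {σ : Type*} {d : ℕ} {Q : Pol σ}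

/-- The restriction of a polynomial to `z̄ = 0`. -/
def holPart : Pol σ →ₐ[ℂ] Hol σ := aeval (Sum.elim X 0)

lemma holPart_rename (g : Hol σ) : holPart (rename Sum.inl g) = g := by
  rw [holPart, aeval_rename, Sum.elim_comp_inl, aeval_X_left_apply]

lemma holPart_eq_zero {P : Pol σ} (hP : ∀ m ∈ P.support, 1 ≤ adeg m) : holPart P = 0 := by
  rw [holPart, aeval_def, eval₂_eq]
  refine Finset.sum_eq_zero fun m hm => ?_
  obtain ⟨j, hj⟩ : ∃ j, m (Sum.inr j) ≠ 0 := by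
    by_contra! h
    refine Nat.one_le_iff_ne_zero.1 (hP m hm) ?_
    rw [adeg, Finsupp.weight_apply]
    refine Finset.sum_eq_zero ?_
    rintro (i | i) - <;> simp [h]
  rw [Finset.prod_eq_zero (Finsupp.mem_support_iff.2 hj) (by simp [hj]), mul_zero]

lemma holPart_cj_rename {g : Hol σ} {k : ℕ} (hk : 1 ≤ k) (hg : g.IsHomogeneous k) :
    holPart (cj (rename Sum.inl g)) = 0 := by
  classical
  refine holPart_eq_zero fun m hm => ?_
  obtain ⟨m', hm', rfl⟩ := exists_mem_support_of_mem_support_cj hm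
  rw [support_rename_of_injective Sum.inl_injective, Finset.mem_image] at hm'
  obtain ⟨e, he, rfl⟩ := hm'
  rw [adeg_swap, zdeg_mapDomain_inl, Finsupp.degree_eq_weight_one]
  exact hk.trans_eq (hg (mem_support_iff.1 he)).symm

lemma IsModelPoly.holPart_reField [Finite σ] (hQ : IsModelPoly d Q) {l : σ → Hol σ} {s : ℕ}
    (hs : 1 ≤ s) (hl : ∀ j, (l j).IsHomogeneous s) : holPart (reField l Q) = 0 := by
  classical
  refine holPart_eq_zero fun m hm => ?_
  rcases Finset.mem_union.1 (support_add hm) with hm | hm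
  · obtain ⟨m', hm', -, -, h⟩ := exists_mem_support_of_mem_support_hField hl hm
    exact h ▸ hQ.one_le_adeg m' hm'
  · obtain ⟨m', -, h⟩ := exists_mem_support_of_mem_support_aField hl hm
    omega

lemma eval_rename_inl (z : σ → ℂ) (g : Hol σ) :
    eval (diagPt z) (rename Sum.inl g) = eval z g := by
  rw [eval_rename, diagPt, Sum.elim_comp_inl]

/-- Setting `z̄ = 0` separates the holomorphic polynomial `g` from the real one `P + cj P`. -/
lemma eq_zero_of_im_eval_eq_re_eval {g : Hol σ} {k : ℕ} (hk : 1 ≤ k) (hg : g.IsHomogeneous k)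
    {P : Pol σ} (hP : holPart (P + cj P) = 0)
    (h : ∀ z, (eval z g).im = (eval (diagPt z) P).re) : g = 0 ∧ P + cj P = 0 := by
  have hsum : I • rename Sum.inl g + P + cj (I • rename Sum.inl g + P) = 0 :=
    add_cj_eq_zero_of_re fun z => by simp [eval_rename_inl, ← h]
  rw [map_add, cj_smul, add_add_add_comm] at hsum
  have hg0 : g = 0 := by
    have hI := congrArg holPart hsum
    rw [map_add, map_add, map_smul, map_smul, holPart_rename, holPart_cj_rename hk hg, hP,
      smul_zero, add_zero, add_zero, map_zero] at hI
    exact (smul_eq_zero.1 hI).resolve_left I_ne_zero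
  refine ⟨hg0, ?_⟩
  simpa [hg0] using hsum

/-- The coefficients of `u²`, `u` and `1` in the tangency condition at a point where `Q` has the
value `q`. -/
lemma eq_of_forall_re_eq_zero {q : ℝ} {g₀ g₁ g₂ p l : ℂ} (h : ∀ u : ℝ,
      ((g₀ + g₁ * (u + I * q) + g₂ * (u + I * q) ^ 2) / (2 * I) - (p + (u + I * q) * l)).re = 0) :
    g₂.im = 0 ∧ g₁.im = 2 * (l.re - g₂.re * q) ∧ g₀.im + q * g₁.re = 2 * (p.re - q * l.im) := by
  have hu (u : ℝ) : g₀.im + q * g₁.re - q ^ 2 * g₂.im - 2 * (p.re - q * l.im) +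
      u * (g₁.im - 2 * (l.re - g₂.re * q)) + u ^ 2 * g₂.im = 0 := by
    have hre (x : ℂ) : (x / (2 * I)).re = x.im / 2 := by
      rw [← mul_I_im, ← ofReal_ofNat, ← div_ofReal_im]
      congr 1
      field_simp
    have := h u
    rw [sub_re, hre] at this
    simp [pow_two] at this
    linear_combination 2 * this
  have h₀ := hu 0
  have h₁ := hu 1
  have h₂ := hu (-1)
  have h₃ : g₂.im = 0 := by linarith
  refine ⟨h₃, by linarith, ?_⟩
  rw [h₃] at h₀
  linarith

lemma ofReal_re_eval_diagPt (hQr : cj Q = Q) (z : σ → ℂ) :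
    ((eval (diagPt z) Q).re : ℂ) = eval (diagPt z) Q := by
  rw [← conj_eq_iff_re, ← eval_cj, hQr]

lemma cj_hField (hQr : cj Q = Q) (F : σ → Hol σ) : cj (hField F Q) = aField F Q := by
  rw [← aField_cj, hQr]

variable [Finite σ]

lemma IsModelPoly.eq_zero_of_im_eval_eq (hQ : IsModelPoly d Q) (hQr : cj Q = Q) {g : Hol σ} {k : ℕ}
    (hk : 1 ≤ k) (hg : g.IsHomogeneous k) {l : σ → Hol σ} (hl : ∀ j, (l j).IsHomogeneous 1) {a : ℝ}
    (h : ∀ z, (eval z g).im =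
      2 * ((eval (diagPt z) (hField l Q)).re - a * (eval (diagPt z) Q).re)) :
    g = 0 ∧ reField l Q = ((2 * a : ℝ) : ℂ) • Q := by
  have hQ0 : holPart Q = 0 := holPart_eq_zero hQ.one_le_adeg
  let P : Pol σ := hField l Q - (a : ℂ) • Q
  have hP : (2 : ℂ) • P + cj ((2 : ℂ) • P) = (2 : ℂ) • (reField l Q - ((2 * a : ℝ) : ℂ) • Q) := by
    simp only [P, cj_smul, map_sub, cj_hField hQr, conj_ofReal, hQr, reField_apply, map_ofNat,
      ofReal_mul, ofReal_ofNat]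
    module
  obtain ⟨hg0, h0⟩ := eq_zero_of_im_eval_eq_re_eval (P := (2 : ℂ) • P) hk hg
    (by rw [hP, map_smul, map_sub, map_smul, hQ.holPart_reField le_rfl hl, hQ0]; simp)
    fun z => by
      rw [smul_eval, map_sub, smul_eval, h, ← ofReal_ofNat, re_ofReal_mul, sub_re, re_ofReal_mul]
  rw [hP] at h0
  exact ⟨hg0, sub_eq_zero.1 ((smul_eq_zero.1 h0).resolve_left two_ne_zero)⟩

lemma IsModelPoly.eq_zero_of_im_eval_eq_sub (hQ : IsModelPoly d Q) (hQr : cj Q = Q) {g : Hol σ}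
    {k : ℕ} (hk : 1 ≤ k) (hg : g.IsHomogeneous k) {l p : σ → Hol σ} {s : ℕ} (hs : 1 ≤ s)
    (hp : ∀ j, (p j).IsHomogeneous s)
    (h : ∀ z, (eval z g).im = 2 * ((eval (diagPt z) (hField p Q)).re -
      (eval (diagPt z) Q).re * (eval (diagPt z) (hField l Q)).im)) :
    g = 0 ∧ reField p Q = -I • (Q * (hField l Q - aField l Q)) := by
  have hQ0 : holPart Q = 0 := holPart_eq_zero hQ.one_le_adeg
  let P : Pol σ := hField p Q + I • (Q * hField l Q)
  have hP : (2 : ℂ) • P + cj ((2 : ℂ) • P) =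
      (2 : ℂ) • (reField p Q + I • (Q * (hField l Q - aField l Q))) := by
    simp only [P, cj_smul, map_add, map_mul, cj_hField hQr, conj_I, hQr, reField_apply, map_ofNat,
      mul_sub]
    module
  obtain ⟨hg0, h0⟩ := eq_zero_of_im_eval_eq_re_eval (P := (2 : ℂ) • P) hk hg
    (by rw [hP, map_smul, map_add, map_smul, map_mul, hQ.holPart_reField hs hp, hQ0]; simp)
    fun z => by
      obtain ⟨q, hq⟩ : ∃ q : ℝ, eval (diagPt z) Q = q := ⟨_, (ofReal_re_eval_diagPt hQr z).symm⟩
      simp only [h, P, smul_eval, map_add, map_mul, hq]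
      simp
      ring
  rw [hP] at h0
  refine ⟨hg0, ?_⟩
  rw [neg_smul, eq_neg_iff_add_eq_zero]
  exact (smul_eq_zero.1 h0).resolve_left two_ne_zero

lemma IsModelPoly.isWeightOneField (hQ : IsModelPoly d Q) (hQr : cj Q = Q) {l p : σ → Hol σ}
    (hl : ∀ j, (l j).IsHomogeneous 1) (hp : ∀ j, (p j).IsHomogeneous (d + 1)) {g₀ g₁ : Hol σ}
    {k₀ k₁ : ℕ} (hk₀ : 1 ≤ k₀) (hk₁ : 1 ≤ k₁) (hg₀ : g₀.IsHomogeneous k₀)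
    (hg₁ : g₁.IsHomogeneous k₁) {b : ℂ} (h : ∀ z (u : ℝ),
      ((eval z g₀ + eval z g₁ * (u + I * eval (diagPt z) Q) +
          b * (u + I * eval (diagPt z) Q) ^ 2) / (2 * I) -
        (eval (diagPt z) (hField p Q) +
          (u + I * eval (diagPt z) Q) * eval (diagPt z) (hField l Q))).re = 0) :
    b.im = 0 ∧ g₀ = 0 ∧ g₁ = 0 ∧ IsWeightOneField d Q b.re l p := by
  have hz (z : σ → ℂ) := eq_of_forall_re_eq_zero (q := (eval (diagPt z) Q).re) (g₀ := eval z g₀)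
    (g₁ := eval z g₁) (g₂ := b) (p := eval (diagPt z) (hField p Q))
    (l := eval (diagPt z) (hField l Q)) fun u => by
      rw [ofReal_re_eval_diagPt hQr]
      exact h z u
  obtain ⟨rfl, hlQ⟩ := hQ.eq_zero_of_im_eval_eq hQr hk₁ hg₁ hl fun z => (hz z).2.1
  obtain ⟨rfl, hpQ⟩ := hQ.eq_zero_of_im_eval_eq_sub hQr hk₀ hg₀ (Nat.le_add_left 1 d) hp
    fun z => by simpa using (hz z).2.2
  refine ⟨(hz 0).1, rfl, rfl, hl, hp, hlQ, ?_⟩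
  rw [hpQ, ← mul_smul_comm ((2 * b.re : ℝ) : ℂ), ← hlQ, reField_apply, Derivation.leibniz,
    smul_eq_mul]
  congr 1
  ring

end Tangency

/-! ### The polynomial of a model -/

section Polar

variable {n d : ℕ} {c : ((Fin n →₀ ℕ) × (Fin n →₀ ℕ)) →₀ ℂ}

/-- The polarization of `QEval c`, a polynomial in `z` and `z̄`. -/
def polar (c : ((Fin n →₀ ℕ) × (Fin n →₀ ℕ)) →₀ ℂ) : Pol (Fin n) :=
  c.sum fun p a => monomial (p.1.sumElim p.2) a

lemma eval_polar (c : ((Fin n →₀ ℕ) × (Fin n →₀ ℕ)) →₀ ℂ) (z : Fin n → ℂ) :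
    eval (diagPt z) (polar c) = QEval c z := by
  rw [polar, QEval, Finsupp.sum, Finsupp.sum, map_sum]
  refine Finset.sum_congr rfl fun p _ => ?_
  rw [eval_monomial, Finsupp.prod_fintype _ _ (by simp), Fintype.prod_sum_type, mul_assoc]
  simp [diagPt]

lemma eval_pderiv_polar (c : ((Fin n →₀ ℕ) × (Fin n →₀ ℕ)) →₀ ℂ) (k : Fin n) (z : Fin n → ℂ) :
    eval (diagPt z) (pderiv (Sum.inl k) (polar c)) = QDeriv c k z := by
  classical
  rw [polar, QDeriv, Finsupp.sum, Finsupp.sum, map_sum, map_sum]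
  refine Finset.sum_congr rfl fun p _ => ?_
  rw [pderiv_monomial, eval_monomial, Finsupp.prod_fintype _ _ (by simp), Fintype.prod_sum_type,
    mul_assoc (_ * _)]
  simp [diagPt, Finsupp.single_apply]

lemma eval_hField_polar (c : ((Fin n →₀ ℕ) × (Fin n →₀ ℕ)) →₀ ℂ) (F : Fin n → Hol (Fin n))
    (z : Fin n → ℂ) :
    eval (diagPt z) (hField F (polar c)) = ∑ j, eval z (F j) * QDeriv c j z := by
  simp only [hField_eq_sum, map_sum, map_mul, eval_pderiv_polar, eval_rename_inl]

lemma cj_monomial_sumElim {σ : Type*} (α β : σ →₀ ℕ) (a : ℂ) :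
    cj (monomial (α.sumElim β) a) = monomial (β.sumElim α) ((starRingEnd ℂ) a) := by
  have hswap : (α.sumElim β).mapDomain Sum.swap = β.sumElim α := by
    rw [← Equiv.sumComm_apply, ← Finsupp.equivMapDomain_eq_mapDomain]
    ext (j | j) <;> rfl
  simp [cj, rename_monomial, hswap]

lemma cj_polar (hreal : ∀ α β : Fin n →₀ ℕ, c (α, β) = (starRingEnd ℂ) (c (β, α))) :
    cj (polar c) = polar c := by
  have hsupp : ∀ p ∈ c.support, p.swap ∈ c.support := by
    rintro ⟨α, β⟩ hp
    rw [Finsupp.mem_support_iff] at *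
    rw [hreal] at hp
    simpa using hp
  rw [polar, Finsupp.sum, map_sum]
  refine Finset.sum_nbij' Prod.swap Prod.swap hsupp hsupp (by simp) (by simp) ?_
  rintro ⟨α, β⟩ _
  rw [cj_monomial_sumElim, hreal α β, conj_conj]
  rfl

lemma isModelPoly_polar
    (hhom : ∀ p ∈ c.support, (p.1.sum fun _ e => e) + (p.2.sum fun _ e => e) = d)
    (hnoplh : ∀ p ∈ c.support, p.1 ≠ 0 ∧ p.2 ≠ 0) : IsModelPoly d (polar c) := by
  classical
  have h (m) (hm : m ∈ (polar c).support) : 1 ≤ zdeg m ∧ 1 ≤ adeg m ∧ zdeg m + adeg m = d := by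
    obtain ⟨p, hp, hm⟩ := Finset.mem_biUnion.1 (support_sum hm)
    obtain rfl := Finset.mem_singleton.1 (support_monomial_subset hm)
    have hz : zdeg (p.1.sumElim p.2) = p.1.degree := by
      simp [zdeg, Finsupp.weight_apply, Finsupp.sum_fintype, Finsupp.degree_eq_sum]
    have ha : adeg (p.1.sumElim p.2) = p.2.degree := by
      simp [adeg, Finsupp.weight_apply, Finsupp.sum_fintype, Finsupp.degree_eq_sum]
    rw [hz, ha, Nat.one_le_iff_ne_zero, Nat.one_le_iff_ne_zero, Ne, Ne, Finsupp.degree_eq_zero_iff,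
      Finsupp.degree_eq_zero_iff]
    exact ⟨(hnoplh p hp).1, (hnoplh p hp).2, hhom p hp⟩
  exact ⟨fun m hm => (h m hm).1, fun m hm => (h m hm).2.1, fun m hm => (h m hm).2.2⟩

lemma holNondeg_polar (hnd : HND c) : HolNondeg (polar c) := by
  intro F hF
  have h := (hnd (fun j => rename Fin.castSucc (F j)) 0 ?_).1
  · funext j
    exact rename_injective _ (Fin.castSucc_injective n) (by rw [h j, Pi.zero_apply, map_zero])
  · intro z u
    have hsnoc (w : ℂ) : (Fin.snoc z w : Fin (n + 1) → ℂ) ∘ Fin.castSucc = z := by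
      ext j
      simp
    have hsum := eval_hField_polar c F z
    rw [hF, map_zero] at hsum
    simp only [eval_rename, hsnoc, ← hsum, map_zero, zero_div, sub_zero]

lemma reField_polar_eq_zero_iff
    (hreal : ∀ α β : Fin n →₀ ℕ, c (α, β) = (starRingEnd ℂ) (c (β, α))) {F : Fin n → Hol (Fin n)} :
    reField F (polar c) = 0 ↔ ∀ z, (∑ j, eval z (F j) * QDeriv c j z).re = 0 := by
  simp only [← eval_hField_polar]
  rw [reField_apply, ← cj_hField (cj_polar hreal)]
  refine ⟨fun h z => ?_, add_cj_eq_zero_of_re⟩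
  have hz := congrArg (eval (diagPt z)) h
  rw [map_add, eval_cj, add_conj, map_zero, ofReal_eq_zero] at hz
  linarith

lemma isRotationQ_of_reField_linearField
    (hreal : ∀ α β : Fin n →₀ ℕ, c (α, β) = (starRingEnd ℂ) (c (β, α)))
    {A : Matrix (Fin n) (Fin n) ℂ} (h : reField (linearField A) (polar c) = 0) :
    IsRotationQ c A := by
  intro z
  simpa only [linearField, linearForm_apply, map_sum, smul_eval, eval_X] using
    (reField_polar_eq_zero_iff hreal).1 h z

end Polar

section WeightedExpansion

variable {n d : ℕ}

lemma exists_eval_snoc_eq_sum (H : MvPolynomial (Fin (n + 1)) ℂ) (N : ℕ) (k : ℕ → ℕ)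
    (hH : ∀ m ∈ H.support, m (Fin.last n) < N ∧ ∑ i : Fin n, m i.castSucc = k (m (Fin.last n))) :
    ∃ P : ℕ → Hol (Fin n), (∀ i, (P i).IsHomogeneous (k i)) ∧ ∀ z w,
      eval (Fin.snoc z w) H = ∑ i ∈ Finset.range N, eval z (P i) * w ^ i := by
  classical
  let r (m : Fin (n + 1) →₀ ℕ) : Fin n →₀ ℕ :=
    m.comapDomain Fin.castSucc (Fin.castSucc_injective n).injOn
  refine ⟨fun i => ∑ m ∈ H.support with m (Fin.last n) = i, monomial (r m) (coeff m H),
    fun i => ?_, fun z w => ?_⟩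
  · refine IsHomogeneous.sum _ _ _ fun m hm => ?_
    obtain ⟨hm', rfl⟩ := Finset.mem_filter.1 hm
    refine isHomogeneous_monomial _ ?_
    rw [← (hH m hm').2, Finsupp.degree_eq_sum]
    rfl
  · rw [eval_eq', ← Finset.sum_fiberwise_of_maps_to (g := fun m => m (Fin.last n))
      (t := Finset.range N) fun m hm => Finset.mem_range.2 (hH m hm).1]
    refine Finset.sum_congr rfl fun i _ => ?_
    rw [map_sum, Finset.sum_mul]
    refine Finset.sum_congr rfl fun m hm => ?_
    rw [← (Finset.mem_filter.1 hm).2, Fin.prod_univ_castSucc, eval_monomial,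
      Finsupp.prod_fintype _ _ (by simp)]
    simp [r, mul_assoc]

lemma eq_zero_of_eval_snoc {H : MvPolynomial (Fin (n + 1)) ℂ}
    (h : ∀ z w, eval (Fin.snoc z w) H = 0) : H = 0 := by
  refine MvPolynomial.funext fun x => ?_
  rw [← Fin.snoc_init_self x, h, map_zero]

lemma sum_castSucc_add_eq_of_wZ_eq_one (hd : d ≠ 0) {m : Fin (n + 1) →₀ ℕ} (h : wZ n d m = 1) :
    ∑ i : Fin n, m i.castSucc + d * m (Fin.last n) = d + 1 := by
  have hd' : (d : ℚ) ≠ 0 := Nat.cast_ne_zero.2 hd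
  rw [wZ] at h
  field_simp at h
  rw [← Nat.cast_inj (R := ℚ)]
  push_cast
  linarith

lemma sum_castSucc_add_eq_of_wW_eq_one (hd : d ≠ 0) {m : Fin (n + 1) →₀ ℕ} (h : wW n d m = 1) :
    ∑ i : Fin n, m i.castSucc + d * m (Fin.last n) = 2 * d := by
  have hd' : (d : ℚ) ≠ 0 := Nat.cast_ne_zero.2 hd
  rw [wW] at h
  field_simp at h
  rw [← Nat.cast_inj (R := ℚ)]
  push_cast
  linarith

lemma exists_eval_snoc_eq_of_wZ_eq_one (hd : 2 ≤ d) {H : MvPolynomial (Fin (n + 1)) ℂ}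
    (hH : ∀ m ∈ H.support, wZ n d m = 1) :
    ∃ p l : Hol (Fin n), p.IsHomogeneous (d + 1) ∧ l.IsHomogeneous 1 ∧
      ∀ z w, eval (Fin.snoc z w) H = eval z p + eval z l * w := by
  obtain ⟨P, hP, hPe⟩ := exists_eval_snoc_eq_sum H 2 (fun i => d + 1 - d * i) fun m hm => by
    have h := sum_castSucc_add_eq_of_wZ_eq_one (by omega) (hH m hm)
    refine ⟨?_, by omega⟩
    by_contra! h2
    have := Nat.mul_le_mul_left d h2
    omega
  exact ⟨P 0, P 1, by simpa using hP 0, by simpa using hP 1, fun z w => by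
    simp [hPe, Finset.sum_range_succ]⟩

lemma exists_eval_snoc_eq_of_wW_eq_one (hd : d ≠ 0) {H : MvPolynomial (Fin (n + 1)) ℂ}
    (hH : ∀ m ∈ H.support, wW n d m = 1) :
    ∃ (g₀ g₁ : Hol (Fin n)) (b : ℂ), g₀.IsHomogeneous (2 * d) ∧ g₁.IsHomogeneous d ∧
      ∀ z w, eval (Fin.snoc z w) H = eval z g₀ + eval z g₁ * w + b * w ^ 2 := by
  obtain ⟨P, hP, hPe⟩ := exists_eval_snoc_eq_sum H 3 (fun i => 2 * d - d * i) fun m hm => by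
    have h := sum_castSucc_add_eq_of_wW_eq_one hd (hH m hm)
    refine ⟨?_, by omega⟩
    by_contra! h3
    have := Nat.mul_le_mul_left d h3
    omega
  have hP₁ : (P 1).IsHomogeneous d := by simpa [two_mul] using hP 1
  have hP₂ : (P 2).IsHomogeneous 0 := by simpa [mul_comm] using hP 2
  obtain ⟨b, hb⟩ : ∃ b, P 2 = C b :=
    ⟨_, totalDegree_eq_zero_iff_eq_C.1 ((totalDegree_zero_iff_isHomogeneous _).2 hP₂)⟩
  exact ⟨P 0, P 1, b, by simpa using hP 0, hP₁, fun z w => by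
    simp [hPe, Finset.sum_range_succ, hb]⟩

variable {c : ((Fin n →₀ ℕ) × (Fin n →₀ ℕ)) →₀ ℂ}

lemma exists_isWeightOneField (hd : 2 ≤ d) (hQ : IsModelPoly d (polar c))
    (hQr : cj (polar c) = polar c) (hnd : HolNondeg (polar c)) (hg1 : ∃ Xf ∈ gwQ n d c 1, Xf ≠ 0) :
    ∃ a l p, a ≠ 0 ∧ IsWeightOneField d (polar c) a l p := by
  obtain ⟨⟨F, G⟩, ⟨hX, hF, hG⟩, hne⟩ := hg1
  choose p l hp hl hFe using fun j => exists_eval_snoc_eq_of_wZ_eq_one hd (hF j)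
  obtain ⟨g₀, g₁, b, hg₀, hg₁, hGe⟩ := exists_eval_snoc_eq_of_wW_eq_one (by omega) hG
  obtain ⟨hb, rfl, rfl, hW⟩ := hQ.isWeightOneField hQr hl hp (by omega) (by omega) hg₀ hg₁
    (b := b) fun z u => by
      rw [← hX z u, hGe]
      simp only [hFe, eval_polar, eval_hField_polar, Finset.mul_sum, ← Finset.sum_add_distrib]
      congr! 3
      ring
  refine ⟨b.re, l, p, fun ha => hne ?_, hW⟩
  rw [ha] at hW
  obtain ⟨rfl, rfl⟩ := hW.eq_zero hQ hnd
  have hb0 : b = 0 := Complex.ext ha hb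
  exact Prod.ext (funext fun j => eq_zero_of_eval_snoc fun z w => by simp [hFe])
    (eq_zero_of_eval_snoc fun z w => by simp [hGe, hb0])

end WeightedExpansion

section Components

variable {σ : Type*}

lemma homogeneousComponent_mul_of_isHomogeneous {R : Type*} [CommSemiring R] (p : MvPolynomial σ R)
    {q : MvPolynomial σ R} {k : ℕ} (hq : q.IsHomogeneous k) (s : ℕ) :
    homogeneousComponent (s + k) (p * q) = homogeneousComponent s p * q := by
  classical
  let _ := gradedAlgebra (σ := σ) (R := R)
  rw [← decomposition.decompose'_apply, ← decomposition.decompose'_apply]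
  exact DirectSum.coe_decompose_mul_add_of_right_mem (homogeneousSubmodule σ R) hq

lemma homogeneousComponent_cj (P : Pol σ) (k : ℕ) :
    homogeneousComponent k (cj P) = cj (homogeneousComponent k P) := by
  have hmap (P : Pol σ) : homogeneousComponent k (map (starRingEnd ℂ) P) =
      map (starRingEnd ℂ) (homogeneousComponent k P) := by
    ext m
    rw [coeff_homogeneousComponent, coeff_map, coeff_map, coeff_homogeneousComponent,
      apply_ite (starRingEnd ℂ), map_zero]
  change homogeneousComponent k (rename Sum.swap (map (starRingEnd ℂ) P)) =
    rename Sum.swap (map (starRingEnd ℂ) (homogeneousComponent k P))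
  rw [← hmap]
  exact (rename_homogeneousComponent _ _).symm

variable [Finite σ]

lemma homogeneousComponent_hField (f : σ → Hol σ) {P : Pol σ} {d : ℕ} (hP : P.IsHomogeneous d)
    (s : ℕ) : homogeneousComponent (s + (d - 1)) (hField f P) =
      hField (fun j => homogeneousComponent s (f j)) P := by
  cases nonempty_fintype σ
  simp only [hField_eq_sum, map_sum, rename_homogeneousComponent,
    homogeneousComponent_mul_of_isHomogeneous _ hP.pderiv]

lemma reField_homogeneousComponent_eq_zero {f : σ → Hol σ} {Q : Pol σ} {d : ℕ}
    (hQ : Q.IsHomogeneous d) (hQr : cj Q = Q) (h : reField f Q = 0) (s : ℕ) :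
    reField (fun j => homogeneousComponent s (f j)) Q = 0 := by
  rw [reField_apply, ← cj_hField hQr, ← homogeneousComponent_hField f hQ, ← homogeneousComponent_cj,
    ← map_add, cj_hField hQr, ← reField_apply, h, map_zero]

end Components

end CRModel

open MvPolynomial CRModel

theorem stmt5_general (n d : ℕ) (hd : 2 ≤ d)
    (c : ((Fin n →₀ ℕ) × (Fin n →₀ ℕ)) →₀ ℂ)
    (hreal : ∀ α β : Fin n →₀ ℕ, c (α, β) = (starRingEnd ℂ) (c (β, α)))
    (hhom : ∀ p ∈ c.support, (p.1.sum fun _ e => e) + (p.2.sum fun _ e => e) = d)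
    (hnoplh : ∀ p ∈ c.support, p.1 ≠ 0 ∧ p.2 ≠ 0)
    (hnd : HND c)
    (hg1 : ∃ Xf ∈ gwQ n d c 1, Xf ≠ 0)
    (hnorot : ∀ A : Matrix (Fin n) (Fin n) ℂ, IsRotationQ c A → ReDiag A → A = 0) :
    ∀ f : Fin n → MvPolynomial (Fin n) ℂ,
      (∀ j, ∀ m ∈ (f j).support, 2 ≤ m.sum fun _ e => e) →
      (∀ z : Fin n → ℂ, (∑ j, MvPolynomial.eval z (f j) * QDeriv c j z).re = 0) →
      f = 0 := by
  intro f hf hfQ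
  have hQ := isModelPoly_polar hhom hnoplh
  have hnd' := holNondeg_polar hnd
  have hfQ' := (reField_polar_eq_zero_iff hreal).2 hfQ
  obtain ⟨a, l, p, ha, hW⟩ := exists_isWeightOneField hd hQ (cj_polar hreal) hnd' hg1
  have hcomp (s : ℕ) (j : Fin n) : homogeneousComponent s (f j) = 0 := by
    by_cases hs : 2 ≤ s
    · exact congrFun (hW.eq_zero_of_reField_eq_zero (by omega) hQ hnd'
        (fun A hA => hnorot A (isRotationQ_of_reField_linearField hreal hA)) ha hs
        (fun j => homogeneousComponent_isHomogeneous s (f j))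
        (reField_homogeneousComponent_eq_zero hQ.isHomogeneous (cj_polar hreal) hfQ' s)) j
    · exact homogeneousComponent_eq_zero' _ _ fun m hm h => hs (h ▸ hf j m hm)
  funext j
  rw [← sum_homogeneousComponent (f j)]
  exact Finset.sum_eq_zero fun s _ => hcomp s j

/-- If `M_Q` is holomorphically nondegenerate, `g₁ ≠ {0}` and `M_Q`
admits no nonzero real diagonal rotation, then `g_c = {0}`: every rigid
infinitesimal CR automorphism `Σ f_j(z) ∂/∂z_j`, all of whose monomials have degree
between `2` and `d`, is zero. -/
theorem stmt5 (n d : ℕ) (hd : 2 ≤ d)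
    (c : ((Fin n →₀ ℕ) × (Fin n →₀ ℕ)) →₀ ℂ)
    (hreal : ∀ α β : Fin n →₀ ℕ, c (α, β) = (starRingEnd ℂ) (c (β, α)))
    (hhom : ∀ p ∈ c.support, (p.1.sum fun _ e => e) + (p.2.sum fun _ e => e) = d)
    (hnoplh : ∀ p ∈ c.support, p.1 ≠ 0 ∧ p.2 ≠ 0)
    (hnd : HND c)
    (hg1 : ∃ Xf ∈ gwQ n d c 1, Xf ≠ 0)
    (hnorot : ∀ A : Matrix (Fin n) (Fin n) ℂ, IsRotationQ c A → ReDiag A → A = 0) :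
    ∀ f : Fin n → MvPolynomial (Fin n) ℂ,
      (∀ j, ∀ m ∈ (f j).support, 2 ≤ (m.sum fun _ e => e) ∧ (m.sum fun _ e => e) ≤ d) →
      (∀ z : Fin n → ℂ, (∑ j, MvPolynomial.eval z (f j) * QDeriv c j z).re = 0) →
      f = 0 := by
  intro f hf
  exact stmt5_general n d hd c hreal hhom hnoplh hnd hg1 hnorot f fun j m hm => (hf j m hm).1
end
end

section
/- Let P = c_P z₁^{α₁}z₂^{α₂}z₃^{α₃}, Q = c_Q z₁^{β₁}z₂^{β₂}z₃^{β₃}, R = c_R z₁^{γ₁}z₂^{γ₂}z₃^{γ₃} be monomials with nonzero coefficients c_P, c_Q, c_R ∈ ℂ, with deg P + deg Q = 2·deg R, deg R ≥ 2, and det[[α₁,β₁,γ₁],[α₂,β₂,γ₂],[α₃,β₃,γ₃]] ≠ 0 (holomorphic nondegeneracy). If dim_ℝ g_c = 0, then 6 ≤ dim_ℝ g ≤ 9. Furthermore, there exists such a choice of monomials P, Q, R (with nonzero coefficients, deg P + deg Q = 2·deg R, deg R ≥ 2 and nonzero exponent determinant) for which dim_ℝ g_c = 0 and dim_ℝ g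 = 9. -/
open MvPolynomial Complex

noncomputable section

/-- `Φ(z) = P(z)·conj(Q(z)) + Q(z)·conj(P(z)) + R(z)·conj(R(z))`, so that the model
hypersurface is `M = {(z,w) : Im w = Φ(z)}`. -/
def Phi (P Q R : MvPolynomial (Fin 3) ℂ) (z : Fin 3 → ℂ) : ℂ :=
  eval z P * (starRingEnd ℂ) (eval z Q) + eval z Q * (starRingEnd ℂ) (eval z P) +
    eval z R * (starRingEnd ℂ) (eval z R)

/-- `Φ_j(z) = (∂P/∂z_j)(z)·conj(Q(z)) + (∂Q/∂z_j)(z)·conj(P(z)) + (∂R/∂z_j)(z)·conj(R(z))`. -/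
def PhiD (P Q R : MvPolynomial (Fin 3) ℂ) (j : Fin 3) (z : Fin 3 → ℂ) : ℂ :=
  eval z (pderiv j P) * (starRingEnd ℂ) (eval z Q) +
    eval z (pderiv j Q) * (starRingEnd ℂ) (eval z P) +
    eval z (pderiv j R) * (starRingEnd ℂ) (eval z R)

/-- The monomial `c·z₁^{e₁} z₂^{e₂} z₃^{e₃}`. -/
def mon (c : ℂ) (e : Fin 3 → ℕ) : MvPolynomial (Fin 3) ℂ :=
  C c * X 0 ^ e 0 * X 1 ^ e 1 * X 2 ^ e 2

/-- Total degree of the exponent vector `e`. -/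
def degE (e : Fin 3 → ℕ) : ℕ := e 0 + e 1 + e 2

/-- The determinant of the 3×3 matrix whose columns are the exponent vectors
`a`, `b`, `g` of the three monomials. -/
def edet (a b g : Fin 3 → ℕ) : ℤ :=
  Matrix.det !![(a 0 : ℤ), (b 0 : ℤ), (g 0 : ℤ);
                (a 1 : ℤ), (b 1 : ℤ), (g 1 : ℤ);
                (a 2 : ℤ), (b 2 : ℤ), (g 2 : ℤ)]

/-- The polynomial vector field `Σ F_j ∂/∂z_j + G ∂/∂w` is an infinitesimal CR
automorphism of `M = {Im w = Φ(z)}`. -/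
def IsInfCR (P Q R : MvPolynomial (Fin 3) ℂ)
    (F : Fin 3 → MvPolynomial (Fin 4) ℂ) (G : MvPolynomial (Fin 4) ℂ) : Prop :=
  ∀ (z : Fin 3 → ℂ) (u : ℝ),
    (eval (Fin.snoc z ((u : ℂ) + Complex.I * Phi P Q R z)) G / (2 * Complex.I) -
      ∑ j, eval (Fin.snoc z ((u : ℂ) + Complex.I * Phi P Q R z)) (F j) * PhiD P Q R j z).re = 0

/-- `g_c`: rigid infinitesimal CR automorphisms `Σ f_j(z) ∂/∂z_j` of `M` all of
whose monomials have total degree at least `2` and at most `d`. -/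
def gcSet (P Q R : MvPolynomial (Fin 3) ℂ) (d : ℕ) : Set (Fin 3 → MvPolynomial (Fin 3) ℂ) :=
  {f | (∀ j, ∀ m ∈ (f j).support, 2 ≤ (m.sum fun _ e => e) ∧ (m.sum fun _ e => e) ≤ d) ∧
       ∀ z : Fin 3 → ℂ, (∑ j, eval z (f j) * PhiD P Q R j z).re = 0}

/-- `g`: the real vector space (here, the set) of all polynomial infinitesimal CR
automorphisms of `M`. -/
def gSet (P Q R : MvPolynomial (Fin 3) ℂ) :
    Set ((Fin 3 → MvPolynomial (Fin 4) ℂ) × MvPolynomial (Fin 4) ℂ) :=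
  {Xf | IsInfCR P Q R Xf.1 Xf.2}

open scoped ComplexConjugate

/-!
The defining equation of an infinitesimal CR automorphism polarizes to an identity on the
complexification `w - t = 2iΦ(z, y)` of `M`. Since the exponents are linearly independent, the
monomials `m = (P, Q, R)` behave like independent variables there. Comparing coefficients shows
that the field acts on `m` by a matrix, up to terms which vanish if `g_c = 0`; then `G` is a real
quadratic polynomial `g₀ + g₁ w + g₂ w²` and the action is `m ↦ (g₂ w + M) m` with a constant
matrix `M` satisfying `M + M* = g₁`, where `*` is the adjoint for the Hermitian form of the model.
Such data have 12 real parameters.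

If `deg P ≠ deg Q`, an off-diagonal entry of `M` in the row of the monomial of smaller degree
would raise the degree and hence come from an element of `g_c`. If all three degrees agree, then
some row of `M` is diagonal for every field: otherwise each monomial would contain a variable to
the first power that occurs in no other monomial, and the degree would be one. In either case a
row of `M` is diagonal, which leaves nine parameters. The diagonal matrices are always realised by
weighted Euler fields, and with `g₀` and `g₂` they contribute six parameters.
-/

open scoped ComplexConjugate

section Polynomials

variable {σ τ : Type*}

lemma eval_aeval_eq_eval (v : τ → ℂ) (f : σ → MvPolynomial τ ℂ) (p : MvPolynomial σ ℂ) :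
    eval v (aeval f p) = eval (fun i => eval v (f i)) p :=
  eval₂Hom_bind₁ (RingHom.id ℂ) v f p

lemma eval_map_conj (v : σ → ℂ) (p : MvPolynomial σ ℂ) :
    eval v (map (starRingEnd ℂ) p) = conj (eval (fun i => conj (v i)) p) := by
  rw [eval_map, eval, coe_eval₂Hom, eval₂_comp_left (starRingEnd ℂ)]
  congr 1
  ext i
  exact (conj_conj _).symm

lemma eq_zero_of_forall_eval_conj_eq_zero {p : MvPolynomial (σ ⊕ σ ⊕ τ) ℂ}
    (h : ∀ (z : σ → ℂ) (u : τ → ℝ),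
      eval (Sum.elim z (Sum.elim (fun i => conj (z i)) fun i => (u i : ℂ))) p = 0) : p = 0 := by
  let s : σ ⊕ σ ⊕ τ → MvPolynomial (σ ⊕ σ ⊕ τ) ℂ :=
    Sum.elim (fun i => X (.inl i) + C I * X (.inr (.inl i)))
      (Sum.elim (fun i => X (.inl i) - C I * X (.inr (.inl i))) fun i => X (.inr (.inr i)))
  have hs : aeval s p = 0 := by
    refine funext_set (fun _ => Set.range ((↑) : ℝ → ℂ))
      (fun _ => Set.infinite_range_of_injective ofReal_injective) fun x hx => ?_
    choose r hr using fun i => hx i (Set.mem_univ i)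
    rw [eval_aeval_eq_eval, map_zero,
      ← h (fun i => x (.inl i) + I * x (.inr (.inl i))) (fun i => r (.inr (.inr i)))]
    congr 2
    ext i
    rcases i with i | i | i <;> simp [s, ← hr, sub_eq_add_neg]
  refine MvPolynomial.funext fun v => ?_
  have hv := congrArg (eval (Sum.elim (fun i => (v (.inl i) + v (.inr (.inl i))) / 2)
    (Sum.elim (fun i => (v (.inl i) - v (.inr (.inl i))) / (2 * I))
      fun i => v (.inr (.inr i))))) hs
  rw [eval_aeval_eq_eval, map_zero] at hv
  rw [map_zero, ← hv]
  congr 2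
  ext i
  rcases i with i | i | i <;> simp [s] <;> field_simp <;> ring

lemma coeff_linearCombination_aeval_monomial {R : Type*} [CommSemiring R] {e : σ → τ →₀ ℕ}
    (he : LinearIndependent ℕ e) (n : σ →₀ ℕ) (p : MvPolynomial σ R) :
    coeff (Finsupp.linearCombination ℕ e n) (aeval (fun a => monomial (e a) (1 : R)) p) =
      coeff n p := by
  classical
  induction p using MvPolynomial.induction_on' with
  | add p q hp hq => simp only [map_add, coeff_add, hp, hq]
  | monomial m r =>
    have hm : aeval (fun a => monomial (e a) (1 : R)) (monomial m r) =
        monomial (Finsupp.linearCombination ℕ e m) r := by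
      simp only [aeval_monomial, monomial_pow, one_pow, algebraMap_eq, Finsupp.prod,
        ← monomial_sum_one, C_mul_monomial, mul_one, Finsupp.linearCombination_apply, Finsupp.sum]
    simp only [hm, coeff_monomial, he.eq_iff]

section AffineSubstitution

variable [Fintype σ] (p : Polynomial ℂ) (t : ℂ) (v : σ → ℂ) (a : σ)

lemma constantCoeff_aeval_affine :
    constantCoeff (Polynomial.aeval (C t + ∑ b, C (v b) * X b : MvPolynomial σ ℂ) p) =
      p.eval t := by
  rw [Polynomial.aeval_def, Polynomial.hom_eval₂]
  simp [algebraMap_eq, Polynomial.eval₂_eq_eval_map, Polynomial.map_id]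

lemma coeff_single_aeval_affine :
    coeff (Finsupp.single a 1)
        (Polynomial.aeval (C t + ∑ b, C (v b) * X b : MvPolynomial σ ℂ) p) =
      v a * p.derivative.eval t := by
  classical
  rw [← constantCoeff_aeval_affine p.derivative t v, mul_comm]
  have hderiv : pderiv a (C t + ∑ b, C (v b) * X b : MvPolynomial σ ℂ) = C (v a) := by
    simp [pderiv_X, Pi.single_apply, Derivation.leibniz]
  have h := coeff_pderiv (i := a)
    (Polynomial.aeval (C t + ∑ b, C (v b) * X b : MvPolynomial σ ℂ) p) 0
  rw [Derivation.map_aeval, hderiv, smul_eq_mul, mul_comm, coeff_C_mul] at h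
  simpa [constantCoeff_eq, mul_comm] using h.symm

lemma coeff_single_aeval_affine_mul_X (b : σ) [DecidableEq σ] :
    coeff (Finsupp.single a 1)
        (Polynomial.aeval (C t + ∑ b, C (v b) * X b : MvPolynomial σ ℂ) p * X b) =
      if a = b then p.eval t else 0 := by
  rcases eq_or_ne a b with rfl | hab
  · rw [if_pos rfl, coeff_mul_X', if_pos (by simp), tsub_self, ← constantCoeff_eq,
      constantCoeff_aeval_affine]
  · rw [if_neg hab, coeff_mul_X', if_neg (by simpa using hab.symm)]

end AffineSubstitution

end Polynomials

section Evaluation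

variable {n : ℕ}

/-- Evaluation of a polynomial in the variables `(z, w)`, where `w` is the last variable. -/
def evalSnoc (z : Fin n → ℂ) (w : ℂ) : MvPolynomial (Fin (n + 1)) ℂ →+* ℂ :=
  eval (Fin.snoc z w : Fin (n + 1) → ℂ)

lemma evalSnoc_rename_castSucc (z : Fin n → ℂ) (w : ℂ) (p : MvPolynomial (Fin n) ℂ) :
    evalSnoc z w (rename Fin.castSucc p) = eval z p := by
  rw [evalSnoc, eval_rename]
  congr 2
  ext i
  simp

lemma evalSnoc_map_conj (z : Fin n → ℂ) (w : ℂ) (p : MvPolynomial (Fin (n + 1)) ℂ) :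
    evalSnoc z w (map (starRingEnd ℂ) p) =
      conj (evalSnoc (fun i => conj (z i)) (conj w) p) := by
  rw [evalSnoc, eval_map_conj, evalSnoc]
  congr 3
  ext i
  cases i using Fin.lastCases <;> simp

lemma eval_rename_inl (z y : Fin n → ℂ) (w t : ℂ) (p : MvPolynomial (Fin (n + 1)) ℂ) :
    eval (Sum.elim (Fin.snoc z w) (Fin.snoc y t) : Fin (n + 1) ⊕ Fin (n + 1) → ℂ)
      (rename .inl p) = evalSnoc z w p := by
  rw [eval_rename, Sum.elim_comp_inl, evalSnoc]

lemma eval_rename_inr_map_conj (z y : Fin n → ℂ) (w t : ℂ) (p : MvPolynomial (Fin (n + 1)) ℂ) :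
    eval (Sum.elim (Fin.snoc z w) (Fin.snoc y t) : Fin (n + 1) ⊕ Fin (n + 1) → ℂ)
      (rename .inr (map (starRingEnd ℂ) p)) =
        conj (evalSnoc (fun i => conj (y i)) (conj t) p) := by
  rw [eval_rename, Sum.elim_comp_inr, ← evalSnoc, evalSnoc_map_conj]

lemma evalSnoc_ext {p q : MvPolynomial (Fin (n + 1)) ℂ}
    (h : ∀ z w, evalSnoc z w p = evalSnoc z w q) : p = q :=
  MvPolynomial.funext fun v => by
    simpa only [evalSnoc, Fin.snoc_init_self] using h (Fin.init v) (v (Fin.last n))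

/-- Polynomials on `ℂⁿ × ℂ` and its conjugate cannot tell the hypersurface `Im w = φ(z, z̄)`
from its complexification `w - t = 2iφ(z, y)`. -/
lemma eval_eq_zero_of_forall_hypersurface {φ : MvPolynomial (Fin n ⊕ Fin n) ℂ}
    {H : MvPolynomial (Fin (n + 1) ⊕ Fin (n + 1)) ℂ}
    (h : ∀ (z : Fin n → ℂ) (u : ℝ),
      eval (Sum.elim (Fin.snoc z (u + I * eval (Sum.elim z fun i => conj (z i)) φ))
        (Fin.snoc (fun i => conj (z i))
          (u - I * eval (Sum.elim z fun i => conj (z i)) φ)) : Fin (n + 1) ⊕ Fin (n + 1) → ℂ) H = 0)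
    {z y : Fin n → ℂ} {w t : ℂ} (hwt : w - t = 2 * I * eval (Sum.elim z y) φ) :
    eval (Sum.elim (Fin.snoc z w) (Fin.snoc y t) : Fin (n + 1) ⊕ Fin (n + 1) → ℂ) H = 0 := by
  let A := MvPolynomial (Fin n ⊕ Fin n ⊕ Unit) ℂ
  let U : A := X (.inr (.inr ()))
  let φ' : A := rename (Sum.map id .inl) φ
  let s : Fin (n + 1) ⊕ Fin (n + 1) → A :=
    Sum.elim (Fin.snoc (fun i => X (.inl i)) (U + C I * φ'))
      (Fin.snoc (fun i => X (.inr (.inl i))) (U - C I * φ'))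
  have eval_subst (z y : Fin n → ℂ) (u : Unit → ℂ) :
      eval (Sum.elim z (Sum.elim y u)) (aeval s H) =
        eval (Sum.elim (Fin.snoc z (u () + I * eval (Sum.elim z y) φ))
          (Fin.snoc y (u () - I * eval (Sum.elim z y) φ)) : Fin (n + 1) ⊕ Fin (n + 1) → ℂ) H := by
    have hφ : eval (Sum.elim z (Sum.elim y u)) φ' = eval (Sum.elim z y) φ := by
      rw [eval_rename]
      congr 2
      ext i
      cases i <;> rfl
    rw [eval_aeval_eq_eval]
    congr 2
    ext i
    rcases i with i | i <;> cases i using Fin.lastCases <;> simp [s, U, hφ]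
  have hs : aeval s H = 0 := eq_zero_of_forall_eval_conj_eq_zero fun z u => by
    rw [eval_subst, h]
  have hzero := eval_subst z y fun _ => t + I * eval (Sum.elim z y) φ
  rw [hs, map_zero] at hzero
  rw [hzero]
  congr 4
  · linear_combination hwt
  · ring

end Evaluation

section Fields

variable {n : ℕ}

/-- Specialization of the last variable `w` of a polynomial in `(z, w)`. -/
def specLast (w : ℂ) : MvPolynomial (Fin (n + 1)) ℂ →ₐ[ℂ] MvPolynomial (Fin n) ℂ :=
  aeval (Fin.snoc X (C w) : Fin (n + 1) → MvPolynomial (Fin n) ℂ)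

/-- Specialization of the variables `z` of a polynomial in `(z, w)`. -/
def specInit (z : Fin n → ℂ) : MvPolynomial (Fin (n + 1)) ℂ →ₐ[ℂ] Polynomial ℂ :=
  aeval (Fin.snoc (fun i => Polynomial.C (z i)) Polynomial.X : Fin (n + 1) → Polynomial ℂ)

lemma eval_specLast (z : Fin n → ℂ) (w : ℂ) (p : MvPolynomial (Fin (n + 1)) ℂ) :
    eval z (specLast w p) = evalSnoc z w p := by
  rw [specLast, eval_aeval_eq_eval, evalSnoc]
  congr 2
  ext i
  cases i using Fin.lastCases <;> simp

lemma eval_specInit (z : Fin n → ℂ) (w : ℂ) (p : MvPolynomial (Fin (n + 1)) ℂ) :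
    (specInit z p).eval w = evalSnoc z w p := by
  have hcomp : (Polynomial.aeval w).comp (specInit z) =
      aeval (Fin.snoc z w : Fin (n + 1) → ℂ) := by
    refine MvPolynomial.algHom_ext fun i => ?_
    cases i using Fin.lastCases <;> simp [specInit]
  exact DFunLike.congr_fun hcomp p

/-- The derivative of a polynomial in `z` along the rigid vector field `∑ j, f j ∂/∂z_j`. -/
def rigidDeriv (f : Fin n → MvPolynomial (Fin n) ℂ) (p : MvPolynomial (Fin n) ℂ) :
    MvPolynomial (Fin n) ℂ :=
  ∑ j, f j * pderiv j p

/-- The derivative of a polynomial in `z` along the vector field `∑ j, F j ∂/∂z_j`, whose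
coefficients are polynomials in `(z, w)`. -/
def fieldDeriv (F : Fin n → MvPolynomial (Fin (n + 1)) ℂ) (p : MvPolynomial (Fin n) ℂ) :
    MvPolynomial (Fin (n + 1)) ℂ :=
  ∑ j, F j * rename Fin.castSucc (pderiv j p)

lemma evalSnoc_fieldDeriv (F : Fin n → MvPolynomial (Fin (n + 1)) ℂ) (p : MvPolynomial (Fin n) ℂ)
    (z : Fin n → ℂ) (w : ℂ) :
    evalSnoc z w (fieldDeriv F p) = ∑ j, evalSnoc z w (F j) * eval z (pderiv j p) := by
  simp only [fieldDeriv, map_sum, map_mul, evalSnoc_rename_castSucc]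

lemma specLast_fieldDeriv (w : ℂ) (F : Fin n → MvPolynomial (Fin (n + 1)) ℂ)
    (p : MvPolynomial (Fin n) ℂ) :
    specLast w (fieldDeriv F p) = rigidDeriv (fun j => specLast w (F j)) p :=
  MvPolynomial.funext fun z => by
    simp only [eval_specLast, evalSnoc_fieldDeriv, rigidDeriv, map_sum, map_mul]

end Fields

/-- A monomial model in `ℂⁿ × ℂ`: the hypersurface `Im w = ∑ a, m_a(z) conj (m_{a'}(z))` for `n`
monomials `m_a` with linearly independent exponents, paired by an involution `a ↦ a'`. -/
structure MonomialModel (n : ℕ) where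
  coef : Fin n → ℂ
  expo : Fin n → Fin n →₀ ℕ
  pair : Equiv.Perm (Fin n)
  pair_pair : Function.Involutive pair
  coef_ne_zero : ∀ a, coef a ≠ 0
  det_ne_zero : (Matrix.of fun a j => (expo a j : ℂ)).det ≠ 0

namespace MonomialModel

section PolarizedEquation

variable {n : ℕ} (S : MonomialModel n)

/-- The defining monomials of the model. -/
def mono (a : Fin n) : MvPolynomial (Fin n) ℂ := monomial (S.expo a) (S.coef a)

/-- The polarization `Φ(z, ȳ)` of the defining function of the model. -/
def pairing (z y : Fin n → ℂ) : ℂ := ∑ a, eval z (S.mono a) * conj (eval y (S.mono (S.pair a)))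

/-- The vector field `∑ j, F j ∂/∂z_j + G ∂/∂w` is an infinitesimal CR automorphism of the
model. -/
def IsCR (F : Fin n → MvPolynomial (Fin (n + 1)) ℂ) (G : MvPolynomial (Fin (n + 1)) ℂ) : Prop :=
  ∀ (z : Fin n → ℂ) (u : ℝ),
    (evalSnoc z (u + I * S.pairing z z) G / (2 * I) -
      ∑ a, evalSnoc z (u + I * S.pairing z z) (fieldDeriv F (S.mono a)) *
        conj (eval z (S.mono (S.pair a)))).re = 0

variable {S} {F : Fin n → MvPolynomial (Fin (n + 1)) ℂ} {G : MvPolynomial (Fin (n + 1)) ℂ}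

lemma linearIndependent_expo (S : MonomialModel n) : LinearIndependent ℕ S.expo := by
  rw [Fintype.linearIndependent_iffₛ]
  intro k l hkl a
  have hcast : Matrix.vecMul (fun a => (k a : ℂ) - l a)
      (Matrix.of fun a j => (S.expo a j : ℂ)) = 0 := by
    ext j
    have hj := congrArg (Nat.cast : ℕ → ℂ) (DFunLike.congr_fun hkl j)
    simp only [Finsupp.coe_finsetSum, Finset.sum_apply, Finsupp.coe_smul, Pi.smul_apply,
      smul_eq_mul, Nat.cast_sum, Nat.cast_mul] at hj
    simp [Matrix.vecMul, dotProduct, sub_mul, hj]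
  simpa [sub_eq_zero] using congrFun (Matrix.eq_zero_of_vecMul_eq_zero S.det_ne_zero hcast) a

lemma expo_injective (S : MonomialModel n) : Function.Injective S.expo :=
  S.linearIndependent_expo.injective

lemma expo_ne_zero (S : MonomialModel n) (a : Fin n) : S.expo a ≠ 0 :=
  S.linearIndependent_expo.ne_zero a

lemma sum_pair_right {M : Type*} [AddCommMonoid M] (f : Fin n → Fin n → M) :
    ∑ a, f a (S.pair a) = ∑ a, f (S.pair a) a := by
  refine (Equiv.sum_comp S.pair _).symm.trans ?_
  exact Finset.sum_congr rfl fun a _ => by rw [S.pair_pair]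

lemma conj_pairing (z y : Fin n → ℂ) : conj (S.pairing z y) = S.pairing y z := by
  simp only [pairing, map_sum, map_mul, conj_conj]
  rw [sum_pair_right (f := fun a b => conj (eval z (S.mono a)) * eval y (S.mono b))]
  simp only [mul_comm]

lemma eval_zero_mono (a : Fin n) : eval 0 (S.mono a) = 0 := by
  simp [mono, constantCoeff_monomial, S.expo_ne_zero a]

/-- In logarithmic coordinates the monomials are given by the invertible exponent matrix. -/
lemma exists_eval_mono_eq (S : MonomialModel n) {v : Fin n → ℂ} (hv : ∀ a, v a ≠ 0) :
    ∃ z, ∀ a, eval z (S.mono a) = v a := by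
  let E : Matrix (Fin n) (Fin n) ℂ := Matrix.of fun a j => (S.expo a j : ℂ)
  let b : Fin n → ℂ := fun a => log (v a / S.coef a)
  have hb : E.mulVec (E⁻¹.mulVec b) = b := by
    rw [Matrix.mulVec_mulVec, Matrix.mul_nonsing_inv _ (isUnit_iff_ne_zero.mpr S.det_ne_zero),
      Matrix.one_mulVec]
  refine ⟨fun j => Complex.exp (E⁻¹.mulVec b j), fun a => ?_⟩
  have ha : ∑ j, S.expo a j * E⁻¹.mulVec b j = b a := congrFun hb a
  rw [mono, eval_monomial, Finsupp.prod_fintype _ _ (by simp)]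
  simp only [← Complex.exp_nat_mul]
  rw [← Complex.exp_sum, ha, exp_log (div_ne_zero (hv a) (S.coef_ne_zero a)),
    mul_div_cancel₀ _ (S.coef_ne_zero a)]

lemma IsCR.eq_sum_add_sum_conj (h : S.IsCR F G) (z : Fin n → ℂ) (u : ℝ) {w : ℂ}
    (hw : w = u + I * S.pairing z z) :
    (evalSnoc z w G - conj (evalSnoc z w G)) / (2 * I) =
      ∑ a, evalSnoc z w (fieldDeriv F (S.mono a)) * conj (eval z (S.mono (S.pair a))) +
      ∑ a, conj (evalSnoc z w (fieldDeriv F (S.mono a))) * eval z (S.mono (S.pair a)) := by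
  have hre := Complex.add_conj (evalSnoc z w G / (2 * I) -
    ∑ a, evalSnoc z w (fieldDeriv F (S.mono a)) * conj (eval z (S.mono (S.pair a))))
  rw [hw, h z u, ← hw] at hre
  simp only [map_sub, map_div₀, map_mul, map_sum, conj_conj, conj_I, map_ofNat, mul_zero,
    ofReal_zero] at hre
  linear_combination hre

theorem IsCR.polarize (h : S.IsCR F G) {z y : Fin n → ℂ} {w t : ℂ}
    (hwt : w - conj t = 2 * I * S.pairing z y) :
    (evalSnoc z w G - conj (evalSnoc y t G)) / (2 * I) =
      ∑ a, evalSnoc z w (fieldDeriv F (S.mono a)) * conj (eval y (S.mono (S.pair a))) +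
      ∑ a, conj (evalSnoc y t (fieldDeriv F (S.mono a))) * eval z (S.mono (S.pair a)) := by
  let hol : MvPolynomial (Fin (n + 1)) ℂ → MvPolynomial (Fin (n + 1) ⊕ Fin (n + 1)) ℂ :=
    fun p => rename .inl p
  let anti : MvPolynomial (Fin (n + 1)) ℂ → MvPolynomial (Fin (n + 1) ⊕ Fin (n + 1)) ℂ :=
    fun p => rename .inr (map (starRingEnd ℂ) p)
  let m (a : Fin n) : MvPolynomial (Fin (n + 1)) ℂ := rename Fin.castSucc (S.mono a)
  let H := C (1 / (2 * I)) * (hol G - anti G) -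
    (∑ a, hol (fieldDeriv F (S.mono a)) * anti (m (S.pair a)) +
      ∑ a, anti (fieldDeriv F (S.mono a)) * hol (m (S.pair a)))
  let φ : MvPolynomial (Fin n ⊕ Fin n) ℂ :=
    ∑ a, rename .inl (S.mono a) * rename .inr (map (starRingEnd ℂ) (S.mono (S.pair a)))
  have eval_φ (z y : Fin n → ℂ) :
      eval (Sum.elim z y) φ = S.pairing z fun i => conj (y i) := by
    simp only [φ, pairing, map_sum, map_mul, eval_rename, eval_map_conj, Sum.elim_comp_inl,
      Sum.elim_comp_inr]
  have eval_H (z y : Fin n → ℂ) (w t : ℂ) :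
      eval (Sum.elim (Fin.snoc z w) (Fin.snoc (fun i => conj (y i)) (conj t)) :
          Fin (n + 1) ⊕ Fin (n + 1) → ℂ) H =
        (evalSnoc z w G - conj (evalSnoc y t G)) / (2 * I) -
        (∑ a, evalSnoc z w (fieldDeriv F (S.mono a)) * conj (eval y (S.mono (S.pair a))) +
          ∑ a, conj (evalSnoc y t (fieldDeriv F (S.mono a))) * eval z (S.mono (S.pair a))) := by
    simp only [H, m, hol, anti, map_sub, map_add, map_sum, map_mul, eval_C, eval_rename_inl,
      eval_rename_inr_map_conj, evalSnoc_rename_castSucc, conj_conj]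
    ring
  have hH := eval_eq_zero_of_forall_hypersurface (H := H) (φ := φ) (z := z) (w := w)
    (y := fun i => conj (y i)) (t := conj t) (fun x u => ?_)
    (by simpa only [eval_φ, conj_conj] using hwt)
  · rw [eval_H] at hH
    exact sub_eq_zero.mp hH
  · have hreal : conj (S.pairing x x) = S.pairing x x := conj_pairing x x
    have hconj : (u : ℂ) - I * S.pairing x x = conj ((u : ℂ) + I * S.pairing x x) := by
      simp [hreal, sub_eq_add_neg]
    simp only [eval_φ, conj_conj]
    rw [hconj, eval_H, sub_eq_zero]
    exact h.eq_sum_add_sum_conj x u rfl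

end PolarizedEquation

section SegrePoint

variable {n : ℕ} {S : MonomialModel n} {F : Fin n → MvPolynomial (Fin (n + 1)) ℂ}
  {G : MvPolynomial (Fin (n + 1)) ℂ}

lemma conj_eval_conj_mono (x : Fin n → ℂ) (a : Fin n) :
    conj (eval (fun i => conj (x i)) (S.mono a)) =
      conj (S.coef a) * eval x (monomial (S.expo a) 1) := by
  simp [mono, eval_monomial, Finsupp.prod, map_prod]

/-- The point `t + 2iΦ(z, ȳ)` as an affine function of the normalized monomials of `ȳ`. -/
def segrePoint (S : MonomialModel n) (z : Fin n → ℂ) (t : ℂ) : MvPolynomial (Fin n) ℂ :=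
  C t + ∑ b, C (2 * I * (eval z (S.mono (S.pair b)) * conj (S.coef b))) * X b

lemma eval_segrePoint (z x : Fin n → ℂ) (t : ℂ) :
    eval (fun b => eval x (monomial (S.expo b) 1)) (S.segrePoint z t) =
      t + 2 * I * S.pairing z fun i => conj (x i) := by
  rw [pairing, sum_pair_right (f := fun b c => eval z (S.mono b) *
    conj (eval (fun i => conj (x i)) (S.mono c)))]
  simp only [segrePoint, conj_eval_conj_mono, map_add, map_sum, map_mul, eval_C, eval_X,
    Finset.mul_sum, mul_assoc]

lemma IsCR.aeval_segrePoint (h : S.IsCR F G) (z : Fin n → ℂ) (t : ℂ) :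
    aeval (fun b => monomial (S.expo b) (1 : ℂ))
        (C (1 / (2 * I)) * Polynomial.aeval (S.segrePoint z t) (specInit z G) -
          ∑ b, C (conj (S.coef (S.pair b))) * (Polynomial.aeval (S.segrePoint z t)
            (specInit z (fieldDeriv F (S.mono b))) * X (S.pair b))) =
      C (1 / (2 * I)) * specLast t (map (starRingEnd ℂ) G) +
        ∑ b, C (eval z (S.mono (S.pair b))) *
          specLast t (map (starRingEnd ℂ) (fieldDeriv F (S.mono b))) := by
  refine MvPolynomial.funext fun x => ?_
  let ξ : Fin n → ℂ := fun b => eval x (monomial (S.expo b) 1)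
  let w := eval ξ (S.segrePoint z t)
  have eval_aeval (q : Polynomial ℂ) :
      eval ξ (Polynomial.aeval (S.segrePoint z t) q) = q.eval w := by
    simpa using (Polynomial.aeval_algHom_apply (aeval ξ) (S.segrePoint z t) q).symm
  have hp := h.polarize (z := z) (y := fun i => conj (x i)) (w := w) (t := conj t)
    (by simp only [w, ξ, eval_segrePoint, conj_conj]; ring)
  rw [eval_aeval_eq_eval]
  change eval ξ _ = _
  simp only [map_sub, map_add, map_sum, map_mul, eval_C, eval_X, eval_aeval, eval_specInit,
    eval_specLast, evalSnoc_map_conj]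
  simp only [conj_eval_conj_mono, ← mul_assoc, mul_comm (conj (evalSnoc _ _ _)),
    mul_comm (conj (S.coef _))] at hp ⊢
  linear_combination hp

/-- Comparing the coefficients of `conj (m_{a'}(y))` in the polarized equation, one finds that
for fixed `w` a CR automorphism acts on `m_a` by an affine expression in the monomials, up to a
term coming from `∂G/∂w`. -/
lemma IsCR.exists_fieldDeriv_eq (h : S.IsCR F G) (w : ℂ) (a : Fin n) :
    ∃ (κ : ℂ) (l : Fin n → ℂ), ∀ z, evalSnoc z w (fieldDeriv F (S.mono a)) =
      (specInit z G).derivative.eval w * eval z (S.mono a) + κ + ∑ b, l b * eval z (S.mono b) := by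
  let e := S.expo (S.pair a)
  let k := conj (S.coef (S.pair a))
  let Gbar := specLast w (map (starRingEnd ℂ) G)
  let Dbar (b : Fin n) := specLast w (map (starRingEnd ℂ) (fieldDeriv F (S.mono b)))
  have hk : k ≠ 0 := (map_ne_zero _).mpr (S.coef_ne_zero _)
  refine ⟨-(coeff e Gbar / (2 * I * k)), fun b => -(coeff e (Dbar (S.pair b)) / k), fun z => ?_⟩
  have hcoeff := congrArg (coeff (Finsupp.linearCombination ℕ S.expo
    (Finsupp.single (S.pair a) 1))) (h.aeval_segrePoint z w)
  rw [coeff_linearCombination_aeval_monomial S.linearIndependent_expo,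
    Finsupp.linearCombination_single, one_smul] at hcoeff
  simp only [segrePoint, coeff_sub, coeff_add, coeff_sum, coeff_C_mul, coeff_single_aeval_affine,
    coeff_single_aeval_affine_mul_X, S.pair.injective.eq_iff, eval_specInit, mul_ite, mul_zero,
    Finset.sum_ite_eq, Finset.mem_univ, if_true, S.pair_pair a] at hcoeff
  rw [← Equiv.sum_comp S.pair]
  simp only [S.pair_pair _, neg_mul, div_mul_eq_mul_div, Finset.sum_neg_distrib, ← Finset.sum_div]
  simp only [mul_comm (coeff _ _) (eval _ _)]
  change 1 / (2 * I) * (2 * I * (eval z (S.mono a) * k) * _) - k * _ =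
    1 / (2 * I) * coeff e Gbar + ∑ b, eval z (S.mono (S.pair b)) * coeff e (Dbar b) at hcoeff
  field_simp at hcoeff ⊢
  linear_combination -hcoeff

end SegrePoint

end MonomialModel

section MonomialDerivatives

variable {n : ℕ}

lemma coeff_rigidDeriv_monomial (f : Fin n → MvPolynomial (Fin n) ℂ) (e m : Fin n →₀ ℕ) (c : ℂ) :
    coeff m (rigidDeriv f (monomial e c)) =
      ∑ j, if e - Finsupp.single j 1 ≤ m then
        coeff (m - (e - Finsupp.single j 1)) (f j) * (c * e j) else 0 := by
  simp only [rigidDeriv, pderiv_monomial, coeff_sum, coeff_mul_monomial']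

lemma coeff_tsub_single_add_rigidDeriv_monomial (f : Fin n → MvPolynomial (Fin n) ℂ)
    {e m : Fin n →₀ ℕ} (c : ℂ) {k : Fin n} (he : e k ≠ 0) (hm : m k = 0) :
    coeff (e - Finsupp.single k 1 + m) (rigidDeriv f (monomial e c)) =
      coeff m (f k) * (c * e k) := by
  rw [coeff_rigidDeriv_monomial, Finset.sum_eq_single k]
  · rw [if_pos le_self_add, add_tsub_cancel_left]
  · intro j _ hj
    refine if_neg fun hle => ?_
    have hk := hle k
    simp only [Finsupp.tsub_apply, Finsupp.add_apply, Finsupp.single_eq_same, hm,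
      Finsupp.single_eq_of_ne hj.symm] at hk
    omega
  · simp

lemma eval_zero_pderiv_monomial {e : Fin n →₀ ℕ} (he : 2 ≤ e.degree) (c : ℂ) (j : Fin n) :
    eval 0 (pderiv j (monomial e c)) = 0 := by
  classical
  rw [pderiv_monomial, eval_zero, constantCoeff_monomial, if_neg]
  intro h
  have hle : e ≤ Finsupp.single j 1 := tsub_eq_zero_iff_le.mp h
  have hdeg := Finsupp.degree_mono hle
  rw [Finsupp.degree_single] at hdeg
  omega

end MonomialDerivatives

namespace MonomialModel

variable {n : ℕ} {S : MonomialModel n} {F : Fin n → MvPolynomial (Fin (n + 1)) ℂ}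
  {G : MvPolynomial (Fin (n + 1)) ℂ}

lemma expo_add_expo_ne (S : MonomialModel n) (a b c : Fin n) :
    S.expo a + S.expo b ≠ S.expo c := by
  intro h
  have hsingle : Finsupp.single a 1 + Finsupp.single b 1 = Finsupp.single c 1 :=
    S.linearIndependent_expo (by simpa using h)
  simpa using congrArg Finsupp.degree hsingle

lemma IsCR.evalSnoc_eq (h : S.IsCR F G) (z : Fin n → ℂ) (w : ℂ) :
    evalSnoc z w G = conj (evalSnoc 0 (conj w) G) +
      2 * I * ∑ a, conj (evalSnoc 0 (conj w) (fieldDeriv F (S.mono (S.pair a)))) *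
        eval z (S.mono a) := by
  have hp := h.polarize (z := z) (y := 0) (w := w) (t := conj w)
    (by simp only [pairing, eval_zero_mono, map_zero, mul_zero, Finset.sum_const_zero, conj_conj,
      sub_self])
  simp only [eval_zero_mono, map_zero, mul_zero, Finset.sum_const_zero, zero_add] at hp
  rw [sum_pair_right (f := fun a b => conj (evalSnoc 0 (conj w) (fieldDeriv F (S.mono a))) *
    eval z (S.mono b)), div_eq_iff (by simp)] at hp
  linear_combination hp

lemma IsCR.exists_derivative_eq (h : S.IsCR F G) (w : ℂ) : ∃ (δ₀ : ℂ) (δ : Fin n → ℂ), ∀ z,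
    (specInit z G).derivative.eval w = δ₀ + ∑ a, δ a * eval z (S.mono a) := by
  let A : Polynomial ℂ := specInit 0 (map (starRingEnd ℂ) G)
  let B (a : Fin n) : Polynomial ℂ :=
    specInit 0 (map (starRingEnd ℂ) (fieldDeriv F (S.mono (S.pair a))))
  refine ⟨A.derivative.eval w, fun a => 2 * I * (B a).derivative.eval w, fun z => ?_⟩
  have hG : specInit z G = A + ∑ a, Polynomial.C (2 * I * eval z (S.mono a)) * B a := by
    refine Polynomial.funext fun w => ?_
    have hzero : (fun i => conj ((0 : Fin n → ℂ) i)) = 0 := funext fun _ => map_zero _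
    simp only [A, B, Polynomial.eval_add, Polynomial.eval_finsetSum, Polynomial.eval_mul,
      Polynomial.eval_C, eval_specInit, evalSnoc_map_conj, hzero]
    rw [h.evalSnoc_eq, Finset.mul_sum]
    exact congrArg _ (Finset.sum_congr rfl fun a _ => by ring)
  rw [hG]
  simp only [Polynomial.derivative_add, Polynomial.derivative_sum, Polynomial.derivative_C_mul,
    Polynomial.eval_add, Polynomial.eval_finsetSum, Polynomial.eval_mul, Polynomial.eval_C]
  exact congrArg _ (Finset.sum_congr rfl fun a _ => by ring)

/-- If `m_a` is a coordinate occurring in another monomial `m_b`, the coefficient of `m_b / m_a`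
in `F m_b` is a multiple of `F_j(0, w)`, while all monomials of the affine expression for `F m_b`
are different from `m_b / m_a`. -/
lemma IsCR.evalSnoc_zero_eq_zero (h : S.IsCR F G) {a b j : Fin n} (hab : a ≠ b)
    (ha : S.expo a = Finsupp.single j 1) (hb : S.expo b j ≠ 0) (w : ℂ) :
    evalSnoc 0 w (F j) = 0 := by
  obtain ⟨κ, l, hF⟩ := h.exists_fieldDeriv_eq w b
  obtain ⟨δ₀, δ, hG⟩ := h.exists_derivative_eq w
  have hpoly : rigidDeriv (fun k => specLast w (F k)) (S.mono b) =
      (C δ₀ + ∑ c, C (δ c) * S.mono c) * S.mono b + C κ + ∑ c, C (l c) * S.mono c := by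
    refine MvPolynomial.funext fun z => ?_
    rw [← specLast_fieldDeriv, eval_specLast, hF z, hG z]
    simp only [map_add, map_mul, map_sum, eval_C]
  let q := S.expo b - Finsupp.single j 1
  have hq : q + S.expo a = S.expo b := by
    rw [ha]
    exact tsub_add_cancel_of_le (Finsupp.single_le_iff.mpr (Nat.one_le_iff_ne_zero.mpr hb))
  have hne (c : Fin n) : S.expo c ≠ q := fun hc => S.expo_add_expo_ne c a b (hc ▸ hq)
  have hzero : (0 : Fin n →₀ ℕ) ≠ q := fun h0 =>
    hab (S.expo_injective (by rw [← hq, ← h0, zero_add]))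
  have hle : ¬ S.expo b ≤ q := fun hle => by
    have := hle j
    simp only [q, Finsupp.tsub_apply, Finsupp.single_eq_same] at this
    omega
  have hcoeff := congrArg (MvPolynomial.coeff (q + 0)) hpoly
  rw [mono, coeff_tsub_single_add_rigidDeriv_monomial _ _ hb rfl, add_zero] at hcoeff
  simp only [mono, coeff_add, coeff_sum, coeff_C_mul, coeff_C, coeff_monomial, hne, hzero,
    if_false, mul_zero, Finset.sum_const_zero, add_zero] at hcoeff
  rw [coeff_mul_monomial', if_neg hle] at hcoeff
  rw [← eval_specLast, eval_zero, constantCoeff_eq]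
  exact (mul_eq_zero.mp hcoeff).resolve_right
    (mul_ne_zero (S.coef_ne_zero b) (Nat.cast_ne_zero.mpr hb))

end MonomialModel

section FunctionalEquations

lemma affine_quadratic_of_divided_difference {V : Type*} [AddCommGroup V] [Module ℂ V]
    {K N Γ : ℂ → V} (h : ∀ w t, (w - t) • (K w + N t) = Γ w - Γ t) (w : ℂ) :
    K w = K 0 + w • (K 1 - K 0) ∧ Γ w = Γ 0 + w • (K 0 + N 0) + w ^ 2 • (K 1 - K 0) := by
  have hK (w : ℂ) : K w = Γ 1 - Γ 0 - N 1 + w • (N 1 - N 0) := by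
    linear_combination (norm := module) h w 0 - h w 1
  refine ⟨?_, ?_⟩
  · linear_combination (norm := module) hK w - (1 - w) • hK 0 - w • hK 1
  · linear_combination (norm := module) w • hK w - w • hK 0 - w ^ 2 • hK 1 + w ^ 2 • hK 0 - h w 0

open Matrix in
/-- By homogeneity the bilinear form `x • ζ ⬝ᵥ A *ᵥ Z - γ • Z ⬝ᵥ ζ` vanishes on the whole
torus. -/
lemma smul_eq_smul_one_of_forall_dotProduct_eq {ι : Type*} [Fintype ι] [DecidableEq ι]
    {A : Matrix ι ι ℂ} {x γ : ℂ} (hx : x ≠ 0)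
    (h : ∀ Z ζ : ι → ℂ, (∀ i, Z i ≠ 0) → (∀ i, ζ i ≠ 0) → ζ ⬝ᵥ Z = x → ζ ⬝ᵥ A *ᵥ Z = γ) :
    x • A = γ • 1 := by
  let Q : MvPolynomial (ι ⊕ ι) ℂ := ∑ i, X (.inr i) * X (.inl i)
  let B : MvPolynomial (ι ⊕ ι) ℂ := ∑ i, X (.inr i) * ∑ j, C (A i j) * X (.inl j)
  have eval_Q (v : ι ⊕ ι → ℂ) : eval v Q = (v ∘ .inr) ⬝ᵥ (v ∘ .inl) := by
    simp [Q, dotProduct]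
  have eval_B (v : ι ⊕ ι → ℂ) : eval v B = (v ∘ .inr) ⬝ᵥ A *ᵥ (v ∘ .inl) := by
    simp [B, dotProduct, mulVec]
  have hprod : (C x * B - C γ * Q) * Q = 0 := by
    refine funext_set (fun _ => {0}ᶜ) (fun _ => (Set.finite_singleton 0).infinite_compl)
      fun v hv => ?_
    rw [map_zero, map_mul, map_sub, map_mul, map_mul, eval_C, eval_C, eval_B, eval_Q]
    refine mul_eq_zero.mpr (or_iff_not_imp_right.mpr fun hs => ?_)
    have hv0 (i) : v i ≠ 0 := hv i (Set.mem_univ i)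
    have hscaled := h ((x / ((v ∘ .inr) ⬝ᵥ (v ∘ .inl))) • (v ∘ .inl)) (v ∘ .inr)
      (fun i => mul_ne_zero (div_ne_zero hx hs) (hv0 _)) (fun i => hv0 _)
      (by rw [dotProduct_smul, smul_eq_mul, div_mul_cancel₀ _ hs])
    rw [mulVec_smul, dotProduct_smul, smul_eq_mul] at hscaled
    field_simp at hscaled
    linear_combination hscaled
  ext i j
  have hQ : Q ≠ 0 := fun hQ => by
    have := eval_Q (Sum.elim (Pi.single i 1) (Pi.single i 1))
    simp [hQ] at this
  have hij := congrArg (eval (Sum.elim (Pi.single j 1) (Pi.single i 1)))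
    ((mul_eq_zero.mp hprod).resolve_right hQ)
  rw [map_sub, map_mul, map_mul, eval_B, eval_Q, map_zero, sub_eq_zero, eval_C, eval_C] at hij
  simpa [Matrix.one_apply, Pi.single_apply, eq_comm] using hij

end FunctionalEquations

namespace MonomialModel

section NormalForm

open Matrix

variable {n : ℕ} {S : MonomialModel n} {F : Fin n → MvPolynomial (Fin (n + 1)) ℂ}
  {G : MvPolynomial (Fin (n + 1)) ℂ}

/-- The adjoint with respect to the Hermitian form `∑ a, v_a conj (v_{a'})`, where `a ↦ a'` is the
pairing of the model. -/
def adjoint (S : MonomialModel n) (M : Matrix (Fin n) (Fin n) ℂ) : Matrix (Fin n) (Fin n) ℂ :=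
  Mᴴ.submatrix S.pair S.pair

lemma adjoint_apply (M : Matrix (Fin n) (Fin n) ℂ) (a b : Fin n) :
    S.adjoint M a b = conj (M (S.pair b) (S.pair a)) := rfl

/-- The normal form of the infinitesimal CR automorphisms of the model without rigid part of
higher degree: `G` is a real quadratic polynomial in `w`, and the field acts on the monomials by
`g₂ w + M`, where `M` is skew for the form of the model up to the scalar `g₁`. -/
structure HasNormalForm (S : MonomialModel n) (F : Fin n → MvPolynomial (Fin (n + 1)) ℂ)
    (G : MvPolynomial (Fin (n + 1)) ℂ) (g₀ g₁ g₂ : ℝ) (M : Matrix (Fin n) (Fin n) ℂ) : Prop where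
  evalSnoc_right : ∀ z w, evalSnoc z w G = g₀ + g₁ * w + g₂ * w ^ 2
  evalSnoc_fieldDeriv : ∀ z w a, evalSnoc z w (fieldDeriv F (S.mono a)) =
    g₂ * w * eval z (S.mono a) + ∑ b, M a b * eval z (S.mono b)
  add_adjoint : M + S.adjoint M = (g₁ : ℂ) • 1

lemma sum_mulVec_add_conj (M : Matrix (Fin n) (Fin n) ℂ) (v : Fin n → ℂ) :
    ∑ a, (M *ᵥ v) a * conj (v (S.pair a)) + conj (∑ a, (M *ᵥ v) a * conj (v (S.pair a))) =
      ∑ a, ((M + S.adjoint M) *ᵥ v) a * conj (v (S.pair a)) := by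
  have hconj : conj (∑ a, (M *ᵥ v) a * conj (v (S.pair a))) =
      ∑ a, (S.adjoint M *ᵥ v) a * conj (v (S.pair a)) := by
    simp only [mulVec, dotProduct, map_sum, map_mul, conj_conj, Finset.sum_mul, adjoint_apply]
    rw [Finset.sum_comm, ← Equiv.sum_comp S.pair]
    refine Finset.sum_congr rfl fun a _ => ?_
    rw [← Equiv.sum_comp S.pair]
    exact Finset.sum_congr rfl fun b _ => by rw [S.pair_pair]; ring
  rw [hconj]
  simp only [add_mulVec, Pi.add_apply, add_mul, Finset.sum_add_distrib]

theorem HasNormalForm.isCR {g₀ g₁ g₂ : ℝ} {M : Matrix (Fin n) (Fin n) ℂ}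
    (h : S.HasNormalForm F G g₀ g₁ g₂ M) : S.IsCR F G := by
  intro z u
  have hreal : conj (S.pairing z z) = S.pairing z z := conj_pairing z z
  let v (a : Fin n) : ℂ := eval z (S.mono a)
  let w : ℂ := u + I * S.pairing z z
  have hw : conj w = u - I * S.pairing z z := by simp [w, hreal, sub_eq_add_neg]
  have hsum : ∑ a, evalSnoc z w (fieldDeriv F (S.mono a)) * conj (v (S.pair a)) =
      g₂ * w * S.pairing z z + ∑ a, (M *ᵥ v) a * conj (v (S.pair a)) := by
    simp only [h.evalSnoc_fieldDeriv, add_mul, Finset.sum_add_distrib, mul_assoc, pairing,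
      Finset.mul_sum]
    rfl
  have hM := S.sum_mulVec_add_conj M v
  rw [h.add_adjoint, smul_mulVec, one_mulVec] at hM
  have hpair : ∑ a, ((g₁ : ℂ) • v) a * conj (v (S.pair a)) = g₁ * S.pairing z z := by
    simp only [Pi.smul_apply, smul_eq_mul, mul_assoc, pairing, Finset.mul_sum, v]
  rw [hpair] at hM
  refine ofReal_injective ?_
  rw [re_eq_add_conj, h.evalSnoc_right z w, hsum]
  simp only [map_sub, map_add, map_mul, map_div₀, map_pow, conj_ofReal, conj_I, hreal, hw,
    map_ofNat, ofReal_zero]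
  field_simp
  simp only [w]
  linear_combination (-2 * I) * hM

/-- On the quadric `w - t = 2i Z ⬝ ζ` the action on the monomials is a matrix `L w` on `Z = m(z)`,
and the conjugate action a matrix `N t` on `ζ`. -/
lemma IsCR.smul_add_adjoint_eq (h : S.IsCR F G) {L : ℂ → Matrix (Fin n) (Fin n) ℂ} {γ : ℂ → ℂ}
    (hG : ∀ z w, evalSnoc z w G = γ w) (hγ : ∀ w, γ w = conj (γ (conj w)))
    (hF : ∀ z w a, evalSnoc z w (fieldDeriv F (S.mono a)) = ∑ b, L w a b * eval z (S.mono b))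
    (w t : ℂ) : (w - t) • (L w + S.adjoint (L (conj t))) = (γ w - γ t) • 1 := by
  rcases eq_or_ne w t with rfl | hwt
  · simp only [sub_self, zero_smul]
  have hI : (2 * I : ℂ) ≠ 0 := by simp
  have hquadric : ((w - t) / (2 * I)) • (L w + S.adjoint (L (conj t))) =
      ((γ w - γ t) / (2 * I)) • 1 := by
    refine smul_eq_smul_one_of_forall_dotProduct_eq (div_ne_zero (sub_ne_zero.mpr hwt) hI)
      fun Z ζ hZ hζ hZζ => ?_
    obtain ⟨z, hz⟩ := S.exists_eval_mono_eq hZ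
    obtain ⟨y, hy⟩ := S.exists_eval_mono_eq (v := fun a => conj (ζ (S.pair a)))
      fun a => (map_ne_zero _).mpr (hζ _)
    have hpairing : S.pairing z y = (w - t) / (2 * I) := by
      rw [← hZζ, pairing, dotProduct]
      simp only [hz, hy, S.pair_pair _, conj_conj, mul_comm]
    have hp := h.polarize (z := z) (y := y) (w := w) (t := conj t)
      (by rw [conj_conj, hpairing, mul_div_cancel₀ _ hI])
    rw [hG, hG, ← hγ] at hp
    rw [hp, add_mulVec, dotProduct_add]
    congr 1
    · simp only [hF, hz, hy, S.pair_pair _, conj_conj, dotProduct, mulVec, mul_comm]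
    · simp only [hF, hz, hy, map_sum, map_mul, conj_conj, dotProduct, mulVec, adjoint_apply]
      rw [← Equiv.sum_comp S.pair]
      simp only [S.pair_pair _, Finset.sum_mul, Finset.mul_sum]
      rw [Finset.sum_comm, ← Equiv.sum_comp S.pair]
      simp only [S.pair_pair _]
      exact Finset.sum_congr rfl fun b _ => Finset.sum_congr rfl fun a _ => by ring
  have := congrArg ((2 * I) • ·) hquadric
  simpa only [smul_smul, mul_div_cancel₀ _ hI] using this

lemma IsCR.evalSnoc_eq_conj (h : S.IsCR F G)
    (h0 : ∀ w a, evalSnoc 0 w (fieldDeriv F (S.mono a)) = 0) (z : Fin n → ℂ) (w : ℂ) :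
    evalSnoc z w G = conj (evalSnoc 0 (conj w) G) := by
  rw [h.evalSnoc_eq]
  simp only [h0, map_zero, zero_mul, Finset.sum_const_zero, mul_zero, add_zero]

lemma IsCR.exists_matrix_fieldDeriv_eq (h : S.IsCR F G)
    (h0 : ∀ w a, evalSnoc 0 w (fieldDeriv F (S.mono a)) = 0) :
    ∃ L : ℂ → Matrix (Fin n) (Fin n) ℂ, ∀ z w a,
      evalSnoc z w (fieldDeriv F (S.mono a)) = ∑ b, L w a b * eval z (S.mono b) := by
  have hspec (z : Fin n → ℂ) : specInit z G = specInit 0 G :=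
    Polynomial.funext fun w => by
      rw [eval_specInit, eval_specInit]
      exact (h.evalSnoc_eq_conj h0 z w).trans (h.evalSnoc_eq_conj h0 0 w).symm
  choose κ l hl using h.exists_fieldDeriv_eq
  refine ⟨fun w => Matrix.of (l w) + (specInit 0 G).derivative.eval w • 1, fun z w a => ?_⟩
  have hκ : κ w a = 0 := by
    simpa only [h0, eval_zero_mono, mul_zero, Finset.sum_const_zero, zero_add, add_zero] using
      (hl w a 0).symm
  simp [hl, hκ, hspec z, Matrix.one_apply, add_mul, Finset.sum_add_distrib, add_comm]

theorem IsCR.exists_hasNormalForm [NeZero n] (h : S.IsCR F G)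
    (h0 : ∀ w a, evalSnoc 0 w (fieldDeriv F (S.mono a)) = 0) :
    ∃ g₀ g₁ g₂ M, S.HasNormalForm F G g₀ g₁ g₂ M := by
  let γ (w : ℂ) : ℂ := evalSnoc 0 w G
  have hγ (w : ℂ) : γ w = conj (γ (conj w)) := h.evalSnoc_eq_conj h0 0 w
  have hG (z : Fin n → ℂ) (w : ℂ) : evalSnoc z w G = γ w :=
    (h.evalSnoc_eq_conj h0 z w).trans (hγ w).symm
  obtain ⟨L, hL⟩ := h.exists_matrix_fieldDeriv_eq h0
  have hsolve := affine_quadratic_of_divided_difference (K := L)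
    (N := fun t => S.adjoint (L (conj t))) (Γ := fun w => γ w • (1 : Matrix (Fin n) (Fin n) ℂ))
    fun w t => by rw [h.smul_add_adjoint_eq hG hγ hL, sub_smul]
  simp only [map_zero] at hsolve
  have hreal {x : ℂ} (hx : conj x = x) : ((γ x).re : ℂ) = γ x :=
    conj_eq_iff_re.mp ((congrArg (fun y => conj (γ y)) hx).symm.trans (hγ x).symm)
  have h0real := hreal (map_zero _)
  have h1real := hreal (map_one _)
  have h2real := hreal (x := -1) (by simp)
  let g₁ : ℝ := ((γ 1).re - (γ (-1)).re) / 2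
  let g₂ : ℝ := ((γ 1).re + (γ (-1)).re) / 2 - (γ 0).re
  have hg₁ : L 0 + S.adjoint (L 0) = (g₁ : ℂ) • 1 := by
    have hpos := (hsolve 1).2
    have hneg := (hsolve (-1)).2
    simp only [g₁]
    push_cast [h0real, h1real, h2real]
    linear_combination (norm := module) (1 / 2 : ℂ) • (hneg - hpos)
  have hg₂ : L 1 - L 0 = (g₂ : ℂ) • 1 := by
    have hpos := (hsolve 1).2
    have hneg := (hsolve (-1)).2
    simp only [g₂]
    push_cast [h0real, h1real, h2real]
    linear_combination (norm := module) (-1 / 2 : ℂ) • (hpos + hneg)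
  refine ⟨(γ 0).re, g₁, g₂, L 0, fun z w => ?_, fun z w a => ?_, hg₁⟩
  · refine smul_left_injective ℂ (one_ne_zero (α := Matrix (Fin n) (Fin n) ℂ)) ?_
    change evalSnoc z w G • (1 : Matrix (Fin n) (Fin n) ℂ) = _ • (1 : Matrix (Fin n) (Fin n) ℂ)
    rw [hG, (hsolve w).2, hg₁, hg₂, h0real]
    module
  · rw [hL, (hsolve w).1, hg₂]
    simp only [Matrix.add_apply, Matrix.smul_apply, Matrix.one_apply, smul_eq_mul, mul_ite,
      mul_one, mul_zero, add_mul, ite_mul, zero_mul, Finset.sum_add_distrib, Finset.sum_ite_eq,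
      Finset.mem_univ, if_true]
    ring

end NormalForm

section RigidFields

open Matrix

variable {n : ℕ} {S : MonomialModel n} {f : Fin n → MvPolynomial (Fin n) ℂ}
  {F : Fin n → MvPolynomial (Fin (n + 1)) ℂ} {G : MvPolynomial (Fin (n + 1)) ℂ}
  {M : Matrix (Fin n) (Fin n) ℂ}

/-- The rigid vector field `∑ j, f j ∂/∂z_j` is an infinitesimal CR automorphism of the model. -/
def IsRigidCR (S : MonomialModel n) (f : Fin n → MvPolynomial (Fin n) ℂ) : Prop :=
  ∀ z, (∑ a, eval z (rigidDeriv f (S.mono a)) * conj (eval z (S.mono (S.pair a)))).re = 0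

/-- The triviality of `g_c`: a rigid infinitesimal CR automorphism vanishes if all its monomials
have a degree between `2` and `d`. -/
def HasTrivialGc (S : MonomialModel n) (d : ℕ) : Prop :=
  ∀ f, (∀ j, ∀ m ∈ (f j).support, 2 ≤ m.degree ∧ m.degree ≤ d) → S.IsRigidCR f → f = 0

/-- The rigid vector field `∑ j, f j ∂/∂z_j` acts on the monomials of the model by the
matrix `M`. -/
def ActsBy (S : MonomialModel n) (f : Fin n → MvPolynomial (Fin n) ℂ)
    (M : Matrix (Fin n) (Fin n) ℂ) : Prop :=
  ∀ a, rigidDeriv f (S.mono a) = ∑ b, C (M a b) * S.mono b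

lemma ActsBy.eval_rigidDeriv (h : S.ActsBy f M) (z : Fin n → ℂ) (a : Fin n) :
    eval z (rigidDeriv f (S.mono a)) = (M *ᵥ fun b => eval z (S.mono b)) a := by
  simp only [h a, map_sum, map_mul, eval_C, mulVec, dotProduct]

lemma ActsBy.isRigidCR (h : S.ActsBy f M) (hM : M + S.adjoint M = 0) : S.IsRigidCR f := by
  intro z
  simp only [h.eval_rigidDeriv]
  refine ofReal_injective ?_
  rw [re_eq_add_conj, S.sum_mulVec_add_conj M fun a => eval z (S.mono a), hM]
  simp

lemma ActsBy.coeff_expo (h : S.ActsBy f M) (a b : Fin n) :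
    coeff (S.expo b) (rigidDeriv f (S.mono a)) = M a b * S.coef b := by
  rw [h a]
  simp only [coeff_sum, coeff_C_mul, mono, coeff_monomial, S.expo_injective.eq_iff, mul_ite,
    mul_zero, Finset.sum_ite_eq', Finset.mem_univ, if_true]

lemma ActsBy.exists_coeff_ne_zero (h : S.ActsBy f M) {a b : Fin n} (hab : M a b ≠ 0) :
    ∃ k m, S.expo a k ≠ 0 ∧ coeff m (f k) ≠ 0 ∧
      m + S.expo a = S.expo b + Finsupp.single k 1 := by
  have hcoeff := h.coeff_expo a b
  rw [mono, coeff_rigidDeriv_monomial] at hcoeff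
  obtain ⟨k, -, hk⟩ := Finset.exists_ne_zero_of_sum_ne_zero
    (hcoeff.trans_ne (mul_ne_zero hab (S.coef_ne_zero b)))
  have hle : S.expo a - Finsupp.single k 1 ≤ S.expo b := by
    by_contra hle
    exact hk (if_neg hle)
  rw [if_pos hle] at hk
  have hak : S.expo a k ≠ 0 := fun h0 => hk (by simp [h0])
  refine ⟨k, _, hak, left_ne_zero_of_mul hk, ?_⟩
  have hsingle : Finsupp.single k 1 ≤ S.expo a :=
    Finsupp.single_le_iff.mpr (Nat.one_le_iff_ne_zero.mpr hak)
  calc _ = S.expo b - (S.expo a - Finsupp.single k 1) +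
        (S.expo a - Finsupp.single k 1 + Finsupp.single k 1) := by
        rw [tsub_add_cancel_of_le hsingle]
    _ = _ := by rw [← add_assoc, tsub_add_cancel_of_le hle]

lemma ActsBy.coeff_eq_zero (h : S.ActsBy f M) {a k : Fin n} {m : Fin n →₀ ℕ}
    (hak : S.expo a k ≠ 0) (hm : m k = 0)
    (hne : ∀ b, S.expo b + Finsupp.single k 1 ≠ m + S.expo a) : coeff m (f k) = 0 := by
  have hsingle : Finsupp.single k 1 ≤ S.expo a :=
    Finsupp.single_le_iff.mpr (Nat.one_le_iff_ne_zero.mpr hak)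
  have hexpo (b : Fin n) : S.expo b ≠ S.expo a - Finsupp.single k 1 + m := fun hb =>
    hne b (by rw [hb, add_right_comm, tsub_add_cancel_of_le hsingle, add_comm])
  have hcoeff := coeff_tsub_single_add_rigidDeriv_monomial f (S.coef a) hak hm
  rw [← mono, h a] at hcoeff
  simp only [coeff_sum, coeff_C_mul, mono, coeff_monomial, hexpo, if_false, mul_zero,
    Finset.sum_const_zero] at hcoeff
  exact (mul_eq_zero.mp hcoeff.symm).resolve_right
    (mul_ne_zero (S.coef_ne_zero a) (Nat.cast_ne_zero.mpr hak))

lemma HasNormalForm.actsBy {g₀ g₁ g₂ : ℝ} (h : S.HasNormalForm F G g₀ g₁ g₂ M) :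
    S.ActsBy (fun j => specLast 0 (F j)) M := fun a => by
  rw [← specLast_fieldDeriv]
  refine MvPolynomial.funext fun z => ?_
  simp only [eval_specLast, h.evalSnoc_fieldDeriv, mul_zero, zero_mul, zero_add, map_sum, map_mul,
    eval_C]

lemma X_mul_pderiv_mono (j a : Fin n) :
    X j * pderiv j (S.mono a) = C (S.expo a j : ℂ) * S.mono a := by
  rw [mono, X_mul_pderiv_monomial, nsmul_eq_mul, map_natCast]

lemma eq_zero_of_rigidDeriv_eq_zero (h : ∀ a, rigidDeriv f (S.mono a) = 0) : f = 0 := by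
  have hdet : (Matrix.of fun a j => (S.expo a j : ℂ)).det ≠ 0 := S.det_ne_zero
  funext j
  refine funext_set (fun _ => {0}ᶜ) (fun _ => (Set.finite_singleton 0).infinite_compl)
    fun z hz => ?_
  have hz0 (j) : z j ≠ 0 := hz j (Set.mem_univ j)
  have hker : (Matrix.of fun a j => (S.expo a j : ℂ)) *ᵥ (fun j => eval z (f j) / z j) = 0 := by
    ext a
    have hm : eval z (S.mono a) ≠ 0 := by
      rw [mono, eval_monomial]
      exact mul_ne_zero (S.coef_ne_zero a)
        (Finset.prod_ne_zero_iff.mpr fun j _ => pow_ne_zero _ (hz0 j))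
    have hpderiv (j : Fin n) :
        eval z (pderiv j (S.mono a)) = S.expo a j * eval z (S.mono a) / z j := by
      rw [eq_div_iff (hz0 j), mul_comm]
      simpa only [map_mul, eval_X, eval_C] using congrArg (eval z) (X_mul_pderiv_mono (S := S) j a)
    have hsum := congrArg (eval z) (h a)
    simp only [rigidDeriv, map_sum, map_mul, map_zero, hpderiv] at hsum
    refine mul_right_cancel₀ hm ?_
    simp only [mulVec, dotProduct, Matrix.of_apply, Finset.sum_mul, Pi.zero_apply, zero_mul]
    exact (Finset.sum_congr rfl fun j _ => by ring).trans hsum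
  have := congrFun (Matrix.eq_zero_of_mulVec_eq_zero hdet hker) j
  simpa [hz0 j] using this

lemma eq_zero_of_fieldDeriv_eq_zero (h : ∀ a, fieldDeriv F (S.mono a) = 0) : F = 0 := by
  have hspec (w : ℂ) : (fun j => specLast w (F j)) = 0 :=
    eq_zero_of_rigidDeriv_eq_zero (S := S) fun a => by rw [← specLast_fieldDeriv, h, map_zero]
  funext j
  refine evalSnoc_ext fun z w => ?_
  rw [← eval_specLast, congrFun (hspec w) j]
  simp

lemma HasNormalForm.eq_zero (h : S.HasNormalForm F G 0 0 0 0) : F = 0 ∧ G = 0 :=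
  ⟨eq_zero_of_fieldDeriv_eq_zero (S := S) fun a => evalSnoc_ext fun z w => by
      simp [h.evalSnoc_fieldDeriv],
    evalSnoc_ext fun z w => by simp [h.evalSnoc_right]⟩

lemma exists_actsBy_diagonal (S : MonomialModel n) (v : Fin n → ℂ) :
    ∃ f, S.ActsBy f (Matrix.diagonal v) := by
  let E : Matrix (Fin n) (Fin n) ℂ := Matrix.of fun a j => (S.expo a j : ℂ)
  have hE : E *ᵥ (E⁻¹ *ᵥ v) = v := by
    rw [mulVec_mulVec, mul_nonsing_inv _ (isUnit_iff_ne_zero.mpr S.det_ne_zero), one_mulVec]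
  refine ⟨fun j => C ((E⁻¹ *ᵥ v) j) * X j, fun a => ?_⟩
  have ha : ∑ j, S.expo a j * (E⁻¹ *ᵥ v) j = v a := congrFun hE a
  calc rigidDeriv (fun j => C ((E⁻¹ *ᵥ v) j) * X j) (S.mono a)
      = ∑ j, C (S.expo a j * (E⁻¹ *ᵥ v) j) * S.mono a :=
        Finset.sum_congr rfl fun j _ => by rw [mul_assoc, X_mul_pderiv_mono, C_mul]; ring
    _ = C (v a) * S.mono a := by rw [← Finset.sum_mul, ← map_sum, ha]
    _ = ∑ b, C (Matrix.diagonal v a b) * S.mono b := by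
        simp only [Matrix.diagonal_apply, apply_ite C, map_zero, ite_mul, zero_mul,
          Finset.sum_ite_eq, Finset.mem_univ, if_true]

lemma ActsBy.exists_hasNormalForm {g₁ : ℝ} (h : S.ActsBy f M)
    (hM : M + S.adjoint M = (g₁ : ℂ) • 1) (g₀ g₂ : ℝ) :
    ∃ F G, S.HasNormalForm F G g₀ g₁ g₂ M := by
  obtain ⟨e, he⟩ := S.exists_actsBy_diagonal 1
  let w₀ : MvPolynomial (Fin (n + 1)) ℂ := X (Fin.last n)
  have evalSnoc_w₀ (z : Fin n → ℂ) (w : ℂ) : evalSnoc z w w₀ = w := by simp [evalSnoc, w₀]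
  have evalSnoc_C (z : Fin n → ℂ) (w c : ℂ) : evalSnoc z w (C c) = c := by simp [evalSnoc]
  refine ⟨fun j => rename Fin.castSucc (f j) + C (g₂ : ℂ) * w₀ * rename Fin.castSucc (e j),
    C (g₀ : ℂ) + C (g₁ : ℂ) * w₀ + C (g₂ : ℂ) * w₀ ^ 2,
    fun z w => by simp only [map_add, map_mul, map_pow, evalSnoc_C, evalSnoc_w₀],
    fun z w a => ?_, hM⟩
  have hfa := h.eval_rigidDeriv z a
  have hea := he.eval_rigidDeriv z a
  simp only [rigidDeriv, map_sum, map_mul, Pi.one_def, diagonal_one, one_mulVec] at hfa hea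
  simp only [evalSnoc_fieldDeriv, map_add, map_mul, evalSnoc_rename_castSucc, evalSnoc_C,
    evalSnoc_w₀, add_mul, Finset.sum_add_distrib, mul_assoc, ← Finset.mul_sum, hfa, hea]
  exact add_comm _ _

end RigidFields

end MonomialModel

section HomogeneousComponents

lemma homogeneousComponent_mul_monomial {σ R : Type*} [CommSemiring R] (p : MvPolynomial σ R)
    (s : σ →₀ ℕ) (r : R) (k : ℕ) :
    homogeneousComponent (k + s.degree) (p * monomial s r) =
      homogeneousComponent k p * monomial s r := by
  classical
  ext m
  simp only [coeff_homogeneousComponent, coeff_mul_monomial']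
  by_cases hsm : s ≤ m
  · have hdegree : (m - s).degree + s.degree = m.degree := by
      rw [← map_add, tsub_add_cancel_of_le hsm]
    simp only [hsm, if_true, ← hdegree, add_left_inj, ite_mul, zero_mul]
  · simp only [hsm, if_false, ite_self]

lemma homogeneousComponent_rigidDeriv_monomial {n : ℕ} (f : Fin n → MvPolynomial (Fin n) ℂ)
    (e : Fin n →₀ ℕ) (c : ℂ) (k : ℕ) :
    homogeneousComponent (e.degree + k) (rigidDeriv f (monomial e c)) =
      rigidDeriv (fun j => homogeneousComponent (k + 1) (f j)) (monomial e c) := by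
  simp only [rigidDeriv, map_sum, pderiv_monomial]
  refine Finset.sum_congr rfl fun j _ => ?_
  rcases eq_or_ne (e j) 0 with hj | hj
  · simp [hj]
  have hle : Finsupp.single j 1 ≤ e := Finsupp.single_le_iff.mpr (Nat.one_le_iff_ne_zero.mpr hj)
  have hdegree : e.degree = (e - Finsupp.single j 1).degree + 1 := by
    conv_lhs => rw [← tsub_add_cancel_of_le hle, map_add, Finsupp.degree_single]
  rw [← homogeneousComponent_mul_monomial, hdegree]
  congr 2
  ring

end HomogeneousComponents

namespace MonomialModel

open Matrix

variable {n : ℕ} {S : MonomialModel n} {f : Fin n → MvPolynomial (Fin n) ℂ}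
  {F : Fin n → MvPolynomial (Fin (n + 1)) ℂ} {G : MvPolynomial (Fin (n + 1)) ℂ}
  {M : Matrix (Fin n) (Fin n) ℂ} {d : ℕ}

/-- The defining function of the model is homogeneous of degree `d`. -/
def IsHomogeneous (S : MonomialModel n) (d : ℕ) : Prop :=
  ∀ a, (S.expo a).degree + (S.expo (S.pair a)).degree = d

lemma one_le_degree_expo (S : MonomialModel n) (a : Fin n) : 1 ≤ (S.expo a).degree :=
  Nat.one_le_iff_ne_zero.mpr fun h => S.expo_ne_zero a ((Finsupp.degree_eq_zero_iff _).mp h)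

lemma adjoint_single (a b : Fin n) (c : ℂ) :
    S.adjoint (Matrix.single a b c) = Matrix.single (S.pair b) (S.pair a) (conj c) := by
  ext x y
  simp [adjoint_apply, Matrix.single_apply, apply_ite conj, S.pair_pair.eq_iff, and_comm]

/-- Otherwise `i m_{a'} / c_a ∂/∂z_j`, where `m_a = c_a z_j`, would be a nontrivial element
of `g_c`. -/
lemma HasTrivialGc.exists_expo_ne_zero (hgc : S.HasTrivialGc d) (hS : S.IsHomogeneous d)
    (hd : 3 ≤ d) {a j : Fin n} (ha : S.expo a = Finsupp.single j 1) :
    ∃ b ≠ a, S.expo b j ≠ 0 := by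
  by_contra! hj
  let f : Fin n → MvPolynomial (Fin n) ℂ := Pi.single j (C (I / S.coef a) * S.mono (S.pair a))
  have hrigid (b : Fin n) : rigidDeriv f (S.mono b) =
      C (I / S.coef a) * S.mono (S.pair a) * pderiv j (S.mono b) := by
    rw [rigidDeriv, Finset.sum_eq_single j (fun k _ hk => by simp [f, hk]) (by simp)]
    simp [f]
  have hf : S.ActsBy f (Matrix.single a (S.pair a) I) := fun b => by
    rw [hrigid]
    rcases eq_or_ne b a with rfl | hb
    · have hpderiv : pderiv j (S.mono b) = C (S.coef b) := by
        simp [mono, ha, pderiv_monomial]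
      rw [hpderiv, mul_right_comm, ← C_mul, div_mul_cancel₀ _ (S.coef_ne_zero b)]
      simp [Matrix.single_apply, apply_ite C]
    · simp [mono, pderiv_monomial, hj b hb, Matrix.single_apply_of_row_ne hb.symm]
  have hskew : Matrix.single a (S.pair a) I + S.adjoint (Matrix.single a (S.pair a) I) = 0 := by
    rw [adjoint_single, S.pair_pair, conj_I, ← Matrix.single_add, add_neg_cancel, single_zero]
  have hzero := hgc f (fun k m hm => ?_) (hf.isRigidCR hskew)
  · have := congrArg (coeff (S.expo (S.pair a))) (congrFun hzero j)
    simp [f, mono, S.coef_ne_zero] at this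
  · obtain rfl : k = j := by
      by_contra hk
      simp [f, hk] at hm
    obtain rfl : S.expo (S.pair a) = m := by
      by_contra hne
      simp [f, mono, coeff_monomial, hne] at hm
    have := hS a
    rw [ha, Finsupp.degree_single] at this
    omega

lemma IsCR.evalSnoc_zero_fieldDeriv (h : S.IsCR F G) (hgc : S.HasTrivialGc d)
    (hS : S.IsHomogeneous d) (hd : 3 ≤ d) (w : ℂ) (a : Fin n) :
    evalSnoc 0 w (fieldDeriv F (S.mono a)) = 0 := by
  rw [evalSnoc_fieldDeriv]
  rcases (S.one_le_degree_expo a).eq_or_lt with ha | ha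
  · obtain ⟨j, hj⟩ := (Finsupp.sum_eq_one_iff _).mp ha.symm
    obtain ⟨b, hb, hbj⟩ := hgc.exists_expo_ne_zero hS hd hj
    refine Finset.sum_eq_zero fun k _ => ?_
    rcases eq_or_ne k j with rfl | hk
    · rw [h.evalSnoc_zero_eq_zero hb.symm hj hbj, zero_mul]
    · simp [mono, hj, hk, pderiv_monomial]
  · exact Finset.sum_eq_zero fun j _ => by rw [mono, eval_zero_pderiv_monomial ha, mul_zero]

theorem IsCR.exists_hasNormalForm_of_hasTrivialGc [NeZero n] (h : S.IsCR F G)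
    (hgc : S.HasTrivialGc d) (hS : S.IsHomogeneous d) (hd : 3 ≤ d) :
    ∃ g₀ g₁ g₂ M, S.HasNormalForm F G g₀ g₁ g₂ M :=
  h.exists_hasNormalForm (h.evalSnoc_zero_fieldDeriv hgc hS hd)

lemma ActsBy.homogeneousComponent (h : S.ActsBy f M) (k : ℕ) :
    S.ActsBy (fun j => homogeneousComponent (k + 1) (f j))
      (Matrix.of fun a b => if (S.expo b).degree = (S.expo a).degree + k then M a b else 0) := by
  intro a
  conv_lhs => rw [mono, ← homogeneousComponent_rigidDeriv_monomial, ← mono, h a, map_sum]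
  refine Finset.sum_congr rfl fun b _ => ?_
  rw [homogeneousComponent_C_mul,
    homogeneousComponent_of_mem (p := S.mono b) (isHomogeneous_monomial _ rfl)]
  simp only [Matrix.of_apply, apply_ite C, map_zero, ite_mul, zero_mul, mul_ite, mul_zero,
    eq_comm]

/-- The part of the rigid field that raises the degree by `deg m_b - deg m_a` lies in `g_c`. -/
lemma ActsBy.apply_eq_zero_of_degree_lt {g₁ : ℂ} (h : S.ActsBy f M)
    (hM : M + S.adjoint M = g₁ • 1) (hgc : S.HasTrivialGc d) (hS : S.IsHomogeneous d)
    {a b : Fin n} (hab : (S.expo a).degree < (S.expo b).degree) : M a b = 0 := by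
  obtain ⟨k, hk⟩ := Nat.exists_eq_add_of_lt hab
  have hk' := h.homogeneousComponent (k + 1)
  have hskew : Matrix.of (fun a b =>
      if (S.expo b).degree = (S.expo a).degree + (k + 1) then M a b else 0) +
      S.adjoint (Matrix.of fun a b =>
        if (S.expo b).degree = (S.expo a).degree + (k + 1) then M a b else 0) = 0 := by
    ext x y
    have hx := hS x
    have hy := hS y
    have hiff : (S.expo (S.pair x)).degree = (S.expo (S.pair y)).degree + (k + 1) ↔
        (S.expo y).degree = (S.expo x).degree + (k + 1) := by omega
    simp only [Matrix.add_apply, adjoint_apply, Matrix.of_apply, hiff, Matrix.zero_apply]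
    split_ifs with hxy
    · have hne : x ≠ y := by
        rintro rfl
        omega
      simpa [adjoint_apply, hne] using congrFun₂ hM x y
    · simp
  have hzero := hgc _ (fun j m hm => ?_) (hk'.isRigidCR hskew)
  · have hcoeff := hk'.coeff_expo a b
    rw [hzero] at hcoeff
    simpa [rigidDeriv, hk, add_assoc, S.coef_ne_zero b] using hcoeff
  · rw [support_homogeneousComponent, Finset.mem_filter] at hm
    have := hS b
    have := S.one_le_degree_expo a
    omega

lemma ActsBy.exists_expo_eq_one {r : ℕ} (h : S.ActsBy f M) (hr : ∀ a, (S.expo a).degree = r)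
    {a b : Fin n} (hne : a ≠ b) (hab : M a b ≠ 0) :
    ∃ k, S.expo a k = 1 ∧ ∀ c ≠ a, S.expo c k = 0 := by
  obtain ⟨k, m, -, hm, hadd⟩ := h.exists_coeff_ne_zero hab
  have hmk : m k = 0 := by
    have hdegree := congrArg Finsupp.degree hadd
    simp only [map_add, hr, Finsupp.degree_single] at hdegree
    have hm₁ : m.degree = 1 := by omega
    obtain ⟨l, rfl⟩ := (Finsupp.sum_eq_one_iff m).mp hm₁
    refine Finsupp.single_eq_of_ne fun hkl => hne (S.expo_injective ?_)
    rw [hkl] at hadd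
    exact add_left_cancel (hadd.trans (add_comm _ _))
  have hk (c : Fin n) (hc : c ≠ a) : S.expo c k = 0 := by
    by_contra hck
    obtain ⟨b', hb'⟩ : ∃ b', S.expo b' + Finsupp.single k 1 = m + S.expo c := by
      by_contra! hnone
      exact hm (h.coeff_eq_zero hck hmk hnone)
    have hsum : S.expo b' + S.expo a = S.expo c + S.expo b := by
      refine add_right_cancel (b := Finsupp.single k 1 + m) ?_
      calc _ = (S.expo b' + Finsupp.single k 1) + (m + S.expo a) := by abel
        _ = (m + S.expo c) + (S.expo b + Finsupp.single k 1) := by rw [hb', hadd]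
        _ = _ := by abel
    have hsingle : Finsupp.single b' 1 + Finsupp.single a 1 =
        Finsupp.single c 1 + Finsupp.single b 1 :=
      S.linearIndependent_expo (by simpa using hsum)
    simpa [hc, hne] using DFunLike.congr_fun hsingle a
  refine ⟨k, ?_, hk⟩
  have := DFunLike.congr_fun hadd k
  simpa [hmk, hk b hne.symm] using this

lemma exists_forall_actsBy_apply_eq_zero [NeZero n] {r : ℕ} (hr : ∀ a, (S.expo a).degree = r)
    (hr₂ : 2 ≤ r) : ∃ a, ∀ f M, S.ActsBy f M → ∀ b ≠ a, M a b = 0 := by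
  by_contra! hall
  have hvar (a : Fin n) : ∃ k, S.expo a k = 1 ∧ ∀ c ≠ a, S.expo c k = 0 := by
    obtain ⟨f, M, hM, b, hb, hab⟩ := hall a
    exact hM.exists_expo_eq_one hr hb.symm hab
  choose k hk hk' using hvar
  have hinj : Function.Injective k := fun a b hab => by
    by_contra hne
    have := hk' b a hne
    rw [← hab, hk] at this
    exact one_ne_zero this
  have hdegree : (S.expo 0).degree = 1 := by
    rw [Finsupp.degree_eq_sum, ← (Finite.injective_iff_bijective.mp hinj).sum_comp,
      Finset.sum_eq_single 0 (fun a _ ha => hk' a 0 ha.symm) (by simp), hk]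
  have := hr 0
  omega

lemma hasTrivialGc_of_degree_eq {r : ℕ} (hr : ∀ a, (S.expo a).degree = r) (hr₂ : 2 ≤ r) (d : ℕ) :
    S.HasTrivialGc d := by
  intro f hf hrigid
  have hCR : S.IsCR (fun j => rename Fin.castSucc (f j)) 0 := fun z u => by
    have := hrigid z
    simp only [rigidDeriv, map_sum, map_mul] at this
    simpa [evalSnoc_fieldDeriv, evalSnoc_rename_castSucc] using this
  obtain ⟨L, hL⟩ := hCR.exists_matrix_fieldDeriv_eq fun w a => by
    rw [evalSnoc_fieldDeriv]
    refine Finset.sum_eq_zero fun j _ => ?_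
    rw [mono, eval_zero_pderiv_monomial ((hr a).symm ▸ hr₂), mul_zero]
  have hfL : S.ActsBy f (L 0) := fun a => MvPolynomial.funext fun z => by
    have := hL z 0 a
    simp only [evalSnoc_fieldDeriv, evalSnoc_rename_castSucc] at this
    simpa [rigidDeriv] using this
  refine eq_zero_of_rigidDeriv_eq_zero (S := S) fun a => ?_
  rw [hfL a]
  refine Finset.sum_eq_zero fun b _ => ?_
  suffices L 0 a b = 0 by rw [this, map_zero, zero_mul]
  by_contra hab
  obtain ⟨k, m, -, hm, hadd⟩ := hfL.exists_coeff_ne_zero hab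
  have hdegree := congrArg Finsupp.degree hadd
  simp only [map_add, hr, Finsupp.degree_single] at hdegree
  have := (hf k m (mem_support_iff.mpr hm)).1
  omega

end MonomialModel

section Rank

variable {R V : Type*} [Ring R] [StrongRankCondition R] [AddCommGroup V] [Module R V] {n : ℕ}

lemma rank_le_of_forall_mem_eq_zero {p : Submodule R V} (L : V →ₗ[R] Fin n → R)
    (h : ∀ x ∈ p, L x = 0 → x = 0) : Module.rank R p ≤ n := by
  have hinj : Function.Injective (L.domRestrict p) :=
    (injective_iff_map_eq_zero _).mpr fun x hx => Subtype.ext (h x x.2 hx)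
  have hrank := (L.domRestrict p).lift_rank_le_of_injective hinj
  rwa [rank_fin_fun, Cardinal.lift_natCast, Cardinal.lift_le_nat_iff] at hrank

lemma le_rank_of_forall_exists_mem {p : Submodule R V} (L : V →ₗ[R] Fin n → R)
    (h : ∀ y, ∃ x ∈ p, L x = y) : n ≤ Module.rank R p := by
  have hsurj : Function.Surjective (L.domRestrict p) := fun y =>
    let ⟨x, hx, hxy⟩ := h y
    ⟨⟨x, hx⟩, hxy⟩
  have hrank := (L.domRestrict p).lift_rank_le_of_surjective hsurj
  rwa [rank_fin_fun, Cardinal.lift_natCast, Cardinal.nat_le_lift_iff] at hrank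

end Rank

section RealLinearity

variable {n : ℕ}

lemma evalSnoc_real_smul (z : Fin n → ℂ) (w : ℂ) (r : ℝ) (p : MvPolynomial (Fin (n + 1)) ℂ) :
    evalSnoc z w (r • p) = r * evalSnoc z w p := by
  rw [← Complex.coe_smul, evalSnoc, smul_eval]

lemma specLast_real_smul (w : ℂ) (r : ℝ) (p : MvPolynomial (Fin (n + 1)) ℂ) :
    specLast w (r • p) = r • specLast w p :=
  (specLast w).toLinearMap.map_smul_of_tower r p

end RealLinearity

namespace MonomialModel

section AutomorphismSpace

variable {n : ℕ} {S : MonomialModel n} {f : Fin n → MvPolynomial (Fin n) ℂ}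
  {F : Fin n → MvPolynomial (Fin (n + 1)) ℂ} {G : MvPolynomial (Fin (n + 1)) ℂ}
  {M : Matrix (Fin n) (Fin n) ℂ} {g₀ g₁ g₂ : ℝ}

/-- The real vector space `g` of polynomial infinitesimal CR automorphisms of the model. -/
def infinitesimalAut (S : MonomialModel n) :
    Submodule ℝ ((Fin n → MvPolynomial (Fin (n + 1)) ℂ) × MvPolynomial (Fin (n + 1)) ℂ) where
  carrier := {X | S.IsCR X.1 X.2}
  zero_mem' z u := by simp [fieldDeriv]
  add_mem' {X Y} hX hY z u := by
    have hadd := congrArg₂ (· + ·) (hX z u) (hY z u)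
    simp only [← add_re, add_zero] at hadd
    rw [← hadd]
    simp only [evalSnoc_fieldDeriv, Prod.fst_add, Prod.snd_add, Pi.add_apply, map_add, add_mul,
      Finset.sum_add_distrib, add_div]
    congr 1
    ring
  smul_mem' r X hX z u := by
    have hsmul := congrArg (r * ·) (hX z u)
    simp only [← re_ofReal_mul, mul_zero] at hsmul
    rw [← hsmul]
    simp only [evalSnoc_fieldDeriv, Prod.smul_fst, Prod.smul_snd, Pi.smul_apply,
      evalSnoc_real_smul, mul_sub, mul_div_assoc, Finset.mul_sum, Finset.sum_mul, mul_assoc]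

/-- The real-linear map that reads off the data `(g₀, g₁, g₂, M)` of a normal form. The quadratic
polynomial `G` is interpolated at `w = 0, 1, -1`. -/
def normalData (S : MonomialModel n) :
    (Fin n → MvPolynomial (Fin (n + 1)) ℂ) × MvPolynomial (Fin (n + 1)) ℂ →ₗ[ℝ]
      ℝ × ℝ × ℝ × Matrix (Fin n) (Fin n) ℂ where
  toFun X :=
    ((evalSnoc 0 0 X.2).re,
      ((evalSnoc 0 1 X.2).re - (evalSnoc 0 (-1) X.2).re) / 2,
      ((evalSnoc 0 1 X.2).re + (evalSnoc 0 (-1) X.2).re) / 2 - (evalSnoc 0 0 X.2).re,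
      Matrix.of fun a b =>
        coeff (S.expo b) (rigidDeriv (fun j => specLast 0 (X.1 j)) (S.mono a)) / S.coef b)
  map_add' X Y := by
    ext <;> simp [rigidDeriv, add_mul, Finset.sum_add_distrib] <;> ring
  map_smul' r X := by
    ext <;> simp [rigidDeriv, evalSnoc_real_smul, specLast_real_smul, ← Finset.smul_sum,
      coeff_smul] <;> ring

lemma HasNormalForm.normalData_eq (h : S.HasNormalForm F G g₀ g₁ g₂ M) :
    S.normalData (F, G) = (g₀, g₁, g₂, M) := by
  refine Prod.ext ?_ (Prod.ext ?_ (Prod.ext ?_ (Matrix.ext fun a b => ?_)))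
  · simp [normalData, h.evalSnoc_right]
  · simp [normalData, h.evalSnoc_right]
  · simp [normalData, h.evalSnoc_right]
    ring
  · exact (congrArg (· / S.coef b) (h.actsBy.coeff_expo a b)).trans
      (mul_div_cancel_right₀ _ (S.coef_ne_zero b))

lemma ActsBy.exists_mem_infinitesimalAut (h : S.ActsBy f M)
    (hM : M + S.adjoint M = (g₁ : ℂ) • 1) (g₀ g₂ : ℝ) :
    ∃ X ∈ S.infinitesimalAut, S.normalData X = (g₀, g₁, g₂, M) := by
  obtain ⟨F, G, hFG⟩ := h.exists_hasNormalForm hM g₀ g₂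
  exact ⟨(F, G), hFG.isCR, hFG.normalData_eq⟩

end AutomorphismSpace

open Matrix

section ThreeVariables

variable {S : MonomialModel 3} {d : ℕ} {g₁ : ℝ} {M : Matrix (Fin 3) (Fin 3) ℂ}

/-- Real coordinates of the data `(g₀, g₁, g₂, M)` of a normal form for the pairing that exchanges
the first two monomials. The last three coordinates determine the off-diagonal entries of `M`
whichever row of them is known to vanish. -/
def coordinates : (ℝ × ℝ × ℝ × Matrix (Fin 3) (Fin 3) ℂ) →ₗ[ℝ] Fin 9 → ℝ where
  toFun p :=
    let M := p.2.2.2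
    ![p.1, p.2.1, p.2.2.1, (M 0 0).re, (M 0 0).im, (M 2 2).im, (M 0 1 + M 1 0).im,
      (M 0 2 + M 1 2).re, (M 0 1 + M 0 2 + M 1 2).im]
  map_add' p q := by
    ext i
    fin_cases i <;> simp <;> ring
  map_smul' r p := by
    ext i
    fin_cases i <;> simp <;> ring

/-- The matrix with coordinates `t₃, …, t₈` in a normal form with `g₁ = t₁` whose second row is
diagonal. -/
def normalMatrix (t : Fin 9 → ℝ) : Matrix (Fin 3) (Fin 3) ℂ :=
  !![⟨t 3, t 4⟩, ⟨0, t 6⟩, ⟨t 7, t 8 - t 6⟩;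
    0, ⟨t 1 - t 3, t 4⟩, 0;
    0, ⟨-t 7, t 8 - t 6⟩, ⟨t 1 / 2, t 5⟩]

lemma coordinates_normalMatrix (t : Fin 9 → ℝ) :
    coordinates (t 0, t 1, t 2, normalMatrix t) = t := by
  ext i
  fin_cases i <;> simp [coordinates, normalMatrix]

lemma normalMatrix_add_adjoint (hpair : S.pair = Equiv.swap 0 1) (t : Fin 9 → ℝ) :
    normalMatrix t + S.adjoint (normalMatrix t) = (t 1 : ℂ) • 1 := by
  ext a b
  rw [Matrix.add_apply, adjoint_apply, hpair]
  fin_cases a <;> fin_cases b <;>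
    simp [normalMatrix, Complex.ext_iff, Equiv.swap_apply_of_ne_of_ne]

lemma entries_of_add_adjoint_eq (hpair : S.pair = Equiv.swap 0 1)
    (hM : M + S.adjoint M = (g₁ : ℂ) • 1) :
    M 1 1 = g₁ - conj (M 0 0) ∧ (M 2 2).re = g₁ / 2 ∧ (M 0 1).re = 0 ∧ (M 1 0).re = 0 ∧
      M 2 0 = -conj (M 1 2) ∧ M 2 1 = -conj (M 0 2) := by
  have hswap : Equiv.swap (0 : Fin 3) 1 2 = 2 := rfl
  have hentry (a b : Fin 3) : M a b + conj (M (Equiv.swap 0 1 b) (Equiv.swap 0 1 a)) =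
      (g₁ : ℂ) • (1 : Matrix (Fin 3) (Fin 3) ℂ) a b := by
    rw [← hpair, ← adjoint_apply, ← Matrix.add_apply, hM, Matrix.smul_apply]
  have h01 : (M 0 1).re + (M 0 1).re = 0 := by simpa using congrArg re (hentry 0 1)
  have h10 : (M 1 0).re + (M 1 0).re = 0 := by simpa using congrArg re (hentry 1 0)
  have h22 : (M 2 2).re + (M 2 2).re = g₁ := by simpa [hswap] using congrArg re (hentry 2 2)
  have h11 : M 1 1 + conj (M 0 0) = g₁ := by simpa using hentry 1 1
  have h20 : M 2 0 + conj (M 1 2) = 0 := by simpa [hswap] using hentry 2 0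
  have h21 : M 2 1 + conj (M 0 2) = 0 := by simpa [hswap] using hentry 2 1
  exact ⟨eq_sub_of_add_eq h11, by linarith, by linarith, by linarith,
    eq_neg_of_add_eq_zero_left h20, eq_neg_of_add_eq_zero_left h21⟩

lemma eq_zero_of_coordinates_eq_zero (hpair : S.pair = Equiv.swap 0 1)
    (hM : M + S.adjoint M = (g₁ : ℂ) • 1) {a : Fin 3} (ha : ∀ b ≠ a, M a b = 0) {g₀ g₂ : ℝ}
    (hcoord : coordinates (g₀, g₁, g₂, M) = 0) : g₀ = 0 ∧ g₁ = 0 ∧ g₂ = 0 ∧ M = 0 := by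
  obtain ⟨h11, h22, h01, h10, h20, h21⟩ := entries_of_add_adjoint_eq hpair hM
  obtain rfl : g₀ = 0 := congrFun hcoord 0
  obtain rfl : g₁ = 0 := congrFun hcoord 1
  obtain rfl : g₂ = 0 := congrFun hcoord 2
  have h00re : (M 0 0).re = 0 := congrFun hcoord 3
  have h00im : (M 0 0).im = 0 := congrFun hcoord 4
  have h22im : (M 2 2).im = 0 := congrFun hcoord 5
  have himag : (M 0 1).im + (M 1 0).im = 0 := congrFun hcoord 6
  have hre : (M 0 2).re + (M 1 2).re = 0 := congrFun hcoord 7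
  have him : (M 0 1).im + (M 0 2).im + (M 1 2).im = 0 := congrFun hcoord 8
  refine ⟨rfl, rfl, rfl, ?_⟩
  ext i j
  fin_cases a <;> simp [Fin.forall_fin_succ, Complex.ext_iff] at ha h11 h20 h21 <;>
    fin_cases i <;> fin_cases j <;> simp [Complex.ext_iff] <;> constructor <;> linarith

lemma exists_forall_hasNormalForm_apply_eq_zero (hpair : S.pair = Equiv.swap 0 1)
    (hgc : S.HasTrivialGc d) (hS : S.IsHomogeneous d) (hd : 3 ≤ d) :
    ∃ a, ∀ F G g₀ g₁ g₂ M, S.HasNormalForm F G g₀ g₁ g₂ M → ∀ b ≠ a, M a b = 0 := by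
  have hfix : S.pair 2 = 2 := by rw [hpair]; rfl
  have hswap : S.pair 0 = 1 := by rw [hpair, Equiv.swap_apply_left]
  have h01 := hS 0
  have h22 := hS 2
  rw [hswap] at h01
  rw [hfix] at h22
  have hrow {a : Fin 3} (ha : ∀ b ≠ a, (S.expo a).degree < (S.expo b).degree) :
      ∃ a, ∀ F G g₀ g₁ g₂ M, S.HasNormalForm F G g₀ g₁ g₂ M → ∀ b ≠ a, M a b = 0 :=
    ⟨a, fun _ _ _ _ _ _ h b hb =>
      h.actsBy.apply_eq_zero_of_degree_lt h.add_adjoint hgc hS (ha b hb)⟩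
  rcases lt_trichotomy (S.expo 0).degree (S.expo 1).degree with hlt | heq | hgt
  · exact hrow (a := 0) (by simp [Fin.forall_fin_succ]; omega)
  · obtain ⟨a, ha⟩ := exists_forall_actsBy_apply_eq_zero (S := S) (r := (S.expo 2).degree)
      (by simp [Fin.forall_fin_succ]; omega) (by omega)
    exact ⟨a, fun _ _ _ _ _ _ h => ha _ _ h.actsBy⟩
  · exact hrow (a := 1) (by simp [Fin.forall_fin_succ]; omega)

theorem rank_infinitesimalAut_le (hpair : S.pair = Equiv.swap 0 1) (hgc : S.HasTrivialGc d)
    (hS : S.IsHomogeneous d) (hd : 3 ≤ d) : Module.rank ℝ S.infinitesimalAut ≤ 9 := by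
  suffices Module.rank ℝ S.infinitesimalAut ≤ (9 : ℕ) by exact_mod_cast this
  obtain ⟨a, ha⟩ := exists_forall_hasNormalForm_apply_eq_zero hpair hgc hS hd
  refine rank_le_of_forall_mem_eq_zero (coordinates ∘ₗ S.normalData) fun ⟨F, G⟩ hX hcoord => ?_
  obtain ⟨g₀, g₁, g₂, M, h⟩ := IsCR.exists_hasNormalForm_of_hasTrivialGc hX hgc hS hd
  rw [LinearMap.comp_apply, h.normalData_eq] at hcoord
  obtain ⟨rfl, rfl, rfl, rfl⟩ :=
    eq_zero_of_coordinates_eq_zero hpair h.add_adjoint (ha _ _ _ _ _ _ h) hcoord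
  obtain ⟨rfl, rfl⟩ := HasNormalForm.eq_zero (S := S) (by simpa using h)
  rfl

lemma exists_mem_infinitesimalAut_coordinates_eq (hpair : S.pair = Equiv.swap 0 1) {t : Fin 9 → ℝ}
    {f : Fin 3 → MvPolynomial (Fin 3) ℂ} (hf : S.ActsBy f (normalMatrix t)) :
    ∃ X ∈ S.infinitesimalAut, coordinates (S.normalData X) = t := by
  obtain ⟨X, hX, hdata⟩ := hf.exists_mem_infinitesimalAut (normalMatrix_add_adjoint hpair t) (t 0)
    (t 2)
  exact ⟨X, hX, by rw [hdata, coordinates_normalMatrix]⟩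

lemma normalMatrix_eq_diagonal {t : Fin 9 → ℝ} (h₆ : t 6 = 0) (h₇ : t 7 = 0) (h₈ : t 8 = 0) :
    normalMatrix t = diagonal fun a => normalMatrix t a a := by
  ext a b
  fin_cases a <;> fin_cases b <;> simp [normalMatrix, h₆, h₇, h₈, Complex.ext_iff]

theorem le_rank_infinitesimalAut (hpair : S.pair = Equiv.swap 0 1) :
    6 ≤ Module.rank ℝ S.infinitesimalAut := by
  suffices (6 : ℕ) ≤ Module.rank ℝ S.infinitesimalAut by exact_mod_cast this
  let restrict : (Fin 9 → ℝ) →ₗ[ℝ] Fin 6 → ℝ := LinearMap.funLeft ℝ ℝ (Fin.castAdd 3)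
  refine le_rank_of_forall_exists_mem (restrict ∘ₗ coordinates ∘ₗ S.normalData) fun y => ?_
  obtain ⟨t, ht, h₆, h₇, h₈⟩ : ∃ t : Fin 9 → ℝ, restrict t = y ∧ t 6 = 0 ∧ t 7 = 0 ∧ t 8 = 0 :=
    ⟨Fin.append y (0 : Fin 3 → ℝ), funext fun i => Fin.append_left y 0 i,
      Fin.append_right y 0 0, Fin.append_right y 0 1, Fin.append_right y 0 2⟩
  obtain ⟨f, hf⟩ := S.exists_actsBy_diagonal fun a => normalMatrix t a a
  rw [← normalMatrix_eq_diagonal h₆ h₇ h₈] at hf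
  obtain ⟨X, hX, hcoord⟩ := exists_mem_infinitesimalAut_coordinates_eq hpair hf
  exact ⟨X, hX, by rw [LinearMap.comp_apply, LinearMap.comp_apply, hcoord, ht]⟩

theorem le_rank_infinitesimalAut_of_forall_exists_actsBy (hpair : S.pair = Equiv.swap 0 1)
    (h : ∀ M : Matrix (Fin 3) (Fin 3) ℂ, M 1 0 = 0 → M 1 2 = 0 → ∃ f, S.ActsBy f M) :
    9 ≤ Module.rank ℝ S.infinitesimalAut := by
  suffices (9 : ℕ) ≤ Module.rank ℝ S.infinitesimalAut by exact_mod_cast this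
  refine le_rank_of_forall_exists_mem (coordinates ∘ₗ S.normalData) fun t => ?_
  obtain ⟨f, hf⟩ := h (normalMatrix t) rfl rfl
  exact exists_mem_infinitesimalAut_coordinates_eq hpair hf

end ThreeVariables

end MonomialModel

lemma degE_eq_degree (e : Fin 3 → ℕ) : degE e = (Finsupp.equivFunOnFinite.symm e).degree := by
  simp [degE, Finsupp.degree_eq_sum, Fin.sum_univ_three]

lemma mon_eq_monomial (c : ℂ) (e : Fin 3 → ℕ) :
    mon c e = monomial (Finsupp.equivFunOnFinite.symm e) c := by
  rw [monomial_eq, Finsupp.prod_fintype _ _ fun _ => pow_zero _, Fin.prod_univ_three, mon]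
  simp only [Finsupp.equivFunOnFinite_symm_apply_apply, mul_assoc]

lemma det_eq_edet (a b g : Fin 3 → ℕ) :
    (Matrix.of fun i j => (![a, b, g] i j : ℂ)).det = edet a b g := by
  simp only [edet, Matrix.det_fin_three, Matrix.of_apply, Matrix.cons_val]
  push_cast
  ring

namespace MonomialModel

/-- The model of the hypersurface `Im w = Φ(z)`, where `Φ = P Q̄ + Q P̄ + R R̄` for the monomials
`P = cP z ^ a`, `Q = cQ z ^ b` and `R = cR z ^ g`. -/
def threeMonomials {cP cQ cR : ℂ} {a b g : Fin 3 → ℕ} (hP : cP ≠ 0) (hQ : cQ ≠ 0) (hR : cR ≠ 0)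
    (hdet : edet a b g ≠ 0) : MonomialModel 3 where
  coef := ![cP, cQ, cR]
  expo i := Finsupp.equivFunOnFinite.symm (![a, b, g] i)
  pair := Equiv.swap 0 1
  pair_pair := DFunLike.congr_fun (Equiv.swap_swap 0 1)
  coef_ne_zero := by simp [Fin.forall_fin_succ, hP, hQ, hR]
  det_ne_zero := (det_eq_edet a b g).trans_ne (Int.cast_ne_zero.mpr hdet)

section ThreeMonomials

variable {cP cQ cR : ℂ} {a b g : Fin 3 → ℕ} (hP : cP ≠ 0) (hQ : cQ ≠ 0) (hR : cR ≠ 0)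
  (hdet : edet a b g ≠ 0) {d : ℕ}

lemma mono_threeMonomials :
    (threeMonomials hP hQ hR hdet).mono = ![mon cP a, mon cQ b, mon cR g] := by
  ext1 i
  fin_cases i <;> exact (mon_eq_monomial _ _).symm

lemma sum_threeMonomials {A : Type*} [AddCommMonoid A]
    (φ : MvPolynomial (Fin 3) ℂ → MvPolynomial (Fin 3) ℂ → A) :
    ∑ i, φ ((threeMonomials hP hQ hR hdet).mono i)
        ((threeMonomials hP hQ hR hdet).mono ((threeMonomials hP hQ hR hdet).pair i)) =
      φ (mon cP a) (mon cQ b) + φ (mon cQ b) (mon cP a) + φ (mon cR g) (mon cR g) := by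
  rw [Fin.sum_univ_three, mono_threeMonomials]
  rfl

lemma pairing_threeMonomials (z : Fin 3 → ℂ) :
    (threeMonomials hP hQ hR hdet).pairing z z = Phi (mon cP a) (mon cQ b) (mon cR g) z :=
  sum_threeMonomials _ _ _ _ fun p q => eval z p * conj (eval z q)

lemma sum_mul_PhiD (v z : Fin 3 → ℂ) :
    ∑ j, v j * PhiD (mon cP a) (mon cQ b) (mon cR g) j z =
      ∑ i, (∑ j, v j * eval z (pderiv j ((threeMonomials hP hQ hR hdet).mono i))) *
        conj (eval z ((threeMonomials hP hQ hR hdet).mono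
          ((threeMonomials hP hQ hR hdet).pair i))) := by
  rw [sum_threeMonomials _ _ _ _ fun p q => (∑ j, v j * eval z (pderiv j p)) * conj (eval z q)]
  simp only [PhiD, mul_add, Finset.sum_add_distrib, Finset.sum_mul, mul_assoc]

lemma isCR_threeMonomials_iff {F : Fin 3 → MvPolynomial (Fin 4) ℂ} {G : MvPolynomial (Fin 4) ℂ} :
    (threeMonomials hP hQ hR hdet).IsCR F G ↔
      IsInfCR (mon cP a) (mon cQ b) (mon cR g) F G := by
  refine forall₂_congr fun z u => ?_
  rw [sum_mul_PhiD hP hQ hR hdet, ← pairing_threeMonomials hP hQ hR hdet]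
  simp only [evalSnoc_fieldDeriv]
  rfl

lemma isRigidCR_threeMonomials_iff {f : Fin 3 → MvPolynomial (Fin 3) ℂ} :
    (threeMonomials hP hQ hR hdet).IsRigidCR f ↔
      ∀ z, (∑ j, eval z (f j) * PhiD (mon cP a) (mon cQ b) (mon cR g) j z).re = 0 := by
  refine forall_congr' fun z => ?_
  rw [sum_mul_PhiD hP hQ hR hdet]
  simp only [rigidDeriv, map_sum, map_mul]

lemma span_gSet : Submodule.span ℝ (gSet (mon cP a) (mon cQ b) (mon cR g)) =
    (threeMonomials hP hQ hR hdet).infinitesimalAut := by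
  rw [← Submodule.span_eq (threeMonomials hP hQ hR hdet).infinitesimalAut]
  exact congrArg _ (Set.ext fun X => (isCR_threeMonomials_iff hP hQ hR hdet).symm)

lemma rank_span_gcSet_eq_zero_iff :
    Module.rank ℝ (Submodule.span ℝ (gcSet (mon cP a) (mon cQ b) (mon cR g) d)) = 0 ↔
      (threeMonomials hP hQ hR hdet).HasTrivialGc d := by
  rw [Submodule.rank_eq_zero, Submodule.span_eq_bot]
  simp only [gcSet, Set.mem_ofPred_eq, and_imp,
    ← isRigidCR_threeMonomials_iff hP hQ hR hdet]
  rfl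

lemma isHomogeneous_threeMonomials (hdeg : degE a + degE b = 2 * degE g) :
    (threeMonomials hP hQ hR hdet).IsHomogeneous (degE a + degE b) := by
  have hab : (Finsupp.equivFunOnFinite.symm a).degree +
      (Finsupp.equivFunOnFinite.symm b).degree = degE a + degE b := by
    rw [degE_eq_degree, degE_eq_degree]
  have hgg : (Finsupp.equivFunOnFinite.symm g).degree +
      (Finsupp.equivFunOnFinite.symm g).degree = degE a + degE b := by
    rw [hdeg, two_mul, degE_eq_degree]
  intro i
  fin_cases i
  exacts [hab, (add_comm _ _).trans hab, hgg]

end ThreeMonomials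

lemma edet_commonFactorModel : edet ![1, 1, 0] ![0, 2, 0] ![0, 1, 1] ≠ 0 := by
  simp [edet, Matrix.det_fin_three]

/-- The model with `P = z₁z₂`, `Q = z₂²` and `R = z₂z₃`, for which `dim g = 9`. As all monomials are
multiples of `z₂`, linear vector fields realise every matrix with a diagonal second row. -/
def commonFactorModel : MonomialModel 3 :=
  threeMonomials (cP := 1) (cQ := 1) (cR := 1) (a := ![1, 1, 0]) (b := ![0, 2, 0])
    (g := ![0, 1, 1]) one_ne_zero one_ne_zero one_ne_zero edet_commonFactorModel

lemma hasTrivialGc_commonFactorModel (d : ℕ) : commonFactorModel.HasTrivialGc d := by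
  refine hasTrivialGc_of_degree_eq (r := 2) (fun i => ?_) le_rfl d
  fin_cases i <;> exact (degE_eq_degree _).symm

lemma exists_actsBy_commonFactorModel {M : Matrix (Fin 3) (Fin 3) ℂ} (h₀ : M 1 0 = 0)
    (h₂ : M 1 2 = 0) : ∃ f, commonFactorModel.ActsBy f M := by
  obtain ⟨c, hc⟩ : ∃ c, M 1 1 = c + c := ⟨M 1 1 / 2, (add_halves _).symm⟩
  refine ⟨fun j => ∑ b, C (M j b) * X b - C c * X j, fun i => ?_⟩
  rw [commonFactorModel, mono_threeMonomials]
  fin_cases i <;> simp [rigidDeriv, mon, Fin.sum_univ_three, pderiv_X, h₀, h₂, hc] <;> ring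

theorem rank_infinitesimalAut_commonFactorModel :
    Module.rank ℝ commonFactorModel.infinitesimalAut = 9 :=
  le_antisymm
    (rank_infinitesimalAut_le rfl (hasTrivialGc_commonFactorModel 4)
      (isHomogeneous_threeMonomials _ _ _ _ rfl) (by simp))
    (le_rank_infinitesimalAut_of_forall_exists_actsBy rfl fun _ => exists_actsBy_commonFactorModel)

end MonomialModel

/-- For a holomorphically nondegenerate monomial model with
`deg R ≥ 2`: if `dim_ℝ g_c = 0` then `6 ≤ dim_ℝ g ≤ 9`; moreover some such model
attains `dim_ℝ g_c = 0` and `dim_ℝ g = 9`. -/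
theorem stmt18 :
    (∀ (cP cQ cR : ℂ) (a b g : Fin 3 → ℕ),
      cP ≠ 0 → cQ ≠ 0 → cR ≠ 0 →
      degE a + degE b = 2 * degE g → 2 ≤ degE g → edet a b g ≠ 0 →
      Module.rank ℝ ↥(Submodule.span ℝ
          (gcSet (mon cP a) (mon cQ b) (mon cR g) (degE a + degE b))) = 0 →
      (6 ≤ Module.rank ℝ ↥(Submodule.span ℝ (gSet (mon cP a) (mon cQ b) (mon cR g))) ∧
        Module.rank ℝ ↥(Submodule.span ℝ (gSet (mon cP a) (mon cQ b) (mon cR g))) ≤ 9)) ∧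
    (∃ (cP cQ cR : ℂ) (a b g : Fin 3 → ℕ),
      cP ≠ 0 ∧ cQ ≠ 0 ∧ cR ≠ 0 ∧
      degE a + degE b = 2 * degE g ∧ 2 ≤ degE g ∧ edet a b g ≠ 0 ∧
      Module.rank ℝ ↥(Submodule.span ℝ
          (gcSet (mon cP a) (mon cQ b) (mon cR g) (degE a + degE b))) = 0 ∧
      Module.rank ℝ ↥(Submodule.span ℝ (gSet (mon cP a) (mon cQ b) (mon cR g))) = 9) := by
  refine ⟨fun cP cQ cR a b g hP hQ hR hdeg hg hdet hgc => ?_, 1, 1, 1, ![1, 1, 0], ![0, 2, 0],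
    ![0, 1, 1], one_ne_zero, one_ne_zero, one_ne_zero, rfl, le_rfl,
    MonomialModel.edet_commonFactorModel, ?_, ?_⟩
  · rw [MonomialModel.rank_span_gcSet_eq_zero_iff hP hQ hR hdet] at hgc
    rw [MonomialModel.span_gSet hP hQ hR hdet]
    exact ⟨MonomialModel.le_rank_infinitesimalAut rfl,
      MonomialModel.rank_infinitesimalAut_le rfl hgc
        (MonomialModel.isHomogeneous_threeMonomials hP hQ hR hdet hdeg) (by omega)⟩
  · exact (MonomialModel.rank_span_gcSet_eq_zero_iff one_ne_zero one_ne_zero one_ne_zero _).mpr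
      (MonomialModel.hasTrivialGc_commonFactorModel _)
  · rw [MonomialModel.span_gSet one_ne_zero one_ne_zero one_ne_zero
      MonomialModel.edet_commonFactorModel]
    exact MonomialModel.rank_infinitesimalAut_commonFactorModel
end
end
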